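/- Let $d\geq 5$. For $\lambda>0$ with $\lambda^2\in\mathbb{N}$, let $N_\lambda=\#\{m\in\mathbb{Z}^d:|m|=\lambda\}$ and for $f:\mathbb{Z}^d\to\mathbb{R}$ define the discrete spherical average $A_\lambda f(n)=N_\lambda^{-1}\sum_{m\in\mathbb{Z}^d,\,|m|=\lambda}f(n-m)$ and the maximal function $A_\ast f(n)=\sup_{\lambda,\ \lambda^2\in\mathbb{N}}|A_\lambda f(n)|$. Then there is a constant $C_d>0$ such that $\|A_\ast f\|_{\ell^2(\mathbb{Z}^d)}\le C_d\,\|f\|_{\ell^2(\mathbb{Z}^d)}$ for all $f\in\ell^2(\mathbb{Z}^d)$. -/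

import Mathlib

open scoped BigOperators ENNReal

noncomputable section

/-- Squared Euclidean norm of a lattice point, as a real number. -/
def nsq {d : ℕ} (m : Fin d → ℤ) : ℝ := ∑ i, ((m i : ℝ)) ^ 2

/-- The discrete sphere of radius `lam` in `ℤ^d`: lattice points with `|m| = lam`. -/
def sph (d : ℕ) (lam : ℝ) : Set (Fin d → ℤ) := {m | nsq m = lam ^ 2}

/-- `N_lam`: the number of lattice points on the sphere of radius `lam`. -/
def Nlam (d : ℕ) (lam : ℝ) : ℕ := Nat.card (sph d lam)

/-- The discrete spherical average `A_lam f (n) = N_lam⁻¹ ∑_{|m|=lam} f(n-m)`. -/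
def Avg {d : ℕ} (lam : ℝ) (f : (Fin d → ℤ) → ℝ) (n : Fin d → ℤ) : ℝ :=
  (Nlam d lam : ℝ)⁻¹ * ∑' m : sph d lam, f (n - (m : Fin d → ℤ))

/-- The `ℓ²(ℤ^d)` norm, valued in `ℝ≥0∞`. -/
def l2norm {d : ℕ} (f : (Fin d → ℤ) → ℝ) : ℝ≥0∞ :=
  (∑' n : Fin d → ℤ, (‖f n‖₊ : ℝ≥0∞) ^ 2) ^ ((1 : ℝ) / 2)

namespace LB

lemma base_point (m : ℕ) (hm : Odd m) : ∃ A B : ℤ, (m : ℤ) ∣ A ^ 2 + B ^ 2 + 1 := by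
  have hm0 : 0 < m := hm.pos
  have hc4 : Nat.Coprime 4 m := by
    have : Nat.Coprime 2 m := (Nat.coprime_two_left).2 hm
    exact Nat.Coprime.pow_left 2 this
  obtain ⟨k, hk1, hk2⟩ := Nat.chineseRemainder hc4 1 (m - 1)
  have hcop : k.Coprime (4 * m) := by
    apply Nat.Coprime.mul_right
    · have := hk1.gcd_eq
      rw [Nat.Coprime, this]; simp
    · have := hk2.gcd_eq
      rw [Nat.Coprime, this]
      have : Nat.Coprime (m - 1) m := by
        rcases Nat.exists_eq_succ_of_ne_zero hm0.ne' with ⟨j, rfl⟩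
        simp
      exact this
  obtain ⟨p, -, hp, hpk⟩ := Nat.forall_exists_prime_gt_and_modEq 0 (q := 4 * m) (by positivity) hcop
  have : Fact p.Prime := ⟨hp⟩
  have h4 : p ≡ 1 [MOD 4] := (hpk.of_mul_right m).trans hk1
  have hmm : p ≡ m - 1 [MOD m] := (hpk.of_mul_left 4).trans hk2
  obtain ⟨a, b, hab⟩ := Nat.Prime.sq_add_sq (p := p) (by
    have : p % 4 = 1 := h4
    omega)
  refine ⟨a, b, ?_⟩
  have h1 : p + 1 ≡ (m - 1) + 1 [MOD m] := hmm.add_right 1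
  rw [Nat.sub_add_cancel hm0] at h1
  have h2 : m ∣ p + 1 := (Nat.modEq_zero_iff_dvd).1 (h1.trans (by simp [Nat.ModEq]))
  rw [← hab] at h2
  exact_mod_cast h2

/-- first congruence -/
def E1 (A B t x y z w : ℤ) : ℤ := z + t * w - (A * (x + t * y) - B * (t * x - y))
/-- second congruence -/
def E2 (A B t x y z w : ℤ) : ℤ := w - t * z - (A * (t * x - y) + B * (x + t * y))

lemma key (M A B t x y z w : ℤ) (hN : M ∣ A ^ 2 + B ^ 2 + 1)
    (h1 : M ∣ E1 A B t x y z w) (h2 : M ∣ E2 A B t x y z w) :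
    M ∣ 2 * x - ((x - A * z - B * w) + t * (- y - A * w + B * z)) ∧
    M ∣ - 2 * y - ((- y - A * w + B * z) - t * (x - A * z - B * w)) ∧
    M ∣ 2 * z - (A * ((x - A * z - B * w) - t * (- y - A * w + B * z))
      - B * ((- y - A * w + B * z) + t * (x - A * z - B * w))) ∧
    M ∣ 2 * w - (A * ((- y - A * w + B * z) + t * (x - A * z - B * w))
      + B * ((x - A * z - B * w) - t * (- y - A * w + B * z))) := by
  obtain ⟨n, hn⟩ := hN
  obtain ⟨e, he⟩ := h1
  obtain ⟨f, hf⟩ := h2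
  unfold E1 at he
  unfold E2 at hf
  refine ⟨⟨A * e + B * f + n * (x + t * y), ?_⟩, ⟨A * f - B * e + n * (t * x - y), ?_⟩,
    ⟨e + n * (z - t * w), ?_⟩, ⟨f + n * (w + t * z), ?_⟩⟩
  · linear_combination (x + t * y) * hn + A * he + B * hf
  · linear_combination (t * x - y) * hn + A * hf - B * he
  · linear_combination he + (z - t * w) * hn
  · linear_combination hf + (w + t * z) * hn

lemma isotropic (M A B t x y z w : ℤ) (hodd : Odd M) (hN : M ∣ A ^ 2 + B ^ 2 + 1)
    (h1 : M ∣ E1 A B t x y z w) (h2 : M ∣ E2 A B t x y z w) :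
    M ∣ x ^ 2 + y ^ 2 + z ^ 2 + w ^ 2 := by
  obtain ⟨a1, a2, a3, a4⟩ := key M A B t x y z w hN h1 h2
  have hN' := hN
  obtain ⟨n, hn⟩ := hN
  obtain ⟨e1, g1⟩ := a1
  obtain ⟨e2, g2⟩ := a2
  obtain ⟨e3, g3⟩ := a3
  obtain ⟨e4, g4⟩ := a4
  generalize hy1 : x - A * z - B * w = y1 at *
  generalize hy2 : - y - A * w + B * z = y2 at *
  have hc : IsCoprime M 4 := by
    have : IsCoprime M 2 := by
      obtain ⟨r, hr⟩ := hodd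
      exact ⟨1, -r, by rw [hr]; ring⟩
    have := IsCoprime.mul_right this this
    norm_num at this; exact this
  refine hc.dvd_of_dvd_mul_left ?_
  refine ⟨e1 * (2 * x + (y1 + t * y2)) + e2 * (-2 * y + (y2 - t * y1))
    + e3 * (2 * z + (A * (y1 - t * y2) - B * (y2 + t * y1)))
    + e4 * (2 * w + (A * (y2 + t * y1) + B * (y1 - t * y2)))
    + n * ((1 + t ^ 2) * (y1 ^ 2 + y2 ^ 2)), ?_⟩
  linear_combination (2 * x + (y1 + t * y2)) * g1 + (-2 * y + (y2 - t * y1)) * g2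
    + (2 * z + (A * (y1 - t * y2) - B * (y2 + t * y1))) * g3
    + (2 * w + (A * (y2 + t * y1) + B * (y1 - t * y2))) * g4
    + ((1 + t ^ 2) * (y1 ^ 2 + y2 ^ 2)) * hn

lemma exists_vec (m : ℕ) (hm : 0 < m) (A B t : ℤ) :
    ∃ x y z w : ℤ, 0 < x ^ 2 + y ^ 2 + z ^ 2 + w ^ 2 ∧ x ^ 2 + y ^ 2 + z ^ 2 + w ^ 2 ≤ 4 * m ∧
      (m : ℤ) ∣ E1 A B t x y z w ∧ (m : ℤ) ∣ E2 A B t x y z w := by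
  have : NeZero m := ⟨hm.ne'⟩
  set b := Nat.sqrt m with hb
  have hb1 : b * b ≤ m := Nat.sqrt_le m
  have hb2 : m < (b + 1) * (b + 1) := Nat.lt_succ_sqrt m
  let R := Finset.range (b + 1)
  let box : Finset (ℕ × ℕ × ℕ × ℕ) := R ×ˢ R ×ˢ R ×ˢ R
  let φ : ℕ × ℕ × ℕ × ℕ → ZMod m × ZMod m := fun v =>
    (((E1 A B t v.1 v.2.1 v.2.2.1 v.2.2.2 : ℤ) : ZMod m),
      ((E2 A B t v.1 v.2.1 v.2.2.1 v.2.2.2 : ℤ) : ZMod m))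
  have hcard : (Finset.univ : Finset (ZMod m × ZMod m)).card < box.card := by
    simp only [box, R, Finset.card_product, Finset.card_range, Finset.card_univ, Fintype.card_prod,
      ZMod.card]
    calc m * m < ((b + 1) * (b + 1)) * ((b + 1) * (b + 1)) := Nat.mul_lt_mul'' hb2 hb2
      _ = _ := by ring
  obtain ⟨v, hv, v', hv', hne, heq⟩ :=
    Finset.exists_ne_map_eq_of_card_lt_of_maps_to hcard (f := φ) (fun _ _ => Finset.mem_univ _)
  obtain ⟨x, y, z, w⟩ := v
  obtain ⟨x', y', z', w'⟩ := v'
  simp only [box, R, Finset.mem_product, Finset.mem_range] at hv hv'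
  simp only [φ, Prod.mk.injEq] at heq
  have sqb : ∀ r s : ℕ, r < b + 1 → s < b + 1 → ((r : ℤ) - s) ^ 2 ≤ m := by
    intro r s hr hs
    have : ((r : ℤ) - s) ^ 2 ≤ (b : ℤ) ^ 2 := by
      apply sq_le_sq'
      · omega
      · omega
    have h3 : (b : ℤ) * b ≤ m := by exact_mod_cast hb1
    nlinarith
  refine ⟨(x : ℤ) - x', (y : ℤ) - y', (z : ℤ) - z', (w : ℤ) - w', ?_, ?_, ?_, ?_⟩
  · by_contra hcon
    apply hne
    have q1 := sq_nonneg ((x : ℤ) - x')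
    have q2 := sq_nonneg ((y : ℤ) - y')
    have q3 := sq_nonneg ((z : ℤ) - z')
    have q4 := sq_nonneg ((w : ℤ) - w')
    have r1 : ((x : ℤ) - x') = 0 := by
      apply pow_eq_zero_iff (two_ne_zero) |>.1; omega
    have r2 : ((y : ℤ) - y') = 0 := by
      apply pow_eq_zero_iff (two_ne_zero) |>.1; omega
    have r3 : ((z : ℤ) - z') = 0 := by
      apply pow_eq_zero_iff (two_ne_zero) |>.1; omega
    have r4 : ((w : ℤ) - w') = 0 := by
      apply pow_eq_zero_iff (two_ne_zero) |>.1; omega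
    simp only [Prod.mk.injEq]
    omega
  · have := sqb x x' hv.1 hv'.1
    have := sqb y y' hv.2.1 hv'.2.1
    have := sqb z z' hv.2.2.1 hv'.2.2.1
    have := sqb w w' hv.2.2.2 hv'.2.2.2
    linarith
  · have h := (ZMod.intCast_eq_intCast_iff_dvd_sub _ _ _).1 heq.1.symm
    convert h using 1
    unfold E1; ring
  · have h := (ZMod.intCast_eq_intCast_iff_dvd_sub _ _ _).1 heq.2.symm
    convert h using 1
    unfold E2; ring

/-- quaternion product -/
def qm (u v : ℤ × ℤ × ℤ × ℤ) : ℤ × ℤ × ℤ × ℤ :=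
  (u.1 * v.1 - u.2.1 * v.2.1 - u.2.2.1 * v.2.2.1 - u.2.2.2 * v.2.2.2,
   u.1 * v.2.1 + u.2.1 * v.1 + u.2.2.1 * v.2.2.2 - u.2.2.2 * v.2.2.1,
   u.1 * v.2.2.1 - u.2.1 * v.2.2.2 + u.2.2.1 * v.1 + u.2.2.2 * v.2.1,
   u.1 * v.2.2.2 + u.2.1 * v.2.2.1 - u.2.2.1 * v.2.1 + u.2.2.2 * v.1)

/-- norm form -/
def qn (u : ℤ × ℤ × ℤ × ℤ) : ℤ := u.1 ^ 2 + u.2.1 ^ 2 + u.2.2.1 ^ 2 + u.2.2.2 ^ 2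

lemma conv_aux (k m a b c e x y z w : ℤ) (hk : k ≠ 0) (hu : a ^ 2 + b ^ 2 + c ^ 2 + e ^ 2 = k)
    (hv : qn (x, y, z, w) = k * m)
    (h1 : k ∣ a * x + b * y + c * z + e * w) (h2 : k ∣ a * y - b * x - c * w + e * z)
    (h3 : k ∣ a * z + b * w - c * x - e * y) (h4 : k ∣ a * w - b * z + c * y - e * x) :
    ∃ v, qn v = m ∧ (x, y, z, w) = qm (a, b, c, e) v := by
  obtain ⟨p, hp⟩ := h1
  obtain ⟨q, hq⟩ := h2
  obtain ⟨r, hr⟩ := h3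
  obtain ⟨s, hs⟩ := h4
  refine ⟨(p, q, r, s), ?_, ?_⟩
  · have : k * k * (qn (p, q, r, s)) = k * k * m := by
      have e1 : k * k * (qn (p, q, r, s)) = (k * p) ^ 2 + (k * q) ^ 2 + (k * r) ^ 2 + (k * s) ^ 2 := by
        unfold qn; ring
      rw [e1, ← hp, ← hq, ← hr, ← hs]
      have e2 : (a * x + b * y + c * z + e * w) ^ 2 + (a * y - b * x - c * w + e * z) ^ 2 +
        (a * z + b * w - c * x - e * y) ^ 2 + (a * w - b * z + c * y - e * x) ^ 2
        = (a ^ 2 + b ^ 2 + c ^ 2 + e ^ 2) * qn (x, y, z, w) := by unfold qn; ring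
      rw [e2, hu, hv]; ring
    exact mul_left_cancel₀ (mul_ne_zero hk hk) this
  · simp only [qm, Prod.mk.injEq]
    refine ⟨?_, ?_, ?_, ?_⟩ <;> apply mul_left_cancel₀ hk
    · linear_combination (-x) * hu + a * hp - b * hq - c * hr - e * hs
    · linear_combination (-y) * hu + a * hq + b * hp + c * hs - e * hr
    · linear_combination (-z) * hu + a * hr - b * hs + c * hp + e * hq
    · linear_combination (-w) * hu + a * hs + b * hr - c * hq + e * hp

/-- the finite set of multipliers -/
def U : Finset ℤ := {-1, 0, 1, 2}

lemma conv_res (k m a b c e x y z w : ℤ) (hk : k ≠ 0) (hu : a ^ 2 + b ^ 2 + c ^ 2 + e ^ 2 = k)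
    (hv : qn (x, y, z, w) = k * m)
    (h1 : k ∣ x - a) (h2 : k ∣ y - b) (h3 : k ∣ z - c) (h4 : k ∣ w - e) :
    ∃ v, qn v = m ∧ (x, y, z, w) = qm (a, b, c, e) v := by
  obtain ⟨p, hp⟩ := h1
  obtain ⟨q, hq⟩ := h2
  obtain ⟨r, hr⟩ := h3
  obtain ⟨s, hs⟩ := h4
  refine conv_aux k m a b c e x y z w hk hu hv ?_ ?_ ?_ ?_
  · exact ⟨1 + a * p + b * q + c * r + e * s, by
      linear_combination hu + a * hp + b * hq + c * hr + e * hs⟩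
  · exact ⟨a * q - b * p - c * s + e * r, by
      linear_combination a * hq - b * hp - c * hs + e * hr⟩
  · exact ⟨a * r + b * s - c * p - e * q, by
      linear_combination a * hr + b * hs - c * hp - e * hq⟩
  · exact ⟨a * s - b * r + c * q - e * p, by
      linear_combination a * hs - b * hr + c * hq - e * hp⟩

lemma res3 (x : ℤ) : ∃ a ∈ U, 3 ∣ x - a ∧ (a ^ 2 = 0 ∧ a = 0 ∨ a ^ 2 = 1) := by
  have : x % 3 = 0 ∨ x % 3 = 1 ∨ x % 3 = 2 := by omega
  rcases this with h | h | h
  · exact ⟨0, by decide, by omega, by norm_num⟩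
  · exact ⟨1, by decide, by omega, by norm_num⟩
  · exact ⟨-1, by decide, by omega, by norm_num⟩

lemma res4 (x : ℤ) (hx : x % 2 = 1) : ∃ a ∈ U, 4 ∣ x - a ∧ a ^ 2 = 1 := by
  have : x % 4 = 1 ∨ x % 4 = 3 := by omega
  rcases this with h | h
  · exact ⟨1, by decide, by omega, by norm_num⟩
  · exact ⟨-1, by decide, by omega, by norm_num⟩

lemma sqmod4 (x : ℤ) : ∃ j, (x % 2 = 0 ∧ x ^ 2 = 4 * j) ∨ (x % 2 = 1 ∧ x ^ 2 = 4 * j + 1) := by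
  rcases Int.even_or_odd' x with ⟨k, h | h⟩
  · exact ⟨k ^ 2, Or.inl ⟨by omega, by rw [h]; ring⟩⟩
  · exact ⟨k ^ 2 + k, Or.inr ⟨by omega, by rw [h]; ring⟩⟩

lemma conv (k m : ℤ) (x y z w : ℤ) (hk : k = 1 ∨ k = 2 ∨ k = 3 ∨ k = 4)
    (hv : qn (x, y, z, w) = k * m) :
    ∃ a ∈ U, ∃ b ∈ U, ∃ c ∈ U, ∃ e ∈ U, ∃ v, qn v = m ∧ (x, y, z, w) = qm (a, b, c, e) v := by
  obtain ⟨jx, hx⟩ := sqmod4 x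
  obtain ⟨jy, hy⟩ := sqmod4 y
  obtain ⟨jz, hz⟩ := sqmod4 z
  obtain ⟨jw, hw⟩ := sqmod4 w
  rcases hk with rfl | rfl | rfl | rfl
  · exact ⟨1, by decide, 0, by decide, 0, by decide, 0, by decide,
      conv_aux 1 m 1 0 0 0 x y z w (by norm_num) (by norm_num) hv (one_dvd _) (one_dvd _)
        (one_dvd _) (one_dvd _)⟩
  · have hv' := hv
    simp only [qn] at hv'
    by_cases h1 : 2 ∣ x + y
    · exact ⟨1, by decide, 1, by decide, 0, by decide, 0, by decide,
        conv_aux 2 m 1 1 0 0 x y z w (by norm_num) (by norm_num) hv (by omega) (by omega)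
          (by omega) (by omega)⟩
    by_cases h2 : 2 ∣ x + z
    · exact ⟨1, by decide, 0, by decide, 1, by decide, 0, by decide,
        conv_aux 2 m 1 0 1 0 x y z w (by norm_num) (by norm_num) hv (by omega) (by omega)
          (by omega) (by omega)⟩
    · exact ⟨1, by decide, 0, by decide, 0, by decide, 1, by decide,
        conv_aux 2 m 1 0 0 1 x y z w (by norm_num) (by norm_num) hv (by omega) (by omega)
          (by omega) (by omega)⟩
  · obtain ⟨a, ha, ⟨a', ha1⟩, ha2⟩ := res3 x
    obtain ⟨b, hb, ⟨b', hb1⟩, hb2⟩ := res3 y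
    obtain ⟨c, hc, ⟨c', hc1⟩, hc2⟩ := res3 z
    obtain ⟨e, he, ⟨e', he1⟩, he2⟩ := res3 w
    have hs : a ^ 2 + b ^ 2 + c ^ 2 + e ^ 2 = 3 *
        (m - a' * (x + a) - b' * (y + b) - c' * (z + c) - e' * (w + e)) := by
      simp only [qn] at hv
      linear_combination hv - (x + a) * ha1 - (y + b) * hb1 - (z + c) * hc1 - (w + e) * he1
    generalize (m - a' * (x + a) - b' * (y + b) - c' * (z + c) - e' * (w + e)) = o at hs
    by_cases h3 : a ^ 2 + b ^ 2 + c ^ 2 + e ^ 2 = 3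
    · exact ⟨a, ha, b, hb, c, hc, e, he, conv_res 3 m a b c e x y z w (by norm_num) h3 hv
        ⟨_, ha1⟩ ⟨_, hb1⟩ ⟨_, hc1⟩ ⟨_, he1⟩⟩
    · have : a = 0 ∧ b = 0 ∧ c = 0 ∧ e = 0 := by omega
      obtain ⟨rfl, rfl, rfl, rfl⟩ := this
      exact ⟨1, by decide, 1, by decide, 1, by decide, 0, by decide,
        conv_aux 3 m 1 1 1 0 x y z w (by norm_num) (by norm_num) hv (by omega) (by omega)
          (by omega) (by omega)⟩
  · have hv' := hv
    simp only [qn] at hv'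
    by_cases h1 : x % 2 = 1
    · obtain ⟨a, ha, ha1, ha2⟩ := res4 x h1
      obtain ⟨b, hb, hb1, hb2⟩ := res4 y (by omega)
      obtain ⟨c, hc, hc1, hc2⟩ := res4 z (by omega)
      obtain ⟨e, he, he1, he2⟩ := res4 w (by omega)
      exact ⟨a, ha, b, hb, c, hc, e, he, conv_res 4 m a b c e x y z w (by norm_num) (by omega) hv
        ha1 hb1 hc1 he1⟩
    · exact ⟨2, by decide, 0, by decide, 0, by decide, 0, by decide,
        conv_aux 4 m 2 0 0 0 x y z w (by norm_num) (by norm_num) hv (by omega) (by omega)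
          (by omega) (by omega)⟩

lemma prim (m p : ℕ) (hm : Nat.Coprime m 6) (hm0 : 0 < m) (hp : p.Prime) (hpm : p ∣ m) (A B t x y z w k : ℤ)
    (hk : k = 1 ∨ k = 2 ∨ k = 3 ∨ k = 4) (hv : x ^ 2 + y ^ 2 + z ^ 2 + w ^ 2 = k * m)
    (hN : (m : ℤ) ∣ A ^ 2 + B ^ 2 + 1)
    (h1 : (m : ℤ) ∣ E1 A B t x y z w) (h2 : (m : ℤ) ∣ E2 A B t x y z w)
    (dx : (p : ℤ) ∣ x) (dy : (p : ℤ) ∣ y) (dz : (p : ℤ) ∣ z) (dw : (p : ℤ) ∣ w) : False := by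
  obtain ⟨m', rfl⟩ := hpm
  obtain ⟨x, rfl⟩ := dx
  obtain ⟨y, rfl⟩ := dy
  obtain ⟨z, rfl⟩ := dz
  obtain ⟨w, rfl⟩ := dw
  have hp0 : (p : ℤ) ≠ 0 := by exact_mod_cast hp.ne_zero
  have hm'0 : (m' : ℤ) ≠ 0 := by
    intro h
    have : m' = 0 := by exact_mod_cast h
    subst this; simp at hm0
  have hm' : Nat.Coprime m' 6 := Nat.Coprime.coprime_mul_left hm
  have hp6 : Nat.Coprime p 6 := Nat.Coprime.coprime_mul_right hm
  have hodd : Odd (m' : ℤ) := by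
    have : Nat.Coprime m' 2 := Nat.Coprime.coprime_dvd_right (by norm_num) hm'
    have := Nat.coprime_two_right.1 this
    exact_mod_cast this
  have g1 : (m' : ℤ) ∣ E1 A B t x y z w := by
    have : E1 A B t (p * x) (p * y) (p * z) (p * w) = p * E1 A B t x y z w := by unfold E1; ring
    rw [this] at h1
    push_cast at h1
    exact (mul_dvd_mul_iff_left hp0).1 h1
  have g2 : (m' : ℤ) ∣ E2 A B t x y z w := by
    have : E2 A B t (p * x) (p * y) (p * z) (p * w) = p * E2 A B t x y z w := by unfold E2; ring
    rw [this] at h2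
    push_cast at h2
    exact (mul_dvd_mul_iff_left hp0).1 h2
  have g3 : (m' : ℤ) ∣ A ^ 2 + B ^ 2 + 1 := dvd_trans ⟨p, by push_cast; ring⟩ hN
  obtain ⟨s, hs⟩ := isotropic m' A B t x y z w hodd g3 g1 g2
  have : (p : ℤ) * m' * (p * s) = p * m' * k := by
    push_cast at hv
    linear_combination hv - p ^ 2 * hs
  have hks := mul_left_cancel₀ (mul_ne_zero hp0 hm'0) this
  have hpk : p ∣ k.toNat := by
    zify
    rw [Int.toNat_of_nonneg (by omega)]
    exact ⟨s, hks.symm⟩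
  have hp5 : ¬ p ∣ 12 := by
    intro h
    have h12 : Nat.Coprime p 12 := by
      have := Nat.Coprime.mul_right hp6 (Nat.Coprime.coprime_dvd_right (by norm_num : 2 ∣ 6) hp6)
      simpa using this
    exact hp.one_lt.ne' (Nat.Coprime.eq_one_of_dvd h12 h)
  apply hp5
  refine hpk.trans ?_
  rcases hk with rfl | rfl | rfl | rfl <;> decide

lemma inj_t (m : ℕ) (hm : Nat.Coprime m 6) (hm0 : 0 < m) (A B t t' x y z w k : ℤ)
    (hk : k = 1 ∨ k = 2 ∨ k = 3 ∨ k = 4) (hv : x ^ 2 + y ^ 2 + z ^ 2 + w ^ 2 = k * m)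
    (hN : (m : ℤ) ∣ A ^ 2 + B ^ 2 + 1)
    (h1 : (m : ℤ) ∣ E1 A B t x y z w) (h2 : (m : ℤ) ∣ E2 A B t x y z w)
    (h1' : (m : ℤ) ∣ E1 A B t' x y z w) (h2' : (m : ℤ) ∣ E2 A B t' x y z w) :
    (m : ℤ) ∣ t - t' := by
  obtain ⟨a1, a2, a3, a4⟩ := key m A B t x y z w hN h1 h2
  obtain ⟨b1, b2, -, -⟩ := key m A B t' x y z w hN h1' h2'
  have hcop2 : IsCoprime (m : ℤ) 2 := by
    have : Nat.Coprime m 2 := Nat.Coprime.coprime_dvd_right (by norm_num) hm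
    exact_mod_cast Nat.isCoprime_iff_coprime.2 this
  generalize hy1 : x - A * z - B * w = y1 at *
  generalize hy2 : - y - A * w + B * z = y2 at *
  have c2 : (m : ℤ) ∣ (t - t') * y2 := by
    obtain ⟨α, hα⟩ := a1
    obtain ⟨β, hβ⟩ := b1
    exact ⟨β - α, by linear_combination hβ - hα⟩
  have c1 : (m : ℤ) ∣ (t - t') * y1 := by
    obtain ⟨α, hα⟩ := a2
    obtain ⟨β, hβ⟩ := b2
    exact ⟨α - β, by linear_combination hα - hβ⟩
  have dx : (m : ℤ) ∣ (t - t') * x := by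
    refine hcop2.dvd_of_dvd_mul_left ?_
    have := ((a1.mul_left (t - t')).add c1).add (c2.mul_left t)
    convert this using 1; ring
  have dy : (m : ℤ) ∣ (t - t') * y := by
    refine hcop2.dvd_of_dvd_mul_left ?_
    have := ((a2.mul_left (t - t')).add c2).sub (c1.mul_left t)
    rw [← dvd_neg]
    convert this using 1; ring
  have dz : (m : ℤ) ∣ (t - t') * z := by
    refine hcop2.dvd_of_dvd_mul_left ?_
    have := (a3.mul_left (t - t')).add ((c1.mul_left (A - B * t)).add (c2.mul_left (- A * t - B)))
    convert this using 1; ring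
  have dw : (m : ℤ) ∣ (t - t') * w := by
    refine hcop2.dvd_of_dvd_mul_left ?_
    have := (a4.mul_left (t - t')).add ((c1.mul_left (A * t + B)).add (c2.mul_left (A - B * t)))
    convert this using 1; ring
  set g : ℕ := Nat.gcd (Int.gcd x y) (Int.gcd z w) with hg
  have hgm : Nat.Coprime m g := by
    apply Nat.coprime_of_dvd
    intro p hp hpm hpg
    have e1 : p ∣ Int.gcd x y := hpg.trans (Nat.gcd_dvd_left _ _)
    have e2 : p ∣ Int.gcd z w := hpg.trans (Nat.gcd_dvd_right _ _)
    have e1' : (p : ℤ) ∣ (Int.gcd x y : ℤ) := by exact_mod_cast e1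
    have e2' : (p : ℤ) ∣ (Int.gcd z w : ℤ) := by exact_mod_cast e2
    exact prim m p hm hm0 hp hpm A B t x y z w k hk hv hN h1 h2
      (e1'.trans (Int.gcd_dvd_left ..)) (e1'.trans (Int.gcd_dvd_right ..))
      (e2'.trans (Int.gcd_dvd_left ..)) (e2'.trans (Int.gcd_dvd_right ..))
  have hd : m ∣ (t - t').natAbs * g := by
    rw [hg, ← Nat.gcd_mul_left]
    apply Nat.dvd_gcd
    · rw [← Int.gcd_mul_left]
      exact Int.dvd_gcd dx dy
    · rw [← Int.gcd_mul_left]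
      exact Int.dvd_gcd dz dw
  have := hgm.dvd_of_dvd_mul_right hd
  exact Int.natCast_dvd.2 this

lemma qn_finite (m : ℤ) : {v : ℤ × ℤ × ℤ × ℤ | qn v = m}.Finite := by
  have hI : (Set.Icc (-m) m).Finite := Set.finite_Icc _ _
  refine (hI.prod (hI.prod (hI.prod hI))).subset ?_
  rintro ⟨x, y, z, w⟩ h
  simp only [Set.mem_ofPred_eq, qn] at h
  have aux : ∀ r : ℤ, r ≤ r ^ 2 ∧ -r ≤ r ^ 2 ∧ 0 ≤ r ^ 2 := by
    intro r
    refine ⟨by nlinarith [Int.le_self_sq r], ?_, sq_nonneg r⟩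
    have := Int.le_self_sq (-r)
    simpa using this
  have := aux x
  have := aux y
  have := aux z
  have := aux w
  simp only [Set.mem_prod, Set.mem_Icc]
  omega

lemma four_count (m : ℕ) (hm : Nat.Coprime m 6) (hm0 : 0 < m) :
    m ≤ 256 * {v : ℤ × ℤ × ℤ × ℤ | qn v = m}.ncard := by
  have hodd : Odd m := Nat.coprime_two_right.1 (Nat.Coprime.coprime_dvd_right (by norm_num) hm)
  have hodd' : Odd (m : ℤ) := by exact_mod_cast hodd
  obtain ⟨A, B, hN⟩ := base_point m hodd
  choose X Y Z W hpos hle hE1 hE2 using fun t : ℕ => exists_vec m hm0 A B t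
  have hK : ∀ t : ℕ, ∃ k : ℤ, (k = 1 ∨ k = 2 ∨ k = 3 ∨ k = 4) ∧
      X t ^ 2 + Y t ^ 2 + Z t ^ 2 + W t ^ 2 = k * m := by
    intro t
    obtain ⟨k, hk⟩ := isotropic m A B t _ _ _ _ hodd' hN (hE1 t) (hE2 t)
    have h1 := hpos t
    have h2 := hle t
    rw [hk] at h1 h2
    have hm0' : (0 : ℤ) < m := by exact_mod_cast hm0
    have h3 : 0 < k := by
      by_contra h
      nlinarith
    have h4 : k ≤ 4 := by
      by_contra h
      nlinarith
    exact ⟨k, by omega, by rw [hk]; ring⟩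
  set S := (qn_finite m).toFinset with hS
  set V : Finset (ℤ × ℤ × ℤ × ℤ) := U ×ˢ U ×ˢ U ×ˢ U with hV
  have hcardS : {v : ℤ × ℤ × ℤ × ℤ | qn v = m}.ncard = S.card := by
    rw [Set.ncard_eq_toFinset_card _ (qn_finite m)]
  have hsub : (Finset.range m).image (fun t => (X t, Y t, Z t, W t)) ⊆
      (V ×ˢ S).image (fun p => qm p.1 p.2) := by
    intro v hv
    obtain ⟨t, -, rfl⟩ := Finset.mem_image.1 hv
    obtain ⟨k, hk, hkk⟩ := hK t
    obtain ⟨a, ha, b, hb, c, hc, e, he, v, hv1, hv2⟩ := conv k m _ _ _ _ hk hkk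
    refine Finset.mem_image.2 ⟨((a, b, c, e), v), ?_, hv2.symm⟩
    simp only [hV, hS, Finset.mem_product, Set.Finite.mem_toFinset, Set.mem_ofPred_eq]
    exact ⟨⟨ha, hb, hc, he⟩, hv1⟩
  have hinj : Set.InjOn (fun t => (X t, Y t, Z t, W t)) (Finset.range m : Set ℕ) := by
    intro t ht t' ht' h
    simp only [Prod.mk.injEq] at h
    obtain ⟨q1, q2, q3, q4⟩ := h
    obtain ⟨k, hk, hkk⟩ := hK t
    have h1' := hE1 t'
    have h2' := hE2 t'
    rw [← q1, ← q2, ← q3, ← q4] at h1' h2'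
    have := inj_t m hm hm0 A B t t' _ _ _ _ k hk hkk hN (hE1 t) (hE2 t) h1' h2'
    simp only [Finset.coe_range, Set.mem_Iio] at ht ht'
    have hab : ((t : ℤ) - t').natAbs < m := by omega
    have := Int.eq_zero_of_dvd_of_natAbs_lt_natAbs this (by simpa using hab)
    omega
  have h1 := Finset.card_le_card hsub
  rw [Finset.card_image_of_injOn hinj, Finset.card_range] at h1
  have h2 := h1.trans Finset.card_image_le
  rw [Finset.card_product] at h2
  have h3 : V.card = 256 := by simp [hV, Finset.card_product, U]
  rw [h3] at h2
  rw [hcardS]; exact h2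


/-- representations as a sum of `d` squares -/
def rep (d : ℕ) (n : ℕ) : Set (Fin d → ℤ) := {v | ∑ i, v i ^ 2 = (n : ℤ)}

lemma rep_finite (d n : ℕ) : (rep d n).Finite := by
  have hI : (Set.Icc (fun _ : Fin d => -(n : ℤ)) (fun _ => (n : ℤ))).Finite := Set.finite_Icc _ _
  refine hI.subset ?_
  intro v hv
  have hv' : ∑ i, v i ^ 2 = (n : ℤ) := hv
  have key : ∀ i, v i ^ 2 ≤ n := fun i => by
    rw [← hv']
    exact Finset.single_le_sum (f := fun i => v i ^ 2) (fun j _ => sq_nonneg _) (Finset.mem_univ i)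
  refine ⟨fun i => ?_, fun i => ?_⟩
  · have h1 := Int.le_self_sq (-(v i))
    have h2 := key i
    simp only [even_two, Even.neg_pow] at h1
    simp only; omega
  · have h1 := Int.le_self_sq (v i)
    have h2 := key i
    simp only; omega

lemma rep_four (n : ℕ) : {v : ℤ × ℤ × ℤ × ℤ | qn v = n}.ncard ≤ (rep 4 n).ncard := by
  refine Set.ncard_le_ncard_of_injOn (fun v => ![v.1, v.2.1, v.2.2.1, v.2.2.2]) ?_ ?_ (rep_finite 4 n)
  · rintro ⟨x, y, z, w⟩ h
    simp only [Set.mem_ofPred_eq, qn] at h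
    simp only [rep, Set.mem_ofPred_eq, Fin.sum_univ_four]
    simpa using h
  · rintro ⟨x, y, z, w⟩ _ ⟨x', y', z', w'⟩ _ h
    have h0 := congrFun h 0
    have h1 := congrFun h 1
    have h2 := congrFun h 2
    have h3 := congrFun h 3
    simp at h0 h1 h2 h3
    simp [h0, h1, h2, h3]

lemma rep_succ (d n : ℕ) (X : Finset ℕ) (hX : ∀ x ∈ X, x ^ 2 ≤ n) :
    ∑ x ∈ X, (rep d (n - x ^ 2)).ncard ≤ (rep (d + 1) n).ncard := by
  have h1 : ∀ k, (rep d k).ncard = ((rep_finite d k).toFinset).card := fun k =>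
    Set.ncard_eq_toFinset_card _ (rep_finite d k)
  rw [Set.ncard_eq_toFinset_card _ (rep_finite (d + 1) n)]
  simp_rw [h1]
  rw [← Finset.card_sigma]
  refine Finset.card_le_card_of_injOn
    (fun p => (Fin.cons (p.1 : ℤ) p.2 : Fin (d + 1) → ℤ)) ?_ ?_
  · rintro ⟨x, v⟩ h
    simp only [Finset.coe_sigma, Set.mem_sigma_iff, Finset.mem_coe, Set.Finite.mem_toFinset] at h
    obtain ⟨hx, hv⟩ := h
    have hv' : ∑ i, v i ^ 2 = ((n - x ^ 2 : ℕ) : ℤ) := hv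
    simp only [Finset.mem_coe, Set.Finite.mem_toFinset]
    change ∑ i, _ = _
    rw [Fin.sum_univ_succ]
    simp only [Fin.cons_zero, Fin.cons_succ]
    rw [hv', Nat.cast_sub (hX x hx)]
    push_cast; ring
  · rintro ⟨x, v⟩ _ ⟨x', v'⟩ _ h
    have h0 := congrFun h 0
    simp only [Fin.cons_zero, Nat.cast_inj] at h0
    subst h0
    simp only [Sigma.mk.injEq, true_and, heq_eq_eq]
    funext i
    have := congrFun h i.succ
    simpa using this

lemma rep_pos_five (n : ℕ) : 1 ≤ (rep 5 n).ncard := by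
  obtain ⟨a, b, c, e, h⟩ := Nat.sum_four_squares n
  rw [Nat.one_le_iff_ne_zero]
  intro h0
  rw [Set.ncard_eq_zero (rep_finite 5 n)] at h0
  have : (![(0 : ℤ), a, b, c, e] : Fin 5 → ℤ) ∈ rep 5 n := by
    simp only [rep, Set.mem_ofPred_eq, Fin.sum_univ_five]
    simp
    exact_mod_cast h
  rw [h0] at this
  exact this

lemma exists_res (n : ℕ) : ∃ r < 6, ∀ j, (r + 6 * j) ^ 2 ≤ n → Nat.Coprime (n - (r + 6 * j) ^ 2) 6 := by
  have main : ∃ r < 6, ∀ k, k % 6 = (r ^ 2) % 6 → k ≤ n → Nat.Coprime (n - k) 6 := by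
    have cop : ∀ a : ℕ, (a % 6 = 1 ∨ a % 6 = 5) → Nat.Coprime a 6 := by
      intro a ha
      rw [Nat.Coprime, Nat.gcd_comm, Nat.gcd_rec]
      rcases ha with h | h
      · simp [h]
      · simp [h]
    have : n % 6 = 0 ∨ n % 6 = 1 ∨ n % 6 = 2 ∨ n % 6 = 3 ∨ n % 6 = 4 ∨ n % 6 = 5 := by omega
    rcases this with h | h | h | h | h | h
    · exact ⟨1, by norm_num, fun k hk hkn => cop _ (by omega)⟩
    · exact ⟨0, by norm_num, fun k hk hkn => cop _ (by omega)⟩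
    · exact ⟨3, by norm_num, fun k hk hkn => cop _ (by omega)⟩
    · exact ⟨2, by norm_num, fun k hk hkn => cop _ (by omega)⟩
    · exact ⟨3, by norm_num, fun k hk hkn => cop _ (by omega)⟩
    · exact ⟨0, by norm_num, fun k hk hkn => cop _ (by omega)⟩
  obtain ⟨r, hr, h⟩ := main
  refine ⟨r, hr, fun j hj => h _ ?_ hj⟩
  have : (r + 6 * j) ^ 2 = r ^ 2 + 6 * (2 * r * j + 6 * j ^ 2) := by ring
  rw [this]; omega

lemma rep_five (n L : ℕ) (hL : L ^ 2 ≤ n) : (L : ℝ) ^ 3 / 20000 ≤ (rep 5 n).ncard := by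
  rcases lt_or_ge L 24 with h | h
  · have h1 : (1 : ℝ) ≤ (rep 5 n).ncard := by exact_mod_cast rep_pos_five n
    have h2 : (L : ℝ) ≤ 24 := by exact_mod_cast h.le
    have h3 : (L : ℝ) ^ 3 ≤ 24 ^ 3 := pow_le_pow_left₀ (by positivity) h2 3
    linarith
  · obtain ⟨r, hr, hres⟩ := exists_res n
    have hinj : Function.Injective (fun j : ℕ => r + 6 * j) := by
      intro a b hab
      simp only at hab; omega
    set X := (Finset.range (L / 24 + 1)).map ⟨fun j : ℕ => r + 6 * j, hinj⟩ with hX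
    have hx2 : ∀ x ∈ X, 2 * x ≤ L := by
      intro x hx
      obtain ⟨j, hj, rfl⟩ := Finset.mem_map.1 hx
      simp only [Finset.mem_range] at hj
      simp only [Function.Embedding.coeFn_mk]
      omega
    have hx4 : ∀ x ∈ X, 4 * x ^ 2 ≤ n := by
      intro x hx
      have := hx2 x hx
      calc 4 * x ^ 2 = (2 * x) ^ 2 := by ring
        _ ≤ L ^ 2 := Nat.pow_le_pow_left this 2
        _ ≤ n := hL
    have h1 := rep_succ 4 n X (fun x hx => by have := hx4 x hx; omega)
    have h2 : ∀ x ∈ X, (L : ℝ) ^ 2 / 512 ≤ (rep 4 (n - x ^ 2)).ncard := by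
      intro x hx
      have hx5 := hx4 x hx
      obtain ⟨j, hj, rfl⟩ := Finset.mem_map.1 hx
      simp only [Function.Embedding.coeFn_mk] at *
      have hcop := hres j (by omega)
      have hL0 : 0 < L ^ 2 := by positivity
      have := (four_count _ hcop (by omega)).trans (Nat.mul_le_mul_left 256 (rep_four _))
      have h7 : L ^ 2 ≤ 512 * (rep 4 (n - (r + 6 * j) ^ 2)).ncard := by omega
      have h8 : (L : ℝ) ^ 2 ≤ 512 * (rep 4 (n - (r + 6 * j) ^ 2)).ncard := by exact_mod_cast h7
      linarith
    have h3 : (∑ _x ∈ X, (L : ℝ) ^ 2 / 512) ≤ ((rep 5 n).ncard : ℝ) := by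
      refine (Finset.sum_le_sum h2).trans ?_
      exact_mod_cast h1
    rw [Finset.sum_const, hX, Finset.card_map, Finset.card_range, nsmul_eq_mul] at h3
    refine le_trans ?_ h3
    have h9 : (L : ℝ) / 24 ≤ ((L / 24 + 1 : ℕ) : ℝ) := by
      have : L ≤ 24 * (L / 24 + 1) := by omega
      have : (L : ℝ) ≤ 24 * ((L / 24 + 1 : ℕ) : ℝ) := by exact_mod_cast this
      linarith
    have hL0 : (0 : ℝ) ≤ (L : ℝ) ^ 3 := by positivity
    calc (L : ℝ) ^ 3 / 20000 ≤ (L : ℝ) / 24 * ((L : ℝ) ^ 2 / 512) := by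
          have : (L : ℝ) / 24 * ((L : ℝ) ^ 2 / 512) = (L : ℝ) ^ 3 / 12288 := by ring
          rw [this]
          apply div_le_div_of_nonneg_left hL0 <;> norm_num
      _ ≤ _ := by gcongr

lemma rep_lower (d : ℕ) (hd : 5 ≤ d) : ∃ c : ℝ, 0 < c ∧ ∀ n L : ℕ, L ^ 2 ≤ n →
    c * (L : ℝ) ^ (d - 2) ≤ (rep d n).ncard := by
  induction d, hd using Nat.le_induction with
  | base => exact ⟨1 / 20000, by norm_num, fun n L h => by
      have := rep_five n L h
      simp only [Nat.reduceSub]; linarith⟩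
  | succ d hd ih =>
    obtain ⟨c, hc, h⟩ := ih
    refine ⟨c / 2 ^ (d - 1), by positivity, fun n L hL => ?_⟩
    have aux : ∀ x ∈ Finset.range (L / 2 + 1), ((L + 1) / 2) ^ 2 + x ^ 2 ≤ n := by
      intro x hx
      simp only [Finset.mem_range] at hx
      have hx1 : x ≤ L / 2 := by omega
      refine le_trans ?_ hL
      rcases Nat.even_or_odd' L with ⟨k, hk | hk⟩
      · have e1 : (L + 1) / 2 = k := by omega
        have e2 : x ≤ k := by omega
        rw [e1, hk]; nlinarith
      · have e1 : (L + 1) / 2 = k + 1 := by omega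
        have e2 : x ≤ k := by omega
        rw [e1, hk]; nlinarith
    have h1 := rep_succ d n (Finset.range (L / 2 + 1)) (fun x hx => by have := aux x hx; omega)
    have h2 : ∀ x ∈ Finset.range (L / 2 + 1), c * ((L : ℝ) / 2) ^ (d - 2) ≤ (rep d (n - x ^ 2)).ncard := by
      intro x hx
      refine le_trans ?_ (h (n - x ^ 2) ((L + 1) / 2) (by have := aux x hx; omega))
      have : (L : ℝ) / 2 ≤ (((L + 1) / 2 : ℕ) : ℝ) := by
        have : L ≤ 2 * ((L + 1) / 2) := by omega
        have : (L : ℝ) ≤ 2 * (((L + 1) / 2 : ℕ) : ℝ) := by exact_mod_cast this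
        linarith
      gcongr
    have h3 : (∑ _x ∈ Finset.range (L / 2 + 1), c * ((L : ℝ) / 2) ^ (d - 2)) ≤ ((rep (d + 1) n).ncard : ℝ) := by
      refine (Finset.sum_le_sum h2).trans ?_
      exact_mod_cast h1
    rw [Finset.sum_const, Finset.card_range, nsmul_eq_mul] at h3
    refine le_trans ?_ h3
    have h4 : (L : ℝ) / 2 ≤ ((L / 2 + 1 : ℕ) : ℝ) := by
      have : L ≤ 2 * (L / 2 + 1) := by omega
      have : (L : ℝ) ≤ 2 * ((L / 2 + 1 : ℕ) : ℝ) := by exact_mod_cast this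
      linarith
    obtain ⟨e, rfl⟩ : ∃ e, d = e + 2 := ⟨d - 2, by omega⟩
    have e1 : e + 2 + 1 - 2 = e + 1 := by omega
    have e2 : e + 2 - 1 = e + 1 := by omega
    have e3 : e + 2 - 2 = e := by omega
    rw [e1, e2, e3]
    calc c / 2 ^ (e + 1) * (L : ℝ) ^ (e + 1) = (L : ℝ) / 2 * (c * ((L : ℝ) / 2) ^ e) := by
          rw [div_pow]; field_simp; ring
      _ ≤ _ := by gcongr

end LB

namespace MX
open MeasureTheory

lemma cs_lint {α : Type*} [MeasurableSpace α] (μ : Measure α) (f g : α → ℝ≥0∞)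
    (hf : AEMeasurable f μ) (hg : AEMeasurable g μ) :
    (∫⁻ x, f x * g x ∂μ) ^ 2 ≤ (∫⁻ x, f x ^ 2 ∂μ) * ∫⁻ x, g x ^ 2 ∂μ := by
  have h := ENNReal.lintegral_mul_le_Lp_mul_Lq μ (p := 2) (q := 2)
    (Real.holderConjugate_iff.2 ⟨by norm_num, by norm_num⟩) hf hg
  simp only [Pi.mul_apply, ENNReal.rpow_ofNat] at h
  have h2 : ∀ x : ℝ≥0∞, (x ^ ((1:ℝ)/2)) ^ 2 = x := by
    intro x
    rw [← ENNReal.rpow_natCast, ← ENNReal.rpow_mul]; norm_num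
  calc _ ≤ _ := pow_le_pow_left₀ (by simp) h 2
    _ = _ := by rw [mul_pow, h2, h2]

lemma cs_tsum {α : Type*} (f g : α → ℝ≥0∞) :
    (∑' x, f x * g x) ^ 2 ≤ (∑' x, f x ^ 2) * ∑' x, g x ^ 2 := by
  let _ : MeasurableSpace α := ⊤
  have := cs_lint (Measure.count : Measure α) f g (measurable_from_top).aemeasurable
    (measurable_from_top).aemeasurable
  simpa [lintegral_count] using this

variable {d : ℕ}

/-- boxes -/
noncomputable def Bx (d k : ℕ) : Finset (Fin d → ℤ) := Fintype.piFinset fun _ => Finset.Ioo (-2 ^ k) (2 ^ k)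

lemma mem_Bx {k : ℕ} {j : Fin d → ℤ} : j ∈ Bx d k ↔ ∀ i, |j i| < 2 ^ k := by
  simp [Bx, Fintype.mem_piFinset, abs_lt]

/-- kernel -/
noncomputable def tau (k : ℕ) (j : Fin d → ℤ) : ℝ≥0∞ := if j ∈ Bx d k then (2 ^ (k * d))⁻¹ else 0

lemma card_Bx (k : ℕ) : (Bx d k).card ≤ 2 ^ d * 2 ^ (k * d) := by
  simp only [Bx, Fintype.card_piFinset, Int.card_Ioo, Finset.prod_const, Finset.card_univ, Fintype.card_fin]
  rw [pow_mul, ← mul_pow]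
  apply Nat.pow_le_pow_left
  have : (1:ℤ) ≤ 2 ^ k := by exact_mod_cast Nat.one_le_two_pow
  have h2 : ((2:ℕ) ^ k : ℕ) = (2:ℤ) ^ k := by norm_cast
  zify; omega

lemma tau_le (k : ℕ) (j : Fin d → ℤ) : tau k j ≤ (2 ^ (k * d))⁻¹ := by
  unfold tau; split_ifs <;> simp

lemma tau_neg (k : ℕ) (j : Fin d → ℤ) : tau k (-j) = tau k j := by
  unfold tau; simp [mem_Bx]

lemma tsum_tau (k : ℕ) : ∑' j : Fin d → ℤ, tau k j ≤ 2 ^ d := by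
  unfold tau
  rw [tsum_eq_sum (s := Bx d k) (by intro b hb; simp [hb])]
  rw [Finset.sum_congr rfl (g := fun _ => ((2:ℝ≥0∞) ^ (k * d))⁻¹) (by intro x hx; simp [hx])]
  rw [Finset.sum_const, nsmul_eq_mul]
  have : ((Bx d k).card : ℝ≥0∞) ≤ 2 ^ d * 2 ^ (k * d) := by exact_mod_cast card_Bx k
  calc _ ≤ (2:ℝ≥0∞) ^ d * 2 ^ (k * d) * ((2:ℝ≥0∞) ^ (k * d))⁻¹ := by gcongr
    _ = _ := by
      rw [mul_assoc, ENNReal.mul_inv_cancel (by simp) (by finiteness), mul_one]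

lemma tau_conv_aux (a b : ℕ) (hab : a ≤ b) (l : Fin d → ℤ) :
    ∑' j, tau a j * tau b (j - l) ≤ 4 ^ d * tau (b + 1) l := by
  by_cases hl : l ∈ Bx d (b + 1)
  · have h1 : tau (b + 1) l = ((2:ℝ≥0∞) ^ d)⁻¹ * (2 ^ (b * d))⁻¹ := by
      simp only [tau, hl, if_true]
      rw [← ENNReal.mul_inv (by simp) (by simp), ← pow_add]
      congr 2; ring
    rw [h1]
    calc ∑' j, tau a j * tau b (j - l) ≤ ∑' j : Fin d → ℤ, tau a j * (2 ^ (b * d))⁻¹ := by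
          gcongr; exact tau_le _ _
      _ = (∑' j : Fin d → ℤ, tau a j) * (2 ^ (b * d))⁻¹ := ENNReal.tsum_mul_right
      _ ≤ 2 ^ d * (2 ^ (b * d))⁻¹ := by gcongr; exact tsum_tau a
      _ = 4 ^ d * (((2:ℝ≥0∞) ^ d)⁻¹ * (2 ^ (b * d))⁻¹) := by
        rw [← mul_assoc]; congr 1
        rw [show (4:ℝ≥0∞) = 2 * 2 by norm_num, mul_pow, mul_assoc, ENNReal.mul_inv_cancel (by simp) (by finiteness), mul_one]
  · rw [ENNReal.tsum_eq_zero.2]; · simp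
    intro j
    by_contra hne
    have h1 : tau a j ≠ 0 := left_ne_zero_of_mul hne
    have h2 : tau b (j - l) ≠ 0 := right_ne_zero_of_mul hne
    have h1' : j ∈ Bx d a := by by_contra h; simp [tau, h] at h1
    have h2' : j - l ∈ Bx d b := by by_contra h; simp [tau, h] at h2
    rw [mem_Bx] at h1' h2' hl
    apply hl
    intro i
    have e1 := h1' i
    have e2 := h2' i
    have e3 : (2:ℤ) ^ a ≤ 2 ^ b := pow_le_pow_right₀ (by norm_num) hab
    simp only [Pi.sub_apply] at e2
    rw [abs_lt] at *
    rw [pow_succ]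
    constructor <;> linarith [e1.1, e1.2, e2.1, e2.2]

lemma tau_conv (a b : ℕ) (l : Fin d → ℤ) :
    ∑' j, tau a j * tau b (j - l) ≤ 4 ^ d * (tau (a + 1) l + tau (b + 1) l) := by
  rcases le_total a b with h | h
  · exact (tau_conv_aux a b h l).trans (by gcongr; simp)
  · have := tau_conv_aux b a h (-l)
    rw [tau_neg] at this
    rw [← (Equiv.addRight l).tsum_eq]
    refine le_trans (le_of_eq ?_) (this.trans (by gcongr; simp))
    refine tsum_congr fun j => ?_; simp [mul_comm]

/-- averages -/
noncomputable def T (q : ℤ) (k : ℕ) (g : (Fin d → ℤ) → ℝ≥0∞) (n : Fin d → ℤ) : ℝ≥0∞ :=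
  ∑' j, tau k j * g (n + q • j)

lemma T_zero (q : ℤ) (g : (Fin d → ℤ) → ℝ≥0∞) (n) : T q 0 g n = g n := by
  unfold T
  rw [tsum_eq_single 0]
  · simp [tau, mem_Bx]
  · intro j hj
    have : j ∉ Bx d 0 := by
      intro h
      rw [mem_Bx] at h
      apply hj; ext i; have := h i; simp at this; simpa using this
    simp [tau, this]

lemma T_sq (q : ℤ) (k : ℕ) (g : (Fin d → ℤ) → ℝ≥0∞) :
    ∑' n, T q k g n ^ 2 ≤ 4 ^ d * ∑' n, g n ^ 2 := by
  have h1 : ∀ n, T q k g n ^ 2 ≤ 2 ^ d * ∑' j, tau k j * g (n + q • j) ^ 2 := by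
    intro n
    have h := cs_tsum (fun j => (tau k j) ^ ((1:ℝ)/2)) (fun j => (tau k j) ^ ((1:ℝ)/2) * g (n + q • j))
    have h2 : ∀ x : ℝ≥0∞, (x ^ ((1:ℝ)/2)) ^ 2 = x := by
      intro x
      rw [← ENNReal.rpow_natCast, ← ENNReal.rpow_mul]; norm_num
    simp only [← mul_assoc, ← pow_two, mul_pow, h2] at h
    refine h.trans ?_
    gcongr; exact tsum_tau k
  calc _ ≤ ∑' n, 2 ^ d * ∑' j, tau k j * g (n + q • j) ^ 2 := by gcongr; exact h1 _
    _ = 2 ^ d * ∑' j, ∑' n, tau k j * g (n + q • j) ^ 2 := by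
      rw [ENNReal.tsum_mul_left, ENNReal.tsum_comm]
    _ = 2 ^ d * ∑' j, tau k j * ∑' n, g n ^ 2 := by
      congr 2; ext j; rw [ENNReal.tsum_mul_left, ← (Equiv.addRight (q • j)).tsum_eq (fun n => g n ^ 2)]; simp
    _ ≤ 2 ^ d * (2 ^ d * ∑' n, g n ^ 2) := by
      rw [ENNReal.tsum_mul_right]; gcongr; exact tsum_tau k
    _ = _ := by rw [← mul_assoc, ← mul_pow]; norm_num

/-- maximal function -/
noncomputable def Mx (q : ℤ) (K : ℕ) (g : (Fin d → ℤ) → ℝ≥0∞) (n : Fin d → ℤ) : ℝ≥0∞ :=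
  (Finset.range (K + 1)).sup fun k => T q k g n

lemma Mx_succ (q : ℤ) (K : ℕ) (g : (Fin d → ℤ) → ℝ≥0∞) (n) :
    Mx q (K + 1) g n ≤ Mx q K g n + T q (K + 1) g n := by
  unfold Mx
  rw [Finset.range_add_one (n := K + 1), Finset.sup_insert]
  exact sup_le le_add_self le_self_add

lemma exists_k (q : ℤ) (K : ℕ) (g : (Fin d → ℤ) → ℝ≥0∞) (n) :
    ∃ k ≤ K, Mx q K g n = T q k g n := by
  obtain ⟨k, hk, h⟩ := Finset.exists_mem_eq_sup (Finset.range (K + 1)) (by simp) (fun k => T q k g n)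
  exact ⟨k, by simpa [Nat.lt_succ_iff] using hk, h⟩

lemma T_le_Mx (q : ℤ) {k K : ℕ} (h : k ≤ K) (g : (Fin d → ℤ) → ℝ≥0∞) (n) : T q k g n ≤ Mx q K g n :=
  Finset.le_sup (f := fun k => T q k g n) (by simpa [Nat.lt_succ_iff] using h)

lemma sq_add_le (a b : ℝ≥0∞) : (a + b) ^ 2 ≤ 2 * a ^ 2 + 2 * b ^ 2 := by
  have := ENNReal.rpow_add_le_mul_rpow_add_rpow a b (p := 2) (by norm_num)
  norm_num at this
  rwa [mul_add] at this

lemma Mx_succ_sq (q : ℤ) (K : ℕ) (g : (Fin d → ℤ) → ℝ≥0∞) (B : ℝ≥0∞)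
    (h : ∑' n, Mx q K g n ^ 2 ≤ B * ∑' n, g n ^ 2) :
    ∑' n, Mx q (K + 1) g n ^ 2 ≤ (2 * B + 2 * 4 ^ d) * ∑' n, g n ^ 2 := by
  calc _ ≤ ∑' n, (2 * Mx q K g n ^ 2 + 2 * T q (K + 1) g n ^ 2) := by
        gcongr with n
        exact (pow_le_pow_left₀ (by simp) (Mx_succ q K g n) 2).trans (sq_add_le _ _)
    _ = 2 * ∑' n, Mx q K g n ^ 2 + 2 * ∑' n, T q (K + 1) g n ^ 2 := by
        rw [ENNReal.tsum_add, ENNReal.tsum_mul_left, ENNReal.tsum_mul_left]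
    _ ≤ 2 * (B * ∑' n, g n ^ 2) + 2 * (4 ^ d * ∑' n, g n ^ 2) := by gcongr; exact T_sq _ _ _
    _ = _ := by ring

lemma TTstar (q : ℤ) (K : ℕ) (h : (Fin d → ℤ) → ℝ≥0∞) (k : (Fin d → ℤ) → ℕ) (hk : ∀ n, k n ≤ K) :
    ∑' m, (∑' j, tau (k (m - q • j)) j * h (m - q • j)) ^ 2 ≤
      2 * 4 ^ d * ∑' n, h n * Mx q (K + 1) h n := by
  have e1 : ∀ m, (∑' j, tau (k (m - q • j)) j * h (m - q • j)) ^ 2 =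
      ∑' j, ∑' l, (tau (k (m - q • j)) j * h (m - q • j)) *
        (tau (k (m - q • (j - l))) (j - l) * h (m - q • (j - l))) := by
    intro m
    rw [pow_two, ← ENNReal.tsum_mul_right]
    refine tsum_congr fun j => ?_
    rw [← ENNReal.tsum_mul_left]
    rw [← (Equiv.subLeft j).tsum_eq]
    rfl
  calc _ = ∑' m, ∑' j, ∑' l, (tau (k (m - q • j)) j * h (m - q • j)) *
        (tau (k (m - q • (j - l))) (j - l) * h (m - q • (j - l))) := by simp_rw [e1]
    _ = ∑' j, ∑' n, ∑' l, (tau (k n) j * h n) * (tau (k (n + q • l)) (j - l) * h (n + q • l)) := by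
        rw [ENNReal.tsum_comm]
        refine tsum_congr fun j => ?_
        rw [← (Equiv.addRight (q • j)).tsum_eq]
        refine tsum_congr fun n => ?_; refine tsum_congr fun l => ?_
        have : n + q • j - q • (j - l) = n + q • l := by rw [smul_sub]; abel
        simp only [Equiv.coe_addRight, add_sub_cancel_right, this]
    _ = ∑' n, ∑' l, h n * h (n + q • l) * ∑' j, tau (k n) j * tau (k (n + q • l)) (j - l) := by
        rw [ENNReal.tsum_comm]
        refine tsum_congr fun n => ?_
        rw [ENNReal.tsum_comm]
        refine tsum_congr fun l => ?_
        rw [← ENNReal.tsum_mul_left]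
        refine tsum_congr fun j => ?_; ring
    _ ≤ ∑' n, ∑' l, h n * h (n + q • l) * (4 ^ d * (tau (k n + 1) l + tau (k (n + q • l) + 1) l)) := by
        gcongr; exact tau_conv _ _ _
    _ = 4 ^ d * ((∑' n, ∑' l, h n * (tau (k n + 1) l * h (n + q • l))) +
          ∑' n, ∑' l, h (n + q • l) * (tau (k (n + q • l) + 1) l * h n)) := by
        rw [← ENNReal.tsum_add, ← ENNReal.tsum_mul_left]
        refine tsum_congr fun n => ?_
        rw [← ENNReal.tsum_add, ← ENNReal.tsum_mul_left]
        refine tsum_congr fun l => ?_; ring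
    _ = 4 ^ d * ((∑' n, ∑' l, h n * (tau (k n + 1) l * h (n + q • l))) +
          ∑' n, ∑' l, h n * (tau (k n + 1) l * h (n + q • l))) := by
        congr 2
        rw [ENNReal.tsum_comm, ← (Equiv.neg (Fin d → ℤ)).tsum_eq, ENNReal.tsum_comm (f := fun n l => h n * (tau (k n + 1) l * h (n + q • l)))]
        refine tsum_congr fun l => ?_
        rw [← (Equiv.addRight (q • l)).tsum_eq]
        refine tsum_congr fun n => ?_
        simp [tau_neg]
    _ = 2 * 4 ^ d * ∑' n, ∑' l, h n * (tau (k n + 1) l * h (n + q • l)) := by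
        rw [← two_mul, ← mul_assoc, mul_comm _ (2:ℝ≥0∞)]
    _ ≤ _ := by
        gcongr with n
        rw [ENNReal.tsum_mul_left]
        gcongr
        exact T_le_Mx q (Nat.succ_le_succ (hk n)) h n

lemma Mx_bound (q : ℤ) (K : ℕ) : ∀ (g : (Fin d → ℤ) → ℝ≥0∞),
    ∑' n, Mx q K g n ^ 2 ≤ (100 * 64 ^ d) * ∑' n, g n ^ 2 := by
  induction K with
  | zero =>
    intro g
    have : ∀ n, Mx q 0 g n = g n := by intro n; simp [Mx, T_zero]
    simp_rw [this]
    refine le_mul_of_one_le_left (by simp) ?_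
    exact_mod_cast (by have := Nat.one_le_pow d 64 (by norm_num); omega : 1 ≤ 100 * 64 ^ d)
  | succ K ih =>
    intro g
    by_cases hG : ∑' n, g n ^ 2 = ⊤
    · rw [hG, ENNReal.mul_top (by simp)]; simp
    set h := Mx q (K + 1) g with hh
    choose k hk hk2 using exists_k q (K + 1) g
    set H := ∑' n, h n ^ 2 with hH
    set G := ∑' n, g n ^ 2
    have hfin : H ≠ ⊤ := by
      refine ne_top_of_le_ne_top ?_ (Mx_succ_sq q K g _ (ih g))
      finiteness
    set X := ∑' m, (∑' j, tau (k (m - q • j)) j * h (m - q • j)) ^ 2 with hX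
    have h1 : H ^ 2 ≤ G * X := by
      refine le_trans (le_of_eq ?_) (cs_tsum _ _)
      congr 1
      calc H = ∑' n, ∑' j, tau (k n) j * h n * g (n + q • j) := by
            rw [hH]; refine tsum_congr fun n => ?_
            rw [pow_two]; nth_rw 2 [hh]
            rw [hk2, T, ← ENNReal.tsum_mul_left]
            refine tsum_congr fun j => ?_; ring
        _ = ∑' m, ∑' j, g m * (tau (k (m - q • j)) j * h (m - q • j)) := by
            rw [ENNReal.tsum_comm, ENNReal.tsum_comm (f := fun m j => g m * (tau (k (m - q • j)) j * h (m - q • j)))]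
            refine tsum_congr fun j => ?_
            rw [← (Equiv.addRight (q • j)).tsum_eq (fun m => g m * (tau (k (m - q • j)) j * h (m - q • j)))]
            refine tsum_congr fun n => ?_
            simp; ring
        _ = _ := by simp_rw [ENNReal.tsum_mul_left]
    have h2 : X ≤ 2 * 4 ^ d * ∑' n, h n * Mx q (K + 2) h n := TTstar q (K + 1) h k hk
    have h3 := cs_tsum h (Mx q (K + 2) h)
    have h4 := Mx_succ_sq q (K + 1) h _ (Mx_succ_sq q K h _ (ih h))
    have h5 : X ^ 2 ≤ ((100 * 64 ^ d) * H) ^ 2 := by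
      calc X ^ 2 ≤ (2 * 4 ^ d * ∑' n, h n * Mx q (K + 2) h n) ^ 2 := by gcongr
        _ = 4 * 16 ^ d * (∑' n, h n * Mx q (K + 2) h n) ^ 2 := by
            rw [mul_pow, mul_pow, ← pow_mul, mul_comm d 2, pow_mul]; norm_num
        _ ≤ 4 * 16 ^ d * (H * ((2 * (2 * (100 * 64 ^ d) + 2 * 4 ^ d) + 2 * 4 ^ d) * H)) := by
            gcongr; exact h3.trans (by gcongr)
        _ = (4 * 16 ^ d * (2 * (2 * (100 * 64 ^ d) + 2 * 4 ^ d) + 2 * 4 ^ d)) * H ^ 2 := by ring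
        _ ≤ (100 * 64 ^ d) ^ 2 * H ^ 2 := by
            gcongr
            have a1 : 4 ^ d ≤ 64 ^ d := Nat.pow_le_pow_left (by norm_num) d
            have a2 : 16 ^ d ≤ 64 ^ d := Nat.pow_le_pow_left (by norm_num) d
            have : 4 * 16 ^ d * (2 * (2 * (100 * 64 ^ d) + 2 * 4 ^ d) + 2 * 4 ^ d) ≤ (100 * 64 ^ d) ^ 2 := by
              nlinarith [Nat.mul_le_mul a1 a2, Nat.mul_le_mul_left (64 ^ d) a2]
            exact_mod_cast this
        _ = _ := by ring
    have h6 : X ≤ (100 * 64 ^ d) * H := by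
      by_contra! hc
      exact absurd h5 (not_le.2 (ENNReal.pow_lt_pow_left (by norm_num) hc))
    by_cases h0 : H = 0
    · rw [h0]; simp
    have h7 : H * H ≤ H * ((100 * 64 ^ d) * G) := by
      calc H * H = H ^ 2 := by ring
        _ ≤ G * ((100 * 64 ^ d) * H) := h1.trans (by gcongr)
        _ = _ := by ring
    exact (ENNReal.mul_le_mul_iff_right h0 hfin).1 h7

lemma maximal (q : ℤ) (g : (Fin d → ℤ) → ℝ≥0∞) :
    ∑' n, (⨆ k, T q k g n) ^ 2 ≤ (100 * 64 ^ d) * ∑' n, g n ^ 2 := by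
  have h1 : ∀ n, (⨆ k, T q k g n) ^ 2 ≤ ⨆ K, (Mx q K g n) ^ 2 := by
    intro n
    rw [ENNReal.iSup_pow]
    exact iSup_mono fun k => pow_le_pow_left₀ (by simp) (T_le_Mx q le_rfl g n) 2
  refine (ENNReal.tsum_le_tsum h1).trans ?_
  rw [ENNReal.tsum_eq_iSup_sum]
  refine iSup_le fun s => ?_
  rw [ENNReal.finsetSum_iSup_of_monotone]
  · exact iSup_le fun K => (ENNReal.sum_le_tsum s).trans (Mx_bound q K g)
  · intro n K K' h
    simp only
    gcongr
    exact Finset.sup_mono (by simpa using h)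

end MX

namespace TH
open Complex

/-- exponential -/
noncomputable def ee (x : ℝ) : ℂ := cexp (2 * Real.pi * I * x)

lemma ee_add (x y : ℝ) : ee (x + y) = ee x * ee y := by
  unfold ee; rw [← Complex.exp_add]; congr 1; push_cast; ring

lemma ee_int (n : ℤ) : ee n = 1 := by
  unfold ee; rw [Complex.exp_eq_one_iff]; exact ⟨n, by push_cast; ring⟩

lemma norm_ee (x : ℝ) : ‖ee x‖ = 1 := by
  unfold ee
  rw [show (2 * Real.pi * I * x : ℂ) = ((2 * Real.pi * x : ℝ) : ℂ) * I by push_cast; ring]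
  exact norm_exp_ofReal_mul_I _

/-- normalized Gauss sums -/
noncomputable def gam (a : ℤ) (q : ℕ) (l : ℤ) : ℂ :=
  (q : ℂ)⁻¹ * ∑ r : Fin q, ee ((a * (r : ℕ) ^ 2 + l * (r : ℕ)) / q)

lemma gauss_zmod (q : ℕ) [NeZero q] (a l : ZMod q) (ha : IsUnit a) :
    ‖∑ r : ZMod q, (ZMod.stdAddChar (a * r ^ 2 + l * r) : ℂ)‖ ^ 2 ≤ 2 * q := by
  set ψ : AddChar (ZMod q) ℂ := ZMod.stdAddChar
  have hψ : ψ.IsPrimitive := ZMod.isPrimitive_stdAddChar q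
  have h1 : ((‖∑ r : ZMod q, ψ (a * r ^ 2 + l * r)‖ ^ 2 : ℝ) : ℂ) =
      ∑ h : ZMod q, ψ (a * h ^ 2 + l * h) * ((if 2 * a * h = 0 then q else 0 : ℕ) : ℂ) := by
    have e1 : ∀ h : ZMod q, ((if 2 * a * h = 0 then q else 0 : ℕ) : ℂ) = ∑ s, ψ (s * (2 * a * h)) := by
      intro h; rw [AddChar.sum_mulShift _ hψ, ZMod.card]
    simp_rw [e1]
    rw [ofReal_pow, ← Complex.mul_conj', map_sum, Finset.sum_mul_sum]
    simp_rw [Finset.mul_sum]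
    rw [Finset.sum_comm, Finset.sum_comm (γ := ZMod q) (f := fun h s => ψ (a * h ^ 2 + l * h) * ψ (s * (2 * a * h)))]
    refine Finset.sum_congr rfl fun s _ => ?_
    rw [← Equiv.sum_comp (Equiv.addRight s)]
    refine Finset.sum_congr rfl fun h _ => ?_
    rw [← AddChar.map_neg_eq_conj, ← AddChar.map_add_eq_mul, ← AddChar.map_add_eq_mul]
    congr 1
    simp; ring
  have h2 : ‖((‖∑ r : ZMod q, ψ (a * r ^ 2 + l * r)‖ ^ 2 : ℝ) : ℂ)‖ ≤ 2 * q := by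
    rw [h1]
    refine (norm_sum_le _ _).trans ?_
    calc ∑ h : ZMod q, ‖ψ (a * h ^ 2 + l * h) * ((if 2 * a * h = 0 then q else 0 : ℕ) : ℂ)‖
        = ∑ h : ZMod q, if 2 • h = 0 then (q : ℝ) else 0 := by
          refine Finset.sum_congr rfl fun h _ => ?_
          rw [norm_mul, AddChar.norm_apply, one_mul]
          have : 2 * a * h = 0 ↔ 2 • h = 0 := by
            rw [mul_comm 2 a, mul_assoc, ha.mul_right_eq_zero, nsmul_eq_mul]; simp
          simp only [this]
          split_ifs <;> simp
      _ = (Finset.univ.filter fun h : ZMod q => 2 • h = 0).card * (q : ℝ) := by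
          rw [← Finset.sum_filter, Finset.sum_const, nsmul_eq_mul]
      _ ≤ 2 * q := by
          gcongr
          exact_mod_cast IsAddCyclic.card_nsmul_eq_zero_le (α := ZMod q) (n := 2) (by norm_num)
  rwa [Complex.norm_real, Real.norm_of_nonneg (by positivity)] at h2

lemma norm_gam (a : ℤ) (q : ℕ) (hq : 0 < q) (l : ℤ) (h : IsCoprime a (q : ℤ)) :
    ‖gam a q l‖ ≤ Real.sqrt 2 / Real.sqrt q := by
  have : NeZero q := ⟨hq.ne'⟩
  have ha : IsUnit (a : ZMod q) := (ZMod.coe_int_isUnit_iff_isCoprime a q).2 h.symm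
  have h1 := gauss_zmod q (a : ZMod q) (l : ZMod q) ha
  have h2 : ∑ r : Fin q, ee ((a * (r : ℕ) ^ 2 + l * (r : ℕ)) / q) =
      ∑ r : ZMod q, (ZMod.stdAddChar ((a : ZMod q) * r ^ 2 + (l : ZMod q) * r) : ℂ) := by
    refine Fintype.sum_bijective (fun r : Fin q => ((r : ℕ) : ZMod q)) ?_ _ _ ?_
    · rw [Fintype.bijective_iff_injective_and_card]
      refine ⟨fun x y hxy => ?_, by simp [ZMod.card]⟩
      have := (ZMod.natCast_eq_natCast_iff' _ _ _).1 hxy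
      rw [Nat.mod_eq_of_lt x.2, Nat.mod_eq_of_lt y.2] at this
      exact Fin.ext this
    · intro r
      have := ZMod.stdAddChar_coe (N := q) (a * (r : ℕ) ^ 2 + l * (r : ℕ))
      push_cast at this
      rw [this]; unfold ee; congr 1; push_cast; ring
  have h3 : ‖∑ r : ZMod q, (ZMod.stdAddChar ((a : ZMod q) * r ^ 2 + (l : ZMod q) * r) : ℂ)‖ ≤ Real.sqrt (2 * q) :=
    Real.le_sqrt_of_sq_le h1
  unfold gam
  rw [h2, norm_mul, norm_inv, Complex.norm_natCast]
  have hq' : (0:ℝ) < q := by exact_mod_cast hq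
  calc _ ≤ (q:ℝ)⁻¹ * Real.sqrt (2 * q) := by gcongr
    _ = _ := by
      rw [Real.sqrt_mul (by norm_num)]
      nth_rw 1 [← Real.mul_self_sqrt hq'.le]
      have : Real.sqrt q ≠ 0 := (Real.sqrt_pos.2 hq').ne'
      field_simp

lemma summ_gauss (b : ℂ) (hb : 0 < b.re) (x : ℝ) :
    Summable fun n : ℤ => cexp (-Real.pi * b * ((n : ℂ) + x) ^ 2) := by
  have h := (hasSum_jacobiTheta₂_term (I * b * x) (τ := I * b) (by simpa using hb)).summable
  have h2 := h.mul_left (cexp (-Real.pi * b * x ^ 2))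
  refine h2.congr fun n => ?_
  rw [jacobiTheta₂_term, ← Complex.exp_add]
  congr 1
  ring_nf
  rw [Complex.I_sq]; ring

lemma poisson (b : ℂ) (hb : 0 < b.re) (x η : ℝ) :
    ∑' j : ℤ, cexp (-Real.pi * b * ((j : ℂ) + x) ^ 2) * ee ((j + x) * η) =
      1 / b ^ (1 / 2 : ℂ) * ∑' n : ℤ, ee (x * n) * cexp (-Real.pi / b * ((n : ℂ) - η) ^ 2) := by
  have hb0 : b ≠ 0 := by rintro rfl; simp at hb
  have h := Complex.tsum_exp_neg_quadratic hb (-b * x + I * η)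
  have e1 : ∀ j : ℤ, cexp (-Real.pi * b * ((j : ℂ) + x) ^ 2) * ee ((j + x) * η) =
      cexp (-Real.pi * b * x ^ 2 + 2 * Real.pi * I * (x * η)) *
        cexp (-Real.pi * b * j ^ 2 + 2 * Real.pi * (-b * x + I * η) * j) := by
    intro j
    unfold ee
    rw [← Complex.exp_add, ← Complex.exp_add]
    congr 1; push_cast; ring
  simp_rw [e1]
  rw [tsum_mul_left, h, mul_left_comm, ← tsum_mul_left]
  congr 1
  refine tsum_congr fun n => ?_
  unfold ee
  rw [← Complex.exp_add, ← Complex.exp_add]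
  congr 1
  have : (n + I * (-b * x + I * η)) ^ 2 = ((n : ℂ) - η) ^ 2 - 2 * I * b * x * (n - η) - b ^ 2 * x ^ 2 := by
    have h1 : I * (-b * x + I * η) = -η - I * b * x := by linear_combination (η : ℂ) * I_mul_I
    rw [h1]
    linear_combination (b ^ 2 * x ^ 2 : ℂ) * I_mul_I
  rw [this]
  push_cast
  field_simp
  ring

/-- one-dimensional kernel -/
noncomputable def kap (L : ℝ) (a : ℤ) (q : ℕ) (u : ℝ) (m : ℤ) : ℂ :=
  ee (a * m ^ 2 / q) * cexp (-Real.pi * (1 - I * u) / L ^ 2 * (m : ℂ) ^ 2)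

lemma norm_kap (L : ℝ) (a : ℤ) (q : ℕ) (u : ℝ) (m : ℤ) :
    ‖kap L a q u m‖ = Real.exp (-Real.pi / L ^ 2 * m ^ 2) := by
  rw [kap, norm_mul, norm_ee, one_mul, Complex.norm_exp]
  congr 1
  rw [show (-Real.pi * (1 - I * u) / L ^ 2 * (m : ℂ) ^ 2 : ℂ) =
    ((-Real.pi / L ^ 2 * m ^ 2 : ℝ) : ℂ) + ((Real.pi * u / L ^ 2 * m ^ 2 : ℝ) : ℂ) * I by push_cast; ring]
  simp only [add_re, ofReal_re, re_ofReal_mul, I_re, mul_zero, add_zero]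

lemma summ_kap (L : ℝ) (hL : 0 < L) (a : ℤ) (q : ℕ) (u : ℝ) :
    Summable fun m : ℤ => ‖kap L a q u m‖ := by
  have := (summ_gauss (1 / L ^ 2 : ℝ) (by rw [Complex.ofReal_re]; positivity) 0).norm
  refine this.congr fun m => ?_
  rw [norm_kap, Complex.norm_exp]
  congr 1
  rw [show (-Real.pi * ((1 / L ^ 2 : ℝ) : ℂ) * ((m : ℂ) + ((0:ℝ) : ℂ)) ^ 2 : ℂ) = ((-Real.pi / L ^ 2 * m ^ 2 : ℝ) : ℂ) by push_cast; ring]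
  rw [Complex.ofReal_re]

/-- parameter -/
noncomputable def bb (L : ℝ) (q : ℕ) (u : ℝ) : ℂ := (1 - I * u) * q ^ 2 / L ^ 2

lemma bb_eq (L : ℝ) (q : ℕ) (u : ℝ) : bb L q u = ((q ^ 2 / L ^ 2 : ℝ) : ℂ) * (1 - I * u) := by
  unfold bb; push_cast; ring

lemma bb_re (L : ℝ) (q : ℕ) (u : ℝ) : (bb L q u).re = q ^ 2 / L ^ 2 := by
  rw [bb_eq, re_ofReal_mul]; simp

lemma theta (L : ℝ) (hL : 0 < L) (a : ℤ) (q : ℕ) (hq : 0 < q) (u ξ : ℝ) :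
    ∑' m : ℤ, kap L a q u m * ee (m * ξ) = q / bb L q u ^ (1 / 2 : ℂ) *
      ∑' n : ℤ, gam a q n * cexp (-Real.pi / bb L q u * ((n : ℂ) - (q * ξ : ℝ)) ^ 2) := by
  have : NeZero q := ⟨hq.ne'⟩
  have hq' : (q : ℝ) ≠ 0 := by exact_mod_cast hq.ne'
  have hqc : (q : ℂ) ≠ 0 := by exact_mod_cast hq.ne'
  have hb : 0 < (bb L q u).re := by rw [bb_re]; positivity
  have hb0 : bb L q u ≠ 0 := by intro h; rw [h] at hb; simp at hb
  have hbi : 0 < (1 / bb L q u).re := by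
    rw [one_div, Complex.inv_re]; exact div_pos hb (Complex.normSq_pos.2 hb0)
  have hs : Summable fun m : ℤ => kap L a q u m * ee (m * ξ) := by
    refine Summable.of_norm ?_
    simp_rw [norm_mul, norm_ee, mul_one]
    exact summ_kap L hL a q u
  have e1 : ∀ p : ℤ × Fin q, kap L a q u ((Int.divModEquiv q).symm p) * ee (((Int.divModEquiv q).symm p : ℤ) * ξ) =
      ee (a * (p.2 : ℕ) ^ 2 / q) * (cexp (-Real.pi * bb L q u * ((p.1 : ℂ) + (((p.2 : ℕ) / q : ℝ) : ℝ)) ^ 2) * ee ((p.1 + (p.2 : ℕ) / q) * (q * ξ))) := by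
    rintro ⟨j, r⟩
    have : (Int.divModEquiv q).symm (j, r) = j * q + (r : ℕ) := rfl
    rw [this, kap]
    have e2 : ee (a * ((j * q + (r : ℕ) : ℤ) : ℝ) ^ 2 / q) = ee (a * (r : ℕ) ^ 2 / q) := by
      have : (a * ((j * q + (r : ℕ) : ℤ) : ℝ) ^ 2 / q) = a * (r : ℕ) ^ 2 / q + ((a * (j ^ 2 * q + 2 * j * (r : ℕ)) : ℤ) : ℝ) := by
        push_cast; field_simp; ring
      rw [this, ee_add, ee_int, mul_one]
    rw [e2, mul_assoc]
    congr 3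
    · unfold bb; push_cast; field_simp
    · push_cast; field_simp
  rw [← (Int.divModEquiv q).symm.tsum_eq]
  simp_rw [e1]
  have hs2 : Summable fun p : ℤ × Fin q => ee (a * (p.2 : ℕ) ^ 2 / q) * (cexp (-Real.pi * bb L q u * ((p.1 : ℂ) + (((p.2 : ℕ) / q : ℝ) : ℝ)) ^ 2) * ee ((p.1 + (p.2 : ℕ) / q) * (q * ξ))) := by
    have := (Int.divModEquiv q).symm.summable_iff.2 hs
    refine this.congr fun p => ?_
    exact e1 p
  rw [hs2.tsum_prod' (fun b => (hasSum_fintype _).summable)]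
  simp_rw [tsum_fintype]
  have hs3 : ∀ r : Fin q, Summable fun j : ℤ => ee (a * (r : ℕ) ^ 2 / q) * (cexp (-Real.pi * bb L q u * ((j : ℂ) + (((r : ℕ) / q : ℝ) : ℝ)) ^ 2) * ee ((j + (r : ℕ) / q) * (q * ξ))) := by
    intro r
    exact hs2.comp_injective (i := fun j : ℤ => (j, r)) (fun x y h => by simpa using h)
  rw [Summable.tsum_finsetSum (fun r _ => hs3 r)]
  simp_rw [tsum_mul_left, poisson _ hb]
  have hs4 : ∀ r : Fin q, Summable fun n : ℤ => ee ((r : ℕ) / q * n) * cexp (-Real.pi / bb L q u * ((n : ℂ) - (q * ξ : ℝ)) ^ 2) := by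
    intro r
    refine Summable.of_norm ?_
    simp_rw [norm_mul, norm_ee, one_mul]
    have := (summ_gauss (1 / bb L q u) hbi (-(q * ξ))).norm
    refine this.congr fun n => ?_
    congr 2; push_cast; ring
  simp_rw [mul_left_comm (ee _) (1 / _), ← tsum_mul_left]
  rw [← Summable.tsum_finsetSum]
  · refine tsum_congr fun n => ?_
    unfold gam
    rw [Finset.mul_sum, Finset.sum_mul, Finset.mul_sum]
    refine Finset.sum_congr rfl fun r _ => ?_
    have : ee ((a * (r : ℕ) ^ 2 + n * (r : ℕ)) / q) = ee (a * (r : ℕ) ^ 2 / q) * ee ((r : ℕ) / q * n) := by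
      rw [← ee_add]; congr 1; ring
    rw [this]
    field_simp
  · intro r _
    exact ((hs4 r).mul_left _).mul_left _

end TH

namespace TH
open Complex

/-- profile -/
noncomputable def rho (x : ℝ) : ℝ := x / (1 + x ^ 2)

lemma rho_nonneg {x : ℝ} (hx : 0 ≤ x) : 0 ≤ rho x := by unfold rho; positivity

lemma half_le_rho {x : ℝ} (hx : 0 ≤ x) (h1 : x ≤ 1) : x ≤ 2 * rho x := by
  unfold rho
  rw [← mul_div_assoc, le_div_iff₀ (by positivity)]
  nlinarith

lemma inv_le_rho {x : ℝ} (h1 : 1 ≤ x) : 1 / x ≤ 2 * rho x := by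
  unfold rho
  rw [← mul_div_assoc, div_le_div_iff₀ (by positivity) (by positivity)]
  nlinarith

/-- telescoping profile -/
noncomputable def phi (x : ℝ) : ℝ := x ^ 2 / (1 + x ^ 2)

lemma rho_sq_le (x : ℝ) : rho x ^ 2 ≤ 4 / 3 * (phi (2 * x) - phi x) := by
  have : 4 / 3 * (phi (2 * x) - phi x) = 4 * x ^ 2 / ((1 + 4 * x ^ 2) * (1 + x ^ 2)) := by
    unfold phi
    have h1 : (1 + (2 * x) ^ 2) ≠ 0 := by positivity
    have h2 : (1 + x ^ 2) ≠ 0 := by positivity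
    have h3 : (1 + 4 * x ^ 2) ≠ 0 := by positivity
    field_simp
    ring
  rw [this, rho, div_pow, div_le_div_iff₀ (by positivity) (by positivity)]
  nlinarith [sq_nonneg x, mul_nonneg (sq_nonneg x) (sq_nonneg x), mul_nonneg (sq_nonneg x) (mul_nonneg (sq_nonneg x) (sq_nonneg x))]

lemma sum_rho (x : ℝ) (K : ℕ) : ∑ k ∈ Finset.range K, rho (2 ^ k * x) ^ 2 ≤ 4 / 3 := by
  have h : ∑ k ∈ Finset.range K, rho (2 ^ k * x) ^ 2 ≤ 4 / 3 * (phi (2 ^ K * x) - phi x) := by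
    induction K with
    | zero => simp
    | succ K ih =>
      rw [Finset.sum_range_succ]
      have := rho_sq_le (2 ^ K * x)
      rw [← mul_assoc, ← pow_succ'] at this
      linarith
  have h2 : phi (2 ^ K * x) ≤ 1 := by
    unfold phi; rw [div_le_one (by positivity)]; linarith
  have h3 : 0 ≤ phi x := by unfold phi; positivity
  linarith

/-- the gaussian -/
noncomputable def EE (b : ℂ) (x : ℝ) : ℂ := cexp (-Real.pi / b * (x : ℂ) ^ 2)

lemma inv_bb (L : ℝ) (hL : 0 < L) (q : ℕ) (hq : 0 < q) (u : ℝ) :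
    1 / bb L q u = (((L / q) ^ 2 / (1 + u ^ 2) : ℝ) : ℂ) * (1 + I * u) := by
  have h1 : (1 - I * u : ℂ) * (1 + I * u) = ((1 + u ^ 2 : ℝ) : ℂ) := by
    push_cast; linear_combination (-(u:ℂ) ^ 2) * I_mul_I
  have h0 : ((1 + u ^ 2 : ℝ) : ℂ) ≠ 0 := by exact_mod_cast (by positivity : (1 + u ^ 2 : ℝ) ≠ 0)
  have h2 : (1 - I * u : ℂ) ≠ 0 := fun h => h0 (by rw [← h1, h, zero_mul])
  have hq' : (q : ℂ) ≠ 0 := by exact_mod_cast hq.ne'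
  have hL' : (L : ℂ) ≠ 0 := by exact_mod_cast hL.ne'
  rw [ofReal_div, div_mul_eq_mul_div, eq_div_iff h0, ← h1]
  unfold bb
  push_cast
  field_simp

lemma norm_EE (L : ℝ) (hL : 0 < L) (q : ℕ) (hq : 0 < q) (u x : ℝ) :
    ‖EE (bb L q u) x‖ = Real.exp (-(Real.pi * (L / q) ^ 2 * x ^ 2 / (1 + u ^ 2))) := by
  unfold EE
  rw [Complex.norm_exp]
  congr 1
  rw [show (-Real.pi / bb L q u * (x : ℂ) ^ 2 : ℂ) = ((-Real.pi * x ^ 2 : ℝ) : ℂ) * (1 / bb L q u) by push_cast; ring]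
  rw [inv_bb L hL q hq, re_ofReal_mul, re_ofReal_mul]
  simp; ring

lemma norm_one_add (u : ℝ) : ‖(1 + I * u : ℂ)‖ = Real.sqrt (1 + u ^ 2) := by
  rw [Complex.norm_def]; congr 1; simp [Complex.normSq_apply]; ring

lemma EE_sub_one (L : ℝ) (hL : 0 < L) (q : ℕ) (hq : 0 < q) (u x : ℝ) :
    ‖EE (bb L q u) x - 1‖ ≤ 2 * (Real.pi * (L / q) ^ 2 * x ^ 2) := by
  have hw : ‖(-Real.pi / bb L q u * (x : ℂ) ^ 2 : ℂ)‖ ≤ Real.pi * (L / q) ^ 2 * x ^ 2 := by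
    rw [show (-Real.pi / bb L q u * (x : ℂ) ^ 2 : ℂ) = ((-Real.pi * x ^ 2 : ℝ) : ℂ) * (1 / bb L q u) by push_cast; ring]
    rw [inv_bb L hL q hq, norm_mul, norm_mul, norm_one_add, Complex.norm_real, Complex.norm_real, Real.norm_eq_abs, Real.norm_eq_abs,
      abs_of_nonneg (by positivity : 0 ≤ (L / q) ^ 2 / (1 + u ^ 2))]
    rw [show -Real.pi * x ^ 2 = -(Real.pi * x ^ 2) by ring, abs_neg, abs_of_nonneg (by positivity)]
    have hs : Real.sqrt (1 + u ^ 2) ≤ 1 + u ^ 2 := by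
      rw [Real.sqrt_le_left (by positivity)]; nlinarith [sq_nonneg u]
    calc Real.pi * x ^ 2 * ((L / q) ^ 2 / (1 + u ^ 2) * Real.sqrt (1 + u ^ 2))
        ≤ Real.pi * x ^ 2 * ((L / q) ^ 2 / (1 + u ^ 2) * (1 + u ^ 2)) := by gcongr
      _ = _ := by
        have : (1 + u ^ 2) ≠ 0 := by positivity
        field_simp
  have hE : ‖EE (bb L q u) x‖ ≤ 1 := by
    rw [norm_EE L hL q hq, Real.exp_le_one_iff]
    have : 0 ≤ Real.pi * (L / q) ^ 2 * x ^ 2 / (1 + u ^ 2) := by positivity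
    linarith
  by_cases h : ‖(-Real.pi / bb L q u * (x : ℂ) ^ 2 : ℂ)‖ ≤ 1
  · refine (Complex.norm_exp_sub_one_le h).trans (by linarith)
  · refine (norm_sub_le _ _).trans ?_
    rw [norm_one]; linarith

lemma EE_decay (L : ℝ) (hL : 0 < L) (q : ℕ) (hq : 0 < q) (u x : ℝ) (hx : 0 < |x|) :
    ‖EE (bb L q u) x‖ ≤ (1 + |u|) / (L / q * |x|) := by
  have hq' : (0:ℝ) < q := by exact_mod_cast hq
  set z := (L / q * |x|) / (1 + |u|) with hz
  have hz0 : 0 < z := by positivity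
  have h1 : (1 + |u|) / (L / q * |x|) = 1 / z := by rw [hz, one_div_div]
  rw [norm_EE L hL q hq, h1]
  have h2 : z ^ 2 ≤ Real.pi * (L / q) ^ 2 * x ^ 2 / (1 + u ^ 2) := by
    rw [hz, div_pow, mul_pow, sq_abs]
    calc (L / q) ^ 2 * x ^ 2 / (1 + |u|) ^ 2 ≤ (L / q) ^ 2 * x ^ 2 / (1 + u ^ 2) := by
          gcongr
          nlinarith [abs_nonneg u, sq_abs u]
      _ ≤ _ := by
          gcongr
          have : (1:ℝ) ≤ Real.pi := by linarith [Real.pi_gt_three]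
          have h3 : 0 ≤ (L / q) ^ 2 := by positivity
          nlinarith
  rw [Real.exp_neg, ← one_div]
  apply one_div_le_one_div_of_le hz0
  have h3 := Real.add_one_le_exp (Real.pi * (L / q) ^ 2 * x ^ 2 / (1 + u ^ 2))
  nlinarith [sq_nonneg (z - 1)]

/-- Dirichlet average -/
noncomputable def DN (N : ℕ) (η : ℝ) : ℂ := (N : ℂ)⁻¹ * ∑ j ∈ Finset.range N, ee (j * η)

lemma norm_DN (N : ℕ) (η : ℝ) : ‖DN N η‖ ≤ 1 := by
  unfold DN
  rw [norm_mul, norm_inv, Complex.norm_natCast]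
  rcases Nat.eq_zero_or_pos N with rfl | hN
  · simp
  · have : ‖∑ j ∈ Finset.range N, ee (j * η)‖ ≤ N := by
      refine (norm_sum_le _ _).trans ?_
      simp [norm_ee]
    rw [inv_mul_le_one₀ (by exact_mod_cast hN)]
    exact this

lemma norm_ee_sub_one (x : ℝ) : ‖ee x - 1‖ = 2 * |Real.sin (Real.pi * x)| := by
  unfold ee
  rw [show (2 * Real.pi * I * x : ℂ) = I * ((2 * Real.pi * x : ℝ) : ℂ) by push_cast; ring,
    Complex.norm_exp_I_mul_ofReal_sub_one, norm_mul, Real.norm_eq_abs, Real.norm_eq_abs, abs_two]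
  congr 3; ring

lemma ee_shift (j : ℕ) (η : ℝ) (l : ℤ) : ee (j * η) = ee (j * (η - l)) := by
  rw [show (j * η : ℝ) = j * (η - l) + ((j * l : ℤ) : ℝ) by push_cast; ring, ee_add, ee_int, mul_one]

lemma DN_sub_one (N : ℕ) (hN : 0 < N) (η : ℝ) (l : ℤ) : ‖DN N η - 1‖ ≤ 2 * Real.pi * (N * |η - l|) := by
  have hN' : (N : ℂ) ≠ 0 := by exact_mod_cast hN.ne'
  have : DN N η - 1 = (N : ℂ)⁻¹ * ∑ j ∈ Finset.range N, (ee (j * η) - 1) := by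
    unfold DN
    rw [Finset.sum_sub_distrib, mul_sub]; simp [hN']
  rw [this, norm_mul, norm_inv, Complex.norm_natCast]
  have h1 : ‖∑ j ∈ Finset.range N, (ee (j * η) - 1)‖ ≤ N * (2 * Real.pi * (N * |η - l|)) := by
    refine (norm_sum_le _ _).trans ?_
    refine (Finset.sum_le_card_nsmul _ _ (2 * Real.pi * (N * |η - l|)) ?_).trans (by simp)
    intro j hj
    rw [ee_shift j η l, norm_ee_sub_one]
    have : (j : ℝ) ≤ N := by exact_mod_cast (Finset.mem_range.1 hj).le
    calc 2 * |Real.sin (Real.pi * (j * (η - l)))| ≤ 2 * |Real.pi * (j * (η - l))| := by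
          exact mul_le_mul_of_nonneg_left Real.abs_sin_le_abs (by norm_num)
      _ = 2 * Real.pi * (j * |η - l|) := by
          rw [abs_mul, abs_mul, abs_of_pos Real.pi_pos, Nat.abs_cast]; ring
      _ ≤ _ := by gcongr
  rw [inv_mul_le_iff₀ (by exact_mod_cast hN)]
  exact h1

lemma DN_decay (N : ℕ) (hN : 0 < N) (η : ℝ) (l : ℤ) (h0 : 0 < |η - l|) (h1 : |η - l| ≤ 1 / 2) :
    ‖DN N η‖ ≤ 1 / (N * |η - l|) := by
  have hN' : (0 : ℝ) < N := by exact_mod_cast hN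
  have h2 : 4 * |η - l| ≤ ‖ee (η - l) - 1‖ := by
    rw [norm_ee_sub_one]
    have : 2 * |η - l| ≤ |Real.sin (Real.pi * (η - l))| := by
      have hab : |Real.sin (Real.pi * (η - l))| = |Real.sin (Real.pi * |η - l|)| := by
        rcases abs_cases (η - l) with ⟨h, _⟩ | ⟨h, _⟩
        · rw [h]
        · rw [h, mul_neg, Real.sin_neg, abs_neg]
      rw [hab]
      have h3 := Real.mul_le_sin (x := Real.pi * |η - l|) (by positivity) (by nlinarith [Real.pi_pos])
      refine le_trans (le_of_eq ?_) (h3.trans (le_abs_self _))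
      field_simp
    linarith
  have h3 : (ee (η - l) - 1) * ∑ j ∈ Finset.range N, ee (j * η) = ee (N * (η - l)) - 1 := by
    have : ∀ j : ℕ, ee (j * η) = ee (η - l) ^ j := by
      intro j
      rw [ee_shift j η l]; unfold ee; rw [← Complex.exp_nat_mul]; congr 1; push_cast; ring
    rw [← ee_shift]
    simp_rw [this]
    rw [mul_comm, geom_sum_mul]
  have h4 : ‖ee (η - l) - 1‖ * ‖∑ j ∈ Finset.range N, ee (j * η)‖ ≤ 2 := by
    rw [← norm_mul, h3]
    refine (norm_sub_le _ _).trans ?_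
    rw [norm_ee, norm_one]; norm_num
  have h5 : ‖∑ j ∈ Finset.range N, ee (j * η)‖ ≤ 1 / |η - l| := by
    rw [le_div_iff₀ h0]
    have := norm_nonneg (∑ j ∈ Finset.range N, ee (j * η))
    nlinarith
  unfold DN
  rw [norm_mul, norm_inv, Complex.norm_natCast]
  calc _ ≤ (N:ℝ)⁻¹ * (1 / |η - l|) := by gcongr
    _ = _ := by field_simp

lemma main_diff (L : ℝ) (hL : 0 < L) (q : ℕ) (hq : 0 < q) (u η : ℝ) (l : ℤ) (N : ℕ) (hN : 0 < N)
    (h1 : L / q ≤ N) (h2 : N ≤ 2 * (L / q)) (hd : |η - l| ≤ 1 / 2) :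
    ‖EE (bb L q u) (l - η) - DN N η‖ ≤ 26 * ((1 + |u|) * rho (N * |η - l|)) := by
  have hq' : (0:ℝ) < q := by exact_mod_cast hq
  have hN' : (0 : ℝ) < N := by exact_mod_cast hN
  have hu := abs_nonneg u
  set x := N * |η - l| with hx
  have hx0 : 0 ≤ x := by positivity
  have hr := rho_nonneg hx0
  rcases le_total x 1 with h | h
  · have a1 := EE_sub_one L hL q hq u (l - η)
    have a2 := DN_sub_one N hN η l
    have a3 := half_le_rho hx0 h
    have a4 : (L / q) ^ 2 * (l - η) ^ 2 ≤ x := by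
      calc (L / q) ^ 2 * (l - η) ^ 2 ≤ N ^ 2 * (l - η) ^ 2 := by gcongr
        _ = x ^ 2 := by rw [hx, mul_pow, sq_abs]; ring
        _ ≤ x := by nlinarith
    have a5 : ‖EE (bb L q u) (l - η) - DN N η‖ ≤ ‖EE (bb L q u) (l - η) - 1‖ + ‖DN N η - 1‖ := by
      rw [show EE (bb L q u) (l - η) - DN N η = (EE (bb L q u) (l - η) - 1) - (DN N η - 1) by ring]
      exact norm_sub_le _ _
    have a6 : Real.pi * (L / q) ^ 2 * (l - η) ^ 2 ≤ Real.pi * x := by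
      rw [mul_assoc]; gcongr
    have a7 : Real.pi * x ≤ 3.15 * x := by gcongr; exact Real.pi_lt_d2.le
    nlinarith
  · have hd0 : 0 < |η - l| := by
      rcases (abs_nonneg (η - l)).eq_or_lt with h0 | h0
      · rw [hx, ← h0] at h; norm_num at h
      · exact h0
    have a1 := EE_decay L hL q hq u (l - η) (by rwa [abs_sub_comm])
    have a2 := DN_decay N hN η l hd0 hd
    have a3 := inv_le_rho h
    rw [abs_sub_comm (l:ℝ) η] at a1
    have a4 : (1 + |u|) / (L / q * |η - l|) ≤ 2 * (1 + |u|) * (1 / x) := by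
      rw [hx, div_le_iff₀ (by positivity)]
      have : 2 * (1 + |u|) * (1 / (N * |η - l|)) * (L / q * |η - l|) = (1 + |u|) * (2 * (L / q) / N) := by
        field_simp
      rw [this]
      have : 1 ≤ 2 * (L / q) / N := by rwa [one_le_div hN']
      nlinarith
    have a5 := norm_sub_le (EE (bb L q u) (l - η)) (DN N η)
    have : 0 ≤ 1 / x := by positivity
    nlinarith

/-- constant -/
noncomputable def ZZ : ℝ := ∑' l : ℤ, 1 / (l : ℝ) ^ 2

lemma ZZ_nonneg : 0 ≤ ZZ := tsum_nonneg fun _ => by positivity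

lemma EE_tail (L : ℝ) (hL : 0 < L) (q : ℕ) (hq : 0 < q) (u η : ℝ) (l n : ℤ) (hd : |η - l| ≤ 1 / 2) (hn : n ≠ l) :
    ‖EE (bb L q u) (n - η)‖ ≤ 2 * (1 + u ^ 2) / (L / q) ^ 2 * (1 / ((n - l : ℤ) : ℝ) ^ 2) := by
  have hq' : (0:ℝ) < q := by exact_mod_cast hq
  rw [norm_EE L hL q hq]
  have h1 : (1:ℝ) ≤ |((n - l : ℤ) : ℝ)| := by
    have : 1 ≤ |n - l| := Int.one_le_abs (sub_ne_zero.2 hn)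
    exact_mod_cast this
  have h2 : |((n - l : ℤ) : ℝ)| / 2 ≤ |(n : ℝ) - η| := by
    have : |((n - l : ℤ) : ℝ)| ≤ |(n : ℝ) - η| + |η - l| := by
      push_cast
      exact abs_sub_le _ _ _
    linarith
  have h3 : ((n - l : ℤ) : ℝ) ^ 2 / 4 ≤ ((n : ℝ) - η) ^ 2 := by
    rw [← sq_abs, ← sq_abs ((n:ℝ) - η)]
    nlinarith
  have h4 : 0 < ((n - l : ℤ) : ℝ) ^ 2 := by rw [← sq_abs]; positivity
  set y := Real.pi * (L / q) ^ 2 * ((n : ℝ) - η) ^ 2 / (1 + u ^ 2) with hy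
  have h5 : (L / q) ^ 2 * ((n - l : ℤ) : ℝ) ^ 2 / (2 * (1 + u ^ 2)) ≤ y := by
    rw [hy, div_le_div_iff₀ (by positivity) (by positivity)]
    have : (L / q) ^ 2 * ((n - l : ℤ) : ℝ) ^ 2 ≤ 2 * (Real.pi * (L / q) ^ 2 * ((n : ℝ) - η) ^ 2) := by
      have a : 0 < (L / q) ^ 2 := by positivity
      calc (L / q) ^ 2 * ((n - l : ℤ) : ℝ) ^ 2 = (L / q) ^ 2 * (2 * 2 * (((n - l : ℤ) : ℝ) ^ 2 / 4)) := by ring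
        _ ≤ (L / q) ^ 2 * (2 * Real.pi * ((n : ℝ) - η) ^ 2) := by
          gcongr; linarith [Real.pi_gt_three]
        _ = _ := by ring
    nlinarith [sq_nonneg u]
  have h6 : 2 * (1 + u ^ 2) / (L / q) ^ 2 * (1 / ((n - l : ℤ) : ℝ) ^ 2) =
      1 / ((L / q) ^ 2 * ((n - l : ℤ) : ℝ) ^ 2 / (2 * (1 + u ^ 2))) := by
    field_simp
  rw [h6, Real.exp_neg, ← one_div]
  apply one_div_le_one_div_of_le (by positivity)
  linarith [Real.add_one_le_exp y]

/-- the dual theta series -/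
noncomputable def SS (L : ℝ) (a : ℤ) (q : ℕ) (u η : ℝ) : ℂ :=
  ∑' n : ℤ, gam a q n * EE (bb L q u) (n - η)

lemma SS_tail (L : ℝ) (hL : 0 < L) (a : ℤ) (q : ℕ) (hq : 0 < q) (hc : IsCoprime a (q : ℤ)) (u η : ℝ) (l : ℤ)
    (hd : |η - l| ≤ 1 / 2) :
    ‖SS L a q u η - gam a q l * EE (bb L q u) (l - η)‖ ≤
      Real.sqrt 2 / Real.sqrt q * (2 * (1 + u ^ 2) / (L / q) ^ 2 * ZZ) := by
  have hq' : (0:ℝ) < q := by exact_mod_cast hq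
  have hZ : HasSum (fun n : ℤ => 1 / ((n - l : ℤ) : ℝ) ^ 2) ZZ := by
    have h : HasSum (fun m : ℤ => 1 / (m : ℝ) ^ 2) ZZ :=
      (Real.summable_one_div_int_pow.2 (by norm_num : 1 < 2)).hasSum
    exact ((Equiv.subRight l).hasSum_iff (f := fun m : ℤ => 1 / (m : ℝ) ^ 2) (a := ZZ)).2 h
  have hZ2 := hZ.mul_left (Real.sqrt 2 / Real.sqrt q * (2 * (1 + u ^ 2) / (L / q) ^ 2))
  have hb : ∀ n : ℤ, ‖if n = l then (0:ℂ) else gam a q n * EE (bb L q u) (n - η)‖ ≤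
      Real.sqrt 2 / Real.sqrt q * (2 * (1 + u ^ 2) / (L / q) ^ 2) * (1 / ((n - l : ℤ) : ℝ) ^ 2) := by
    intro n
    split_ifs with h
    · simp; positivity
    · rw [norm_mul, mul_assoc]
      exact mul_le_mul (norm_gam a q hq n hc) (EE_tail L hL q hq u η l n hd h) (norm_nonneg _) (by positivity)
  have hs : Summable fun n : ℤ => gam a q n * EE (bb L q u) (n - η) := by
    have h1 : Summable (fun n : ℤ => if n = l then (0:ℂ) else gam a q n * EE (bb L q u) (n - η)) :=
      Summable.of_norm_bounded hZ2.summable hb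
    have h2 : Summable (fun n : ℤ => if n = l then gam a q l * EE (bb L q u) (l - η) else 0) :=
      (hasSum_ite_eq l _).summable
    refine (h1.add h2).congr fun n => ?_
    split_ifs with h
    · simp [h]
    · simp
  unfold SS
  rw [hs.tsum_eq_add_tsum_ite l, add_sub_cancel_left]
  refine (tsum_of_norm_bounded hZ2 hb).trans (le_of_eq ?_)
  ring

/-- constant -/
noncomputable def C0 : ℝ := 18 * ZZ + 26

lemma SS_bounds (L : ℝ) (hL : 0 < L) (a : ℤ) (q : ℕ) (hq : 0 < q) (hc : IsCoprime a (q : ℤ)) (u η : ℝ) (l : ℤ)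
    (hd : |η - l| ≤ 1 / 2) (N : ℕ) (hN : 0 < N) (h1 : L / q ≤ N) (h2 : N ≤ 2 * (L / q)) (hM : 1 ≤ L / q)
    (hu : |u| ≤ 2 * (L / q)) :
    ‖SS L a q u η‖ ≤ Real.sqrt 2 * C0 / Real.sqrt q ∧ ‖gam a q l * DN N η‖ ≤ Real.sqrt 2 * C0 / Real.sqrt q ∧
    ‖SS L a q u η - gam a q l * DN N η‖ ≤ Real.sqrt 2 * C0 / Real.sqrt q * ((1 + |u|) * (1 / N + rho (N * |η - l|))) := by
  have hq' : (0:ℝ) < q := by exact_mod_cast hq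
  have hN' : (0 : ℝ) < N := by exact_mod_cast hN
  have hZ := ZZ_nonneg
  have hu0 := abs_nonneg u
  set M := L / q with hMd
  have hM0 : 0 < M := by linarith
  have ht := SS_tail L hL a q hq hc u η l hd
  rw [← hMd] at ht
  have hg := norm_gam a q hq l hc
  set s := Real.sqrt 2 / Real.sqrt q with hs
  have hs0 : 0 ≤ s := by positivity
  have hsC : Real.sqrt 2 * C0 / Real.sqrt q = s * C0 := by rw [hs]; ring
  have b1 : (1 + u ^ 2) / M ^ 2 ≤ (1 + |u|) * (6 / N) := by
    have : (1 + |u|) * (3 / M) ≤ (1 + |u|) * (6 / N) := by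
      gcongr 1
      rw [div_le_div_iff₀ hM0 hN']; linarith
    refine le_trans ?_ this
    rw [← mul_div_assoc, div_le_div_iff₀ (by positivity) hM0]
    have : (1 + u ^ 2) ≤ (1 + |u|) * (3 * M) := by nlinarith [sq_abs u]
    nlinarith
  have b2 : (1 + u ^ 2) / M ^ 2 ≤ 9 := by
    rw [div_le_iff₀ (by positivity)]
    nlinarith [sq_abs u]
  have hE : ‖EE (bb L q u) (l - η)‖ ≤ 1 := by
    rw [norm_EE L hL q hq, Real.exp_le_one_iff]
    have : 0 ≤ Real.pi * (L / q) ^ 2 * ((l : ℝ) - η) ^ 2 / (1 + u ^ 2) := by positivity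
    linarith
  have hmd := main_diff L hL q hq u η l N hN h1 h2 hd
  have hr := rho_nonneg (x := N * |η - l|) (by positivity)
  rw [hsC]
  refine ⟨?_, ?_, ?_⟩
  · have h3 : ‖SS L a q u η‖ ≤ ‖SS L a q u η - gam a q l * EE (bb L q u) (l - η)‖ + ‖gam a q l * EE (bb L q u) (l - η)‖ := by
      simpa using norm_add_le (SS L a q u η - gam a q l * EE (bb L q u) (l - η)) (gam a q l * EE (bb L q u) (l - η))
    have h4 : ‖gam a q l * EE (bb L q u) (l - η)‖ ≤ s := by
      rw [norm_mul]; nlinarith [norm_nonneg (gam a q l)]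
    have h5 : s * (2 * (1 + u ^ 2) / M ^ 2 * ZZ) ≤ s * (2 * 9 * ZZ) := by
      rw [mul_div_assoc]; gcongr
    unfold C0
    nlinarith
  · rw [norm_mul]
    have := norm_DN N η
    have h3 : ‖gam a q l‖ * ‖DN N η‖ ≤ s * 1 := mul_le_mul hg this (norm_nonneg _) hs0
    have : 1 ≤ C0 := by unfold C0; linarith
    nlinarith
  · have h3 : ‖SS L a q u η - gam a q l * DN N η‖ ≤ ‖SS L a q u η - gam a q l * EE (bb L q u) (l - η)‖ + ‖gam a q l * (EE (bb L q u) (l - η) - DN N η)‖ := by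
      have := norm_add_le (SS L a q u η - gam a q l * EE (bb L q u) (l - η)) (gam a q l * (EE (bb L q u) (l - η) - DN N η))
      rwa [show (SS L a q u η - gam a q l * EE (bb L q u) (l - η)) + (gam a q l * (EE (bb L q u) (l - η) - DN N η)) = SS L a q u η - gam a q l * DN N η by ring] at this
    have h4 : ‖gam a q l * (EE (bb L q u) (l - η) - DN N η)‖ ≤ s * (26 * ((1 + |u|) * rho (N * |η - l|))) := by
      rw [norm_mul]
      exact mul_le_mul hg hmd (norm_nonneg _) hs0
    have h5 : s * (2 * (1 + u ^ 2) / M ^ 2 * ZZ) ≤ s * (2 * ((1 + |u|) * (6 / N)) * ZZ) := by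
      rw [mul_div_assoc]; gcongr
    have h6 : s * (2 * ((1 + |u|) * (6 / N)) * ZZ) + s * (26 * ((1 + |u|) * rho (N * |η - l|))) ≤
        s * C0 * ((1 + |u|) * (1 / N + rho (N * |η - l|))) := by
      have : s * C0 * ((1 + |u|) * (1 / N + rho (N * |η - l|))) - (s * (2 * ((1 + |u|) * (6 / N)) * ZZ) + s * (26 * ((1 + |u|) * rho (N * |η - l|)))) =
        s * (1 + |u|) * ((6 * ZZ + 26) * (1 / N) + 18 * ZZ * rho (N * |η - l|)) := by unfold C0; ring
      have h7 : 0 ≤ s * (1 + |u|) * ((6 * ZZ + 26) * (1 / N) + 18 * ZZ * rho (N * |η - l|)) := by positivity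
      linarith
    linarith

end TH

namespace TH
open Complex

/-- normalizing factor -/
noncomputable def cc (L : ℝ) (q : ℕ) (u : ℝ) : ℂ := q / (L * bb L q u ^ (1 / 2 : ℂ))

lemma norm_cc (L : ℝ) (hL : 0 < L) (q : ℕ) (hq : 0 < q) (u : ℝ) :
    ‖cc L q u‖ = (1 + u ^ 2) ^ (-(1 / 4) : ℝ) := by
  have hq' : (0:ℝ) < q := by exact_mod_cast hq
  have h1 : ‖bb L q u ^ (1 / 2 : ℂ)‖ = ‖bb L q u‖ ^ (1 / 2 : ℝ) := by
    rw [← Complex.norm_cpow_real]; norm_num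
  have h2 : ‖bb L q u‖ = q ^ 2 / L ^ 2 * Real.sqrt (1 + u ^ 2) := by
    have : (1 - I * u : ℂ) = 1 + I * ((-u : ℝ) : ℂ) := by push_cast; ring
    rw [bb_eq, norm_mul, this, norm_one_add, Complex.norm_real, Real.norm_of_nonneg (by positivity)]
    simp
  unfold cc
  rw [norm_div, norm_mul, h1, h2, Complex.norm_natCast, Complex.norm_real, Real.norm_of_nonneg hL.le,
    Real.mul_rpow (by positivity) (by positivity), Real.sqrt_eq_rpow, ← Real.rpow_mul (by positivity),
    ← div_pow, ← Real.rpow_natCast (q / L), ← Real.rpow_mul (by positivity), Real.rpow_neg (by positivity)]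
  norm_num
  field_simp

/-- one dimensional symbol -/
noncomputable def Ph (L : ℝ) (a : ℤ) (q : ℕ) (u ξ : ℝ) : ℂ := (L : ℂ)⁻¹ * ∑' m : ℤ, kap L a q u m * ee (m * ξ)

lemma Ph_eq (L : ℝ) (hL : 0 < L) (a : ℤ) (q : ℕ) (hq : 0 < q) (u ξ : ℝ) :
    Ph L a q u ξ = cc L q u * SS L a q u (q * ξ) := by
  unfold Ph
  rw [theta L hL a q hq, ← mul_assoc]
  unfold cc SS EE
  congr 1
  · field_simp
  · refine tsum_congr fun n => ?_
    congr 2; push_cast; ring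

/-- scale -/
def NN (q k : ℕ) : ℕ := 2 ^ (k - Nat.log 2 q)

lemma NN_bounds (q k : ℕ) (hq : 0 < q) (h : q ≤ 2 ^ k) :
    0 < NN q k ∧ (2 ^ k : ℝ) / q ≤ NN q k ∧ (NN q k : ℝ) ≤ 2 * (2 ^ k / q) := by
  have hq' : (0:ℝ) < q := by exact_mod_cast hq
  have h1 : 2 ^ Nat.log 2 q ≤ q := Nat.pow_log_le_self 2 hq.ne'
  have h2 : q < 2 ^ (Nat.log 2 q + 1) := Nat.lt_pow_succ_log_self (by norm_num) q
  have h3 : Nat.log 2 q ≤ k := by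
    by_contra! hc
    have := Nat.pow_lt_pow_right (a := 2) (by norm_num) hc
    omega
  have h4 : (2:ℝ) ^ (k - Nat.log 2 q) * 2 ^ (Nat.log 2 q) = 2 ^ k := by
    rw [← pow_add]; congr 1; omega
  have h1' : (2:ℝ) ^ Nat.log 2 q ≤ q := by exact_mod_cast h1
  have h2' : (q:ℝ) ≤ 2 ^ Nat.log 2 q * 2 := by rw [← pow_succ]; exact_mod_cast h2.le
  have h5 : (0:ℝ) < 2 ^ (k - Nat.log 2 q) := by positivity
  refine ⟨by unfold NN; positivity, ?_, ?_⟩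
  · unfold NN; push_cast
    rw [div_le_iff₀ hq', ← h4]; gcongr
  · unfold NN; push_cast
    rw [← mul_div_assoc, le_div_iff₀ hq', ← h4]
    nlinarith

lemma norm_prod_sub {ι : Type*} (s : Finset ι) (x y : ι → ℂ) (A : ℝ) (ε : ι → ℝ) (hA : 0 ≤ A)
    (hx : ∀ i ∈ s, ‖x i‖ ≤ A) (hy : ∀ i ∈ s, ‖y i‖ ≤ A) (hxy : ∀ i ∈ s, ‖x i - y i‖ ≤ A * ε i) :
    ‖∏ i ∈ s, x i - ∏ i ∈ s, y i‖ ≤ A ^ s.card * ∑ i ∈ s, ε i := by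
  classical
  induction s using Finset.induction_on with
  | empty => simp
  | insert i s hi ih =>
    rw [Finset.prod_insert hi, Finset.prod_insert hi, Finset.sum_insert hi, Finset.card_insert_of_notMem hi]
    have h1 := ih (fun j hj => hx j (Finset.mem_insert_of_mem hj)) (fun j hj => hy j (Finset.mem_insert_of_mem hj))
      (fun j hj => hxy j (Finset.mem_insert_of_mem hj))
    have h2 : ‖∏ j ∈ s, x j‖ ≤ A ^ s.card := by
      rw [norm_prod]
      exact (Finset.prod_le_prod (fun _ _ => norm_nonneg _) (fun j hj => hx j (Finset.mem_insert_of_mem hj))).trans (by simp)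
    have h3 := hxy i (Finset.mem_insert_self i s)
    have h4 := hy i (Finset.mem_insert_self i s)
    have h5 : x i * ∏ j ∈ s, x j - y i * ∏ j ∈ s, y j = (x i - y i) * ∏ j ∈ s, x j + y i * (∏ j ∈ s, x j - ∏ j ∈ s, y j) := by ring
    rw [h5]
    refine (norm_add_le _ _).trans ?_
    rw [norm_mul, norm_mul]
    calc _ ≤ (A * ε i) * A ^ s.card + A * (A ^ s.card * ∑ j ∈ s, ε j) :=
          add_le_add (mul_le_mul h3 h2 (norm_nonneg _) ((norm_nonneg _).trans h3)) (mul_le_mul h4 h1 (norm_nonneg _) hA)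
      _ = _ := by ring

variable {d : ℕ}

/-- the multi-dimensional Gauss sum multiplier -/
noncomputable def Gm (a : ℤ) (q : ℕ) (ξ : Fin d → ℝ) : ℂ := ∏ i, gam a q (round (q * ξ i))

/-- full symbol -/
noncomputable def PH (k : ℕ) (a : ℤ) (q : ℕ) (u : ℝ) (ξ : Fin d → ℝ) : ℂ := ∏ i, Ph (2 ^ k) a q u (ξ i)

/-- main term symbol -/
noncomputable def MN (k : ℕ) (a : ℤ) (q : ℕ) (u : ℝ) (ξ : Fin d → ℝ) : ℂ :=
  cc (2 ^ k) q u ^ d * (Gm a q ξ * ∏ i, DN (NN q k) (q * ξ i))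

/-- constant -/
noncomputable def C3 (d : ℕ) : ℝ := 12 * d ^ 2 * (2 * C0 ^ 2) ^ d

lemma C0_pos : 0 < C0 := by unfold C0; linarith [ZZ_nonneg]

lemma diff_bound (k : ℕ) (a : ℤ) (q : ℕ) (hq : 0 < q) (hc : IsCoprime a (q : ℤ)) (u : ℝ) (ξ : Fin d → ℝ)
    (hk : q ≤ 2 ^ k) (hu : |u| ≤ 2 * (2 ^ k / q)) :
    ‖PH k a q u ξ - MN k a q u ξ‖ ^ 2 ≤
      ((1 + u ^ 2) ^ (-(1 / 4) : ℝ)) ^ (2 * d) * ((2 * C0 ^ 2) ^ d * ((q:ℝ) ^ d)⁻¹) * (1 + |u|) ^ 2 *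
        (2 * d * ∑ i, (1 / (NN q k : ℝ) ^ 2 + rho (NN q k * |q * ξ i - round (q * ξ i)|) ^ 2)) := by
  have hq' : (0:ℝ) < q := by exact_mod_cast hq
  obtain ⟨hN, h1, h2⟩ := NN_bounds q k hq hk
  have hL : (0:ℝ) < 2 ^ k := by positivity
  have hM : 1 ≤ (2 ^ k : ℝ) / q := by rw [one_le_div hq']; exact_mod_cast hk
  have hC := C0_pos
  set A := (1 + u ^ 2) ^ (-(1 / 4) : ℝ) * (Real.sqrt 2 * C0 / Real.sqrt q) with hA
  have hcc := norm_cc (2 ^ k) hL q hq u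
  have hA0 : 0 ≤ A := by positivity
  have hS := fun i => SS_bounds (2 ^ k) hL a q hq hc u (q * ξ i) (round (q * ξ i)) (abs_sub_round _) (NN q k) hN h1 h2 hM hu
  have e1 : MN k a q u ξ = ∏ i, cc (2 ^ k) q u * (gam a q (round (q * ξ i)) * DN (NN q k) (q * ξ i)) := by
    unfold MN Gm
    rw [Finset.prod_mul_distrib, Finset.prod_mul_distrib]; simp
  have e2 : PH k a q u ξ = ∏ i, cc (2 ^ k) q u * SS (2 ^ k) a q u (q * ξ i) := by
    unfold PH; exact Finset.prod_congr rfl fun i _ => Ph_eq (2 ^ k) hL a q hq u (ξ i)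
  have key := norm_prod_sub Finset.univ (fun i => cc (2 ^ k) q u * SS (2 ^ k) a q u (q * ξ i))
    (fun i => cc (2 ^ k) q u * (gam a q (round (q * ξ i)) * DN (NN q k) (q * ξ i))) A
    (fun i => (1 + |u|) * (1 / NN q k + rho (NN q k * |q * ξ i - round (q * ξ i)|))) hA0
    (fun i _ => by rw [norm_mul, hcc, hA]; exact mul_le_mul_of_nonneg_left (hS i).1 (by positivity))
    (fun i _ => by rw [norm_mul, hcc, hA]; exact mul_le_mul_of_nonneg_left (hS i).2.1 (by positivity))
    (fun i _ => by
      rw [← mul_sub, norm_mul, hcc, hA, mul_assoc]; exact mul_le_mul_of_nonneg_left (hS i).2.2 (by positivity))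
  rw [← e1, ← e2, Finset.card_univ, Fintype.card_fin, ← Finset.mul_sum] at key
  refine (pow_le_pow_left₀ (norm_nonneg _) key 2).trans ?_
  rw [mul_pow (A ^ d), mul_pow (1 + |u|), ← pow_mul, mul_comm d 2, ← mul_assoc]
  have hA2 : A ^ (2 * d) = ((1 + u ^ 2) ^ (-(1 / 4) : ℝ)) ^ (2 * d) * ((2 * C0 ^ 2) ^ d * ((q:ℝ) ^ d)⁻¹) := by
    rw [hA, mul_pow]
    congr 1
    rw [pow_mul, div_pow, mul_pow, Real.sq_sqrt (by norm_num), Real.sq_sqrt hq'.le, div_pow, div_eq_mul_inv]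
  rw [hA2]
  refine mul_le_mul_of_nonneg_left ?_ (by positivity)
  refine (sq_sum_le_card_mul_sum_sq).trans ?_
  rw [Finset.card_univ, Fintype.card_fin, mul_comm 2 (d:ℝ), mul_assoc (d:ℝ) 2]
  refine mul_le_mul_of_nonneg_left ?_ (by positivity)
  rw [Finset.mul_sum]
  refine Finset.sum_le_sum fun i _ => ?_
  have := sq_nonneg (1 / (NN q k : ℝ) - rho (NN q k * |q * ξ i - round (q * ξ i)|))
  rw [← one_div_pow]
  nlinarith

lemma sum_shift (q K : ℕ) (g : ℝ → ℝ) (hg : ∀ x, 0 ≤ g x) :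
    ∑ k ∈ (Finset.range K).filter (fun k => Nat.log 2 q ≤ k), g (2 ^ (k - Nat.log 2 q)) ≤ ∑ j ∈ Finset.range K, g (2 ^ j) := by
  have hinj : Set.InjOn (fun k => k - Nat.log 2 q) ((Finset.range K).filter (fun k => Nat.log 2 q ≤ k) : Finset ℕ) := by
    intro x hx y hy h
    simp only [Finset.coe_filter, Finset.mem_range, Set.mem_ofPred_eq] at hx hy h
    omega
  rw [← Finset.sum_image (f := fun j => g (2 ^ j)) hinj]
  apply Finset.sum_le_sum_of_subset_of_nonneg
  · intro j hj
    simp only [Finset.mem_image, Finset.mem_filter, Finset.mem_range] at hj ⊢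
    omega
  · intros; exact hg _

lemma sum_D (hd : 5 ≤ d) (a : ℤ) (q : ℕ) (hq : 0 < q) (hc : IsCoprime a (q : ℤ)) (u : ℝ) (ξ : Fin d → ℝ) (K : ℕ) :
    ∑ k ∈ (Finset.range K).filter (fun k => q ≤ 2 ^ k ∧ |u| ≤ 2 * ((2:ℝ) ^ k / q)),
      ‖PH k a q u ξ - MN k a q u ξ‖ ^ 2 ≤ C3 d * (1 + u ^ 2) ^ (-(3 / 2) : ℝ) * ((q:ℝ) ^ 5)⁻¹ := by
  have hq' : (1:ℝ) ≤ q := by exact_mod_cast hq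
  have hC := C0_pos
  set W := ((1 + u ^ 2) ^ (-(1 / 4) : ℝ)) ^ (2 * d) * ((2 * C0 ^ 2) ^ d * ((q:ℝ) ^ d)⁻¹) * (1 + |u|) ^ 2 with hW
  have hW0 : 0 ≤ W := by positivity
  have s1 : ∑ k ∈ (Finset.range K).filter (fun k => Nat.log 2 q ≤ k), 1 / ((2:ℝ) ^ (k - Nat.log 2 q)) ^ 2 ≤ 4 / 3 := by
    refine (sum_shift q K (fun x => 1 / x ^ 2) (fun x => by positivity)).trans ?_
    have : ∀ K : ℕ, ∑ j ∈ Finset.range K, 1 / ((2:ℝ) ^ j) ^ 2 = 4 / 3 - 4 / 3 * (1 / (2 ^ K) ^ 2) := by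
      intro K
      induction K with
      | zero => simp
      | succ K ih => rw [Finset.sum_range_succ, ih, pow_succ]; field_simp; ring
    rw [this]
    have : 0 ≤ 4 / 3 * (1 / ((2:ℝ) ^ K) ^ 2) := by positivity
    linarith
  have s2 : ∀ i, ∑ k ∈ (Finset.range K).filter (fun k => Nat.log 2 q ≤ k),
      rho ((2:ℝ) ^ (k - Nat.log 2 q) * |q * ξ i - round (q * ξ i)|) ^ 2 ≤ 4 / 3 := by
    intro i
    exact (sum_shift q K (fun x => rho (x * |q * ξ i - round (q * ξ i)|) ^ 2) (fun x => by positivity)).trans (sum_rho _ _)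
  calc _ ≤ ∑ k ∈ (Finset.range K).filter (fun k => q ≤ 2 ^ k ∧ |u| ≤ 2 * ((2:ℝ) ^ k / q)),
        W * (2 * d * ∑ i, (1 / (NN q k : ℝ) ^ 2 + rho (NN q k * |q * ξ i - round (q * ξ i)|) ^ 2)) := by
        apply Finset.sum_le_sum
        intro k hk
        simp only [Finset.mem_filter] at hk
        exact diff_bound k a q hq hc u ξ hk.2.1 hk.2.2
    _ ≤ ∑ k ∈ (Finset.range K).filter (fun k => Nat.log 2 q ≤ k),
        W * (2 * d * ∑ i, (1 / (NN q k : ℝ) ^ 2 + rho (NN q k * |q * ξ i - round (q * ξ i)|) ^ 2)) := by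
        apply Finset.sum_le_sum_of_subset_of_nonneg
        · intro k hk
          simp only [Finset.mem_filter] at hk ⊢
          refine ⟨hk.1, ?_⟩
          have := Nat.log_mono_right (b := 2) hk.2.1
          rwa [Nat.log_pow (by norm_num)] at this
        · intros; positivity
    _ = W * (2 * d * ∑ i, (∑ k ∈ (Finset.range K).filter (fun k => Nat.log 2 q ≤ k), 1 / ((2:ℝ) ^ (k - Nat.log 2 q)) ^ 2 +
          ∑ k ∈ (Finset.range K).filter (fun k => Nat.log 2 q ≤ k), rho ((2:ℝ) ^ (k - Nat.log 2 q) * |q * ξ i - round (q * ξ i)|) ^ 2)) := by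
        rw [← Finset.mul_sum, ← Finset.mul_sum, Finset.sum_comm]
        simp_rw [← Finset.sum_add_distrib]
        unfold NN; push_cast; rfl
    _ ≤ W * (2 * d * ∑ i : Fin d, (4 / 3 + 4 / 3)) := by
        gcongr with i
        exact s2 i
    _ ≤ 6 * d ^ 2 * W := by
        rw [Finset.sum_const, Finset.card_univ, Fintype.card_fin, nsmul_eq_mul]
        have : 0 ≤ (d:ℝ) ^ 2 * W := by positivity
        nlinarith
    _ ≤ _ := by
        have w1 : ((1 + u ^ 2) ^ (-(1 / 4) : ℝ)) ^ (2 * d) ≤ (1 + u ^ 2) ^ (-(5 / 2) : ℝ) := by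
          rw [← Real.rpow_natCast, ← Real.rpow_mul (by positivity)]
          apply Real.rpow_le_rpow_of_exponent_le (by nlinarith [sq_nonneg u])
          have : (5:ℝ) ≤ d := by exact_mod_cast hd
          push_cast; linarith
        have w2 : (1 + |u|) ^ 2 ≤ 2 * (1 + u ^ 2) := by nlinarith [sq_abs u, sq_nonneg (1 - |u|)]
        have w3 : ((q:ℝ) ^ d)⁻¹ ≤ ((q:ℝ) ^ 5)⁻¹ := by
          gcongr
        have w4 : (1 + u ^ 2) ^ (-(5 / 2) : ℝ) * (1 + u ^ 2) = (1 + u ^ 2) ^ (-(3 / 2) : ℝ) := by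
          rw [← Real.rpow_add_one (by positivity)]; norm_num
        calc 6 * d ^ 2 * W ≤ 6 * d ^ 2 * ((1 + u ^ 2) ^ (-(5 / 2) : ℝ) * ((2 * C0 ^ 2) ^ d * ((q:ℝ) ^ 5)⁻¹) * (2 * (1 + u ^ 2))) := by
              rw [hW]; gcongr
          _ = 12 * d ^ 2 * (2 * C0 ^ 2) ^ d * ((1 + u ^ 2) ^ (-(5 / 2) : ℝ) * (1 + u ^ 2)) * ((q:ℝ) ^ 5)⁻¹ := by ring
          _ = _ := by rw [w4, C3]

end TH

namespace FR
open MeasureTheory TH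

/-- Lebesgue measure on the unit interval -/
noncomputable def nu : Measure ℝ := volume.restrict (Set.Ioc 0 1)

instance instProbNu : IsProbabilityMeasure nu := ⟨by simp [nu]⟩

/-- Lebesgue measure on the unit cube -/
noncomputable def mu (d : ℕ) : Measure (Fin d → ℝ) := Measure.pi fun _ => nu

instance instProbMu (d : ℕ) : IsProbabilityMeasure (mu d) := by unfold mu; infer_instance

variable {d : ℕ}

/-- characters -/
noncomputable def ch (n : Fin d → ℤ) (ξ : Fin d → ℝ) : ℂ := ∏ i, ee (n i * ξ i)

lemma continuous_ee : Continuous ee := by unfold ee; fun_prop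

lemma continuous_ch (n : Fin d → ℤ) : Continuous (ch n) := by
  unfold ch
  refine continuous_finsetProd _ fun i _ => continuous_ee.comp (by fun_prop)

lemma norm_ch (n : Fin d → ℤ) (ξ : Fin d → ℝ) : ‖ch n ξ‖ = 1 := by
  simp [ch, norm_ee]

lemma ch_add (m n : Fin d → ℤ) (ξ : Fin d → ℝ) : ch (m + n) ξ = ch m ξ * ch n ξ := by
  unfold ch
  rw [← Finset.prod_mul_distrib]
  refine Finset.prod_congr rfl fun i _ => ?_
  rw [← ee_add]; congr 1; simp; ring

lemma conj_ee (x : ℝ) : (starRingEnd ℂ) (ee x) = ee (-x) := by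
  unfold ee; rw [← Complex.exp_conj]; congr 1; simp [Complex.conj_ofNat]

lemma conj_ch (n : Fin d → ℤ) (ξ : Fin d → ℝ) : (starRingEnd ℂ) (ch n ξ) = ch (-n) ξ := by
  unfold ch; rw [map_prod]
  refine Finset.prod_congr rfl fun i _ => ?_
  rw [conj_ee]; congr 1; simp

lemma integral_ee (m : ℤ) : ∫ x, ee (m * x) ∂nu = if m = 0 then 1 else 0 := by
  unfold nu
  rw [← intervalIntegral.integral_of_le zero_le_one]
  split_ifs with h
  · subst h; simp [ee]
  · have h0 : (2 * Real.pi * Complex.I * m : ℂ) ≠ 0 := by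
      simp [h, Real.pi_ne_zero]
    have := integral_exp_mul_complex (a := 0) (b := 1) h0
    have e1 : ∀ x : ℝ, ee (m * x) = Complex.exp (2 * Real.pi * Complex.I * m * x) := by
      intro x; unfold ee; congr 1; push_cast; ring
    simp_rw [e1]
    rw [this]
    have h2 := ee_int m
    unfold ee at h2
    push_cast at h2
    simp [h2]

lemma integral_ch (n : Fin d → ℤ) : ∫ ξ, ch n ξ ∂(mu d) = if n = 0 then 1 else 0 := by
  unfold ch mu
  rw [integral_fintype_prod_eq_prod (fun i (x : ℝ) => ee (n i * x))]
  simp_rw [integral_ee]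
  split_ifs with h
  · subst h; simp
  · obtain ⟨i, hi⟩ := Function.ne_iff.mp h
    exact Finset.prod_eq_zero (Finset.mem_univ i) (by simpa using hi)

/-- Fourier coefficients -/
noncomputable def cf (h : (Fin d → ℝ) → ℂ) (n : Fin d → ℤ) : ℂ := ∫ ξ, ch (-n) ξ * h ξ ∂(mu d)

lemma memLp_ch (n : Fin d → ℤ) : MemLp (ch n) 2 (mu d) :=
  MemLp.of_bound (continuous_ch n).aestronglyMeasurable 1 (by simp [norm_ch])

lemma inner_toLp (f g : (Fin d → ℝ) → ℂ) (hf : MemLp f 2 (mu d)) (hg : MemLp g 2 (mu d)) :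
    inner ℂ (hf.toLp f) (hg.toLp g) = ∫ ξ, (starRingEnd ℂ) (f ξ) * g ξ ∂(mu d) := by
  rw [L2.inner_def]
  refine integral_congr_ae ?_
  filter_upwards [hf.coeFn_toLp, hg.coeFn_toLp] with x h1 h2
  rw [h1, h2]; simp [RCLike.inner_apply, mul_comm]

lemma orth : Orthonormal ℂ fun n : Fin d → ℤ => (memLp_ch n).toLp (ch n) := by
  rw [orthonormal_iff_ite]
  intro m n
  rw [inner_toLp]
  simp_rw [conj_ch, ← ch_add]
  rw [integral_ch]
  congr 1
  rw [neg_add_eq_zero]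

lemma norm_toLp_sq (f : (Fin d → ℝ) → ℂ) (hf : MemLp f 2 (mu d)) :
    ‖hf.toLp f‖ₑ ^ 2 = ∫⁻ ξ, ‖f ξ‖ₑ ^ 2 ∂(mu d) := by
  rw [Lp.enorm_toLp, eLpNorm_eq_lintegral_rpow_enorm_toReal (by simp) (by simp)]
  rw [← ENNReal.rpow_natCast, ← ENNReal.rpow_mul]
  simp

lemma bessel (h : (Fin d → ℝ) → ℂ) (hh : MemLp h 2 (mu d)) :
    ∑' n, ‖cf h n‖ₑ ^ 2 ≤ ∫⁻ ξ, ‖h ξ‖ₑ ^ 2 ∂(mu d) := by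
  rw [← norm_toLp_sq h hh, ENNReal.tsum_eq_iSup_sum]
  refine iSup_le fun s => ?_
  have := orth.sum_inner_products_le (hh.toLp h) (s := s)
  simp_rw [inner_toLp, conj_ch] at this
  have e : ∀ x : ℂ, ‖x‖ₑ ^ 2 = ENNReal.ofReal (‖x‖ ^ 2) := by
    intro x; rw [ENNReal.ofReal_pow (norm_nonneg _), ofReal_norm]
  have e2 : ‖hh.toLp h‖ₑ ^ 2 = ENNReal.ofReal (‖hh.toLp h‖ ^ 2) := by
    rw [ENNReal.ofReal_pow (norm_nonneg _), ofReal_norm]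
  simp_rw [e]
  rw [e2, ← ENNReal.ofReal_sum_of_nonneg (fun _ _ => by positivity)]
  exact ENNReal.ofReal_le_ofReal this

/-- trigonometric polynomial with coefficients f on S -/
noncomputable def FF (S : Finset (Fin d → ℤ)) (f : (Fin d → ℤ) → ℂ) (ξ : Fin d → ℝ) : ℂ :=
  ∑ n ∈ S, f n * ch n ξ

lemma continuous_FF (S : Finset (Fin d → ℤ)) (f : (Fin d → ℤ) → ℂ) : Continuous (FF S f) := by
  unfold FF
  exact continuous_finsetSum _ fun n _ => continuous_const.mul (continuous_ch n)

lemma norm_FF (S : Finset (Fin d → ℤ)) (f : (Fin d → ℤ) → ℂ) (ξ) : ‖FF S f ξ‖ ≤ ∑ n ∈ S, ‖f n‖ := by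
  unfold FF
  refine (norm_sum_le _ _).trans (Finset.sum_le_sum fun n _ => ?_)
  rw [norm_mul, norm_ch, mul_one]

lemma memLp_FF (S : Finset (Fin d → ℤ)) (f : (Fin d → ℤ) → ℂ) : MemLp (FF S f) 2 (mu d) :=
  MemLp.of_bound (continuous_FF S f).aestronglyMeasurable (∑ n ∈ S, ‖f n‖)
    (Filter.Eventually.of_forall fun ξ => norm_FF S f ξ)

lemma parseval (S : Finset (Fin d → ℤ)) (f : (Fin d → ℤ) → ℂ) :
    ∫⁻ ξ, ‖FF S f ξ‖ₑ ^ 2 ∂(mu d) = ∑ n ∈ S, ‖f n‖ₑ ^ 2 := by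
  rw [← norm_toLp_sq _ (memLp_FF S f)]
  have e : (memLp_FF S f).toLp (FF S f) = ∑ n ∈ S, f n • (memLp_ch n).toLp (ch n) := by
    refine Lp.ext ?_
    have h1 : ∀ n ∈ S, (f n • (memLp_ch n).toLp (ch n) : Lp ℂ 2 (mu d)) =ᵐ[mu d] fun ξ => f n * ch n ξ := by
      intro n _
      filter_upwards [Lp.coeFn_smul (f n) ((memLp_ch n).toLp (ch n)), (memLp_ch n).coeFn_toLp] with ξ h1 h2
      rw [h1, Pi.smul_apply, h2, smul_eq_mul]
    have h2 : (∀ᵐ ξ ∂(mu d), ∀ n ∈ S, (f n • (memLp_ch n).toLp (ch n) : Lp ℂ 2 (mu d)) ξ = f n * ch n ξ) := by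
      rw [Finset.eventually_all]
      exact h1
    filter_upwards [(memLp_FF S f).coeFn_toLp, h2, Lp.coeFn_fun_finsetSum S (fun n => (f n • (memLp_ch n).toLp (ch n) : Lp ℂ 2 (mu d)))] with ξ a b c
    rw [a, c]
    unfold FF
    exact Finset.sum_congr rfl fun n hn => (b n hn).symm
  have e3 : ‖(memLp_FF S f).toLp (FF S f)‖ ^ 2 = ∑ n ∈ S, ‖f n‖ ^ 2 := by
    rw [e]
    have := orth.inner_sum f f S
    rw [← Complex.ofReal_inj]
    have h4 := inner_self_eq_norm_sq_to_K (𝕜 := ℂ) (∑ n ∈ S, f n • (memLp_ch n).toLp (ch n))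
    rw [this] at h4
    push_cast
    rw [← Complex.coe_algebraMap] at *
    rw [show ((algebraMap ℝ ℂ) ‖∑ n ∈ S, f n • (memLp_ch n).toLp (ch n)‖ ^ 2 : ℂ) = _ from h4.symm]
    refine Finset.sum_congr rfl fun n _ => ?_
    rw [Complex.conj_mul']; rfl
  have e1 : ∀ x : ℂ, ‖x‖ₑ ^ 2 = ENNReal.ofReal (‖x‖ ^ 2) := by
    intro x; rw [ENNReal.ofReal_pow (norm_nonneg _), ofReal_norm]
  have e2 : ‖(memLp_FF S f).toLp (FF S f)‖ₑ ^ 2 = ENNReal.ofReal (‖(memLp_FF S f).toLp (FF S f)‖ ^ 2) := by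
    rw [ENNReal.ofReal_pow (norm_nonneg _), ofReal_norm]
  simp_rw [e1]
  rw [e2, e3, ← ENNReal.ofReal_sum_of_nonneg (fun _ _ => by positivity)]

end FR

namespace FR
open MeasureTheory TH

variable {d : ℕ}

lemma kap_neg (L : ℝ) (a : ℤ) (q : ℕ) (u : ℝ) (m : ℤ) : kap L a q u (-m) = kap L a q u m := by
  unfold kap; simp

lemma coef1 (L : ℝ) (hL : 0 < L) (a : ℤ) (q : ℕ) (u : ℝ) (m : ℤ) :
    ∫ x, ee ((m : ℝ) * x) * Ph L a q u x ∂nu = (L : ℂ)⁻¹ * kap L a q u m := by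
  have hs := summ_kap L hL a q u
  have h := hasSum_integral_of_summable_integral_norm (μ := nu)
    (F := fun (l : ℤ) (x : ℝ) => (L : ℂ)⁻¹ * kap L a q u l * ee (((l + m : ℤ) : ℝ) * x)) (fun l => by
      refine Integrable.of_bound (C := ‖(L : ℂ)⁻¹ * kap L a q u l‖) ?_ ?_
      · exact (continuous_const.mul (continuous_ee.comp (by fun_prop))).aestronglyMeasurable
      · exact Filter.Eventually.of_forall fun x => by rw [norm_mul, norm_ee, mul_one]) (by
      simp only [norm_mul, norm_ee, mul_one, integral_const, probReal_univ, smul_eq_mul, one_mul]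
      exact hs.mul_left _)
  have h1 : ∀ x, ∑' l : ℤ, (L : ℂ)⁻¹ * kap L a q u l * ee (((l + m : ℤ) : ℝ) * x) = ee ((m : ℝ) * x) * Ph L a q u x := by
    intro x
    unfold Ph
    rw [← tsum_mul_left, ← tsum_mul_left]
    refine tsum_congr fun l => ?_
    rw [show (((l + m : ℤ) : ℝ) * x) = m * x + l * x by push_cast; ring, ee_add]; ring
  simp_rw [h1] at h
  rw [← h.tsum_eq]
  simp_rw [integral_const_mul, integral_ee]
  rw [tsum_eq_single (-m)]
  · simp [kap_neg]
  · intro l hl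
    rw [if_neg (fun h => hl (by omega))]; simp

lemma continuous_Ph (L : ℝ) (hL : 0 < L) (a : ℤ) (q : ℕ) (u : ℝ) : Continuous (Ph L a q u) := by
  unfold Ph
  refine continuous_const.mul (continuous_tsum (fun m => continuous_const.mul (continuous_ee.comp (by fun_prop)))
    (summ_kap L hL a q u) fun m x => ?_)
  rw [norm_mul, norm_ee, mul_one]

lemma norm_Ph (L : ℝ) (hL : 0 < L) (a : ℤ) (q : ℕ) (u : ℝ) (x : ℝ) :
    ‖Ph L a q u x‖ ≤ L⁻¹ * ∑' m, ‖kap L a q u m‖ := by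
  unfold Ph
  rw [norm_mul, norm_inv, Complex.norm_real, Real.norm_of_nonneg hL.le]
  gcongr
  have h := summ_kap L hL a q u
  refine (norm_tsum_le_tsum_norm (by simpa [norm_ee] using h)).trans (le_of_eq ?_)
  simp [norm_ee]

/-- multiplier convolution -/
noncomputable def Pk (k : ℕ) (a : ℤ) (q : ℕ) (u : ℝ) (S : Finset (Fin d → ℤ)) (f : (Fin d → ℤ) → ℂ)
    (n : Fin d → ℤ) : ℂ :=
  ∑ m ∈ S, f m * ∏ i, ((2 : ℂ) ^ k)⁻¹ * kap (2 ^ k) a q u (n i - m i)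

lemma cf_PH (k : ℕ) (a : ℤ) (q : ℕ) (u : ℝ) (S : Finset (Fin d → ℤ)) (f : (Fin d → ℤ) → ℂ) (n : Fin d → ℤ) :
    cf (fun ξ => PH k a q u ξ * FF S f ξ) n = Pk k a q u S f n := by
  have hL : (0:ℝ) < 2 ^ k := by positivity
  unfold cf Pk
  have e : ∀ ξ, ch (-n) ξ * (PH k a q u ξ * FF S f ξ) =
      ∑ m ∈ S, f m * ∏ i, (ee (((m i - n i : ℤ) : ℝ) * ξ i) * Ph (2 ^ k) a q u (ξ i)) := by
    intro ξ
    unfold FF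
    rw [Finset.mul_sum, Finset.mul_sum]
    refine Finset.sum_congr rfl fun m _ => ?_
    rw [Finset.prod_mul_distrib]
    have : ∏ i, ee (((m i - n i : ℤ) : ℝ) * ξ i) = ch (-n) ξ * ch m ξ := by
      rw [← ch_add]; unfold ch
      refine Finset.prod_congr rfl fun i _ => ?_
      congr 2; simp; ring
    rw [this]; unfold PH; ring
  simp_rw [e]
  rw [integral_finsetSum]
  · refine Finset.sum_congr rfl fun m _ => ?_
    rw [integral_const_mul]
    congr 1
    unfold mu
    rw [integral_fintype_prod_eq_prod (fun i (x : ℝ) => ee (((m i - n i : ℤ) : ℝ) * x) * Ph (2 ^ k) a q u x)]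
    refine Finset.prod_congr rfl fun i _ => ?_
    rw [coef1 _ hL, ← kap_neg]; push_cast; congr 2; ring
  · intro m _
    refine Integrable.of_bound (C := ‖f m‖ * ∏ i : Fin d, ((2 ^ k : ℝ)⁻¹ * ∑' l, ‖kap (2 ^ k) a q u l‖)) ?_ ?_
    · refine (continuous_const.mul (continuous_finsetProd _ fun i _ => ?_)).aestronglyMeasurable
      exact (continuous_ee.comp (by fun_prop)).mul ((continuous_Ph _ hL a q u).comp (by fun_prop))
    · refine Filter.Eventually.of_forall fun ξ => ?_
      rw [norm_mul, norm_prod]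
      gcongr with i _
      rw [norm_mul, norm_ee, one_mul]
      exact norm_Ph _ hL a q u _

lemma measurable_Gm (a : ℤ) (q : ℕ) : Measurable (Gm (d := d) a q) := by
  unfold Gm
  refine Finset.measurable_fun_prod _ fun i _ => ?_
  have h1 : Measurable (gam a q) := measurable_from_top
  refine h1.comp ?_
  have : (fun c : Fin d → ℝ => round ((q : ℝ) * c i)) = fun c => ⌊(q : ℝ) * c i + 1 / 2⌋ := by
    funext c; rw [round_eq]
  rw [this]
  exact Int.measurable_floor.comp (by fun_prop)

lemma norm_Gm (a : ℤ) (q : ℕ) (hq : 0 < q) (hc : IsCoprime a (q : ℤ)) (ξ : Fin d → ℝ) :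
    ‖Gm a q ξ‖ ≤ (Real.sqrt 2 / Real.sqrt q) ^ d := by
  unfold Gm
  rw [norm_prod]
  calc _ ≤ ∏ i : Fin d, (Real.sqrt 2 / Real.sqrt q) := by
        gcongr with i; exact norm_gam a q hq _ hc
    _ = _ := by rw [Finset.prod_const]; simp

lemma memLp_mul (G : (Fin d → ℝ) → ℂ) (hG : Measurable G) (B : ℝ) (hB : ∀ ξ, ‖G ξ‖ ≤ B)
    (S : Finset (Fin d → ℤ)) (f : (Fin d → ℤ) → ℂ) : MemLp (fun ξ => G ξ * FF S f ξ) 2 (mu d) := by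
  refine MemLp.of_bound (hG.mul (continuous_FF S f).measurable).aestronglyMeasurable (B * ∑ n ∈ S, ‖f n‖)
    (Filter.Eventually.of_forall fun ξ => ?_)
  rw [norm_mul]
  exact mul_le_mul (hB ξ) (norm_FF S f ξ) (norm_nonneg _) ((norm_nonneg _).trans (hB ξ))

lemma integrable_cf (G : (Fin d → ℝ) → ℂ) (hG : Measurable G) (B : ℝ) (hB : ∀ ξ, ‖G ξ‖ ≤ B)
    (S : Finset (Fin d → ℤ)) (f : (Fin d → ℤ) → ℂ) (n : Fin d → ℤ) :
    Integrable (fun ξ => ch n ξ * (G ξ * FF S f ξ)) (mu d) := by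
  refine Integrable.of_bound (C := B * ∑ n ∈ S, ‖f n‖)
    ((continuous_ch n).measurable.mul (hG.mul (continuous_FF S f).measurable)).aestronglyMeasurable
    (Filter.Eventually.of_forall fun ξ => ?_)
  rw [norm_mul, norm_ch, one_mul, norm_mul]
  exact mul_le_mul (hB ξ) (norm_FF S f ξ) (norm_nonneg _) ((norm_nonneg _).trans (hB ξ))

/-- Fourier multiplier by the Gauss sum symbol -/
noncomputable def Ga (a : ℤ) (q : ℕ) (S : Finset (Fin d → ℤ)) (f : (Fin d → ℤ) → ℂ) (n : Fin d → ℤ) : ℂ :=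
  cf (fun ξ => Gm a q ξ * FF S f ξ) n

lemma Ga_sq (a : ℤ) (q : ℕ) (hq : 0 < q) (hc : IsCoprime a (q : ℤ)) (S : Finset (Fin d → ℤ)) (f : (Fin d → ℤ) → ℂ) :
    ∑' n, ‖Ga a q S f n‖ₑ ^ 2 ≤ ENNReal.ofReal ((2 / q) ^ d) * ∑ n ∈ S, ‖f n‖ₑ ^ 2 := by
  refine (bessel _ (memLp_mul _ (measurable_Gm a q) _ (norm_Gm a q hq hc) S f)).trans ?_
  rw [← parseval, ← lintegral_const_mul' _ _ ENNReal.ofReal_ne_top]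
  refine lintegral_mono fun ξ => ?_
  simp only
  rw [enorm_mul, mul_pow]
  gcongr
  rw [← ofReal_norm, ← ENNReal.ofReal_pow (norm_nonneg _)]
  refine ENNReal.ofReal_le_ofReal ?_
  calc _ ≤ ((Real.sqrt 2 / Real.sqrt q) ^ d) ^ 2 := by
        gcongr; exact norm_Gm a q hq hc ξ
    _ = _ := by rw [← pow_mul, mul_comm, pow_mul, div_pow, Real.sq_sqrt (by norm_num), Real.sq_sqrt (by positivity)]

lemma prod_DN (N q : ℕ) (ξ : Fin d → ℝ) :
    ∏ i, DN N (q * ξ i) = ((N : ℂ)⁻¹) ^ d * ∑ j ∈ Fintype.piFinset (fun _ : Fin d => Finset.range N),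
      ch (fun i => (q : ℤ) * j i) ξ := by
  unfold DN ch
  rw [Finset.prod_mul_distrib, Finset.prod_univ_sum]
  congr 1
  · simp
  · refine Finset.sum_congr rfl fun j _ => Finset.prod_congr rfl fun i _ => ?_
    congr 1; push_cast; ring

lemma cf_MN (k : ℕ) (a : ℤ) (q : ℕ) (hq : 0 < q) (hc : IsCoprime a (q : ℤ)) (u : ℝ) (S : Finset (Fin d → ℤ))
    (f : (Fin d → ℤ) → ℂ) (n : Fin d → ℤ) :
    cf (fun ξ => MN k a q u ξ * FF S f ξ) n = cc (2 ^ k) q u ^ d * (((NN q k : ℂ)⁻¹) ^ d *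
      ∑ j ∈ Fintype.piFinset (fun _ : Fin d => Finset.range (NN q k)), Ga a q S f (fun i => n i - q * j i)) := by
  unfold Ga cf
  rw [← integral_finsetSum _ (fun j _ => integrable_cf _ (measurable_Gm a q) _ (norm_Gm a q hq hc) S f _),
    ← integral_const_mul, ← integral_const_mul]
  congr 1
  funext ξ
  unfold MN
  beta_reduce
  rw [prod_DN, ← Finset.sum_mul]
  have : ∑ j ∈ Fintype.piFinset (fun _ : Fin d => Finset.range (NN q k)), ch (-fun i => n i - (q:ℤ) * (j i : ℤ)) ξ =
      ch (-n) ξ * ∑ j ∈ Fintype.piFinset (fun _ : Fin d => Finset.range (NN q k)), ch (fun i => (q : ℤ) * j i) ξ := by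
    rw [Finset.mul_sum]
    refine Finset.sum_congr rfl fun j _ => ?_
    rw [← ch_add]; congr 1; funext i; simp; ring
  rw [this]; ring

/-- coordinatewise cast -/
def castEmb : (Fin d → ℕ) ↪ (Fin d → ℤ) where
  toFun j i := (j i : ℤ)
  inj' := by
    intro x y h
    funext i
    simpa using congrFun h i

lemma castEmb_apply (j : Fin d → ℕ) (i : Fin d) : castEmb j i = (j i : ℤ) := rfl

lemma enorm_cf_MN (k : ℕ) (a : ℤ) (q : ℕ) (hq : 0 < q) (hc : IsCoprime a (q : ℤ)) (u : ℝ) (S : Finset (Fin d → ℤ))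
    (f : (Fin d → ℤ) → ℂ) (n : Fin d → ℤ) :
    ‖cf (fun ξ => MN k a q u ξ * FF S f ξ) n‖ₑ ≤ ‖cc (2 ^ k) q u‖ₑ ^ d *
      MX.T (-q) (k - Nat.log 2 q) (fun n => ‖Ga a q S f n‖ₑ) n := by
  rw [cf_MN k a q hq hc, enorm_mul, enorm_pow]
  gcongr
  rw [enorm_mul]
  have h1 : ‖((NN q k : ℂ)⁻¹) ^ d‖ₑ = (2 ^ ((k - Nat.log 2 q) * d))⁻¹ := by
    rw [enorm_pow, enorm_inv (by simp [NN]), pow_mul, ← ENNReal.inv_pow]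
    congr 2
    unfold NN
    push_cast
    rw [enorm_pow]
    congr 1
    rw [← ofReal_norm]; simp
  rw [h1]
  unfold MX.T
  calc _ ≤ (2 ^ ((k - Nat.log 2 q) * d))⁻¹ * ∑ j ∈ Fintype.piFinset (fun _ : Fin d => Finset.range (NN q k)),
        ‖Ga a q S f (fun i => n i - q * j i)‖ₑ := by
        gcongr; exact enorm_sum_le _ _
    _ = ∑ j ∈ (Fintype.piFinset (fun _ : Fin d => Finset.range (NN q k))).map
          castEmb,
          MX.tau (k - Nat.log 2 q) j * ‖Ga a q S f (n + (-(q:ℤ)) • j)‖ₑ := by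
        rw [Finset.sum_map, Finset.mul_sum]
        refine Finset.sum_congr rfl fun j hj => ?_
        congr 1
        · unfold MX.tau
          rw [if_pos]
          rw [MX.mem_Bx]
          intro i
          have := Finset.mem_range.1 (Fintype.mem_piFinset.1 hj i)
          unfold NN at this
          rw [castEmb_apply, Nat.abs_cast]
          exact_mod_cast this
        · congr 2
          funext i; simp [castEmb_apply]; ring
    _ ≤ _ := ENNReal.sum_le_tsum _

end FR

namespace FR
open MeasureTheory TH

variable {d : ℕ}

lemma measurable_PH (k : ℕ) (a : ℤ) (q : ℕ) (u : ℝ) : Measurable (PH (d := d) k a q u) := by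
  unfold PH
  refine (continuous_finsetProd _ fun i _ => ?_).measurable
  exact (continuous_Ph _ (by positivity) a q u).comp (by fun_prop)

lemma bdd_PH (k : ℕ) (a : ℤ) (q : ℕ) (u : ℝ) : ∃ B, ∀ ξ, ‖PH (d := d) k a q u ξ‖ ≤ B := by
  refine ⟨∏ i : Fin d, ((2 ^ k : ℝ)⁻¹ * ∑' l, ‖kap (2 ^ k) a q u l‖), fun ξ => ?_⟩
  unfold PH
  rw [norm_prod]
  gcongr with i
  exact norm_Ph _ (by positivity) a q u _

lemma measurable_MN (k : ℕ) (a : ℤ) (q : ℕ) (u : ℝ) : Measurable (MN (d := d) k a q u) := by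
  unfold MN
  refine measurable_const.mul ((measurable_Gm a q).mul (continuous_finsetProd _ fun i _ => ?_).measurable)
  unfold DN
  exact continuous_const.mul (continuous_finsetSum _ fun j _ => continuous_ee.comp (by fun_prop))

lemma bdd_MN (k : ℕ) (a : ℤ) (q : ℕ) (hq : 0 < q) (hc : IsCoprime a (q : ℤ)) (u : ℝ) :
    ∃ B, ∀ ξ, ‖MN (d := d) k a q u ξ‖ ≤ B := by
  refine ⟨‖cc (2 ^ k) q u ^ d‖ * ((Real.sqrt 2 / Real.sqrt q) ^ d * 1), fun ξ => ?_⟩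
  unfold MN
  rw [norm_mul, norm_mul]
  gcongr
  · exact norm_Gm a q hq hc ξ
  · rw [norm_prod]
    exact Finset.prod_le_one (fun _ _ => norm_nonneg _) fun i _ => norm_DN _ _

lemma cf_diff (k : ℕ) (a : ℤ) (q : ℕ) (hq : 0 < q) (hc : IsCoprime a (q : ℤ)) (u : ℝ) (S : Finset (Fin d → ℤ))
    (f : (Fin d → ℤ) → ℂ) :
    ∑' n, ‖Pk k a q u S f n - cf (fun ξ => MN k a q u ξ * FF S f ξ) n‖ₑ ^ 2 ≤
      ∫⁻ ξ, ‖PH k a q u ξ - MN k a q u ξ‖ₑ ^ 2 * ‖FF S f ξ‖ₑ ^ 2 ∂(mu d) := by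
  obtain ⟨B1, h1⟩ := bdd_PH (d := d) k a q u
  obtain ⟨B2, h2⟩ := bdd_MN (d := d) k a q hq hc u
  have hm := memLp_mul (fun ξ => PH k a q u ξ - MN k a q u ξ) ((measurable_PH k a q u).sub (measurable_MN k a q u))
    (B1 + B2) (fun ξ => (norm_sub_le _ _).trans (add_le_add (h1 ξ) (h2 ξ))) S f
  have := bessel _ hm
  refine le_trans (le_of_eq ?_) (this.trans (le_of_eq ?_))
  · refine tsum_congr fun n => ?_
    rw [← cf_PH]
    congr 2
    unfold cf
    rw [← integral_sub (integrable_cf _ (measurable_PH k a q u) _ h1 S f _)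
      (integrable_cf _ (measurable_MN k a q u) _ h2 S f _)]
    congr 1; funext ξ; ring
  · refine lintegral_congr fun ξ => ?_
    rw [enorm_mul, mul_pow]

/-- constant of the arc bound -/
noncomputable def C4 (d : ℕ) : ℝ := 200 * 128 ^ d + 2 * C3 d

lemma C3_nonneg (d : ℕ) : 0 ≤ C3 d := by unfold C3; positivity

lemma C4_pos (d : ℕ) : 0 < C4 d := by
  unfold C4
  have := C3_nonneg d
  positivity

lemma main_part (hd : 5 ≤ d) (a : ℤ) (q : ℕ) (hq : 0 < q) (hc : IsCoprime a (q : ℤ)) (u : ℝ) (S : Finset (Fin d → ℤ))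
    (f : (Fin d → ℤ) → ℂ) :
    ∑' n, (⨆ k, ‖cf (fun ξ => MN k a q u ξ * FF S f ξ) n‖ₑ ^ 2) ≤
      ENNReal.ofReal (100 * 128 ^ d * (1 + u ^ 2) ^ (-(3 / 2) : ℝ) * ((q : ℝ) ^ 5)⁻¹) * ∑ n ∈ S, ‖f n‖ₑ ^ 2 := by
  have hq' : (1 : ℝ) ≤ q := by exact_mod_cast hq
  have hcc : ∀ k, (‖cc (2 ^ k) q u‖ₑ ^ d) ^ 2 ≤ ENNReal.ofReal ((1 + u ^ 2) ^ (-(3 / 2) : ℝ)) := by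
    intro k
    rw [← ofReal_norm, norm_cc _ (by positivity) q hq, ← ENNReal.ofReal_pow (by positivity),
      ← ENNReal.ofReal_pow (by positivity)]
    refine ENNReal.ofReal_le_ofReal ?_
    rw [← pow_mul, ← Real.rpow_natCast, ← Real.rpow_mul (by positivity)]
    refine Real.rpow_le_rpow_of_exponent_le (by nlinarith [sq_nonneg u]) ?_
    have : (5:ℝ) ≤ d := by exact_mod_cast hd
    push_cast; linarith
  set g : (Fin d → ℤ) → ℝ≥0∞ := fun n => ‖Ga a q S f n‖ₑ with hg
  have h1 : ∀ n, (⨆ k, ‖cf (fun ξ => MN k a q u ξ * FF S f ξ) n‖ₑ ^ 2) ≤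
      ENNReal.ofReal ((1 + u ^ 2) ^ (-(3 / 2) : ℝ)) * (⨆ k, MX.T (-q) k g n) ^ 2 := by
    intro n
    refine iSup_le fun k => ?_
    calc _ ≤ (‖cc (2 ^ k) q u‖ₑ ^ d * MX.T (-q) (k - Nat.log 2 q) g n) ^ 2 := by
          gcongr; exact enorm_cf_MN k a q hq hc u S f n
      _ = (‖cc (2 ^ k) q u‖ₑ ^ d) ^ 2 * (MX.T (-q) (k - Nat.log 2 q) g n) ^ 2 := mul_pow _ _ _
      _ ≤ _ := by
          gcongr
          · exact hcc k
          · exact le_iSup (fun k => MX.T (-q) k g n) _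
  calc _ ≤ ∑' n, ENNReal.ofReal ((1 + u ^ 2) ^ (-(3 / 2) : ℝ)) * (⨆ k, MX.T (-q) k g n) ^ 2 := ENNReal.tsum_le_tsum h1
    _ ≤ ENNReal.ofReal ((1 + u ^ 2) ^ (-(3 / 2) : ℝ)) * ((100 * 64 ^ d) * (ENNReal.ofReal ((2 / q) ^ d) * ∑ n ∈ S, ‖f n‖ₑ ^ 2)) := by
        rw [ENNReal.tsum_mul_left]
        gcongr
        refine (MX.maximal (-q) g).trans ?_
        gcongr
        exact Ga_sq a q hq hc S f
    _ = ENNReal.ofReal ((1 + u ^ 2) ^ (-(3 / 2) : ℝ) * ((100 * 64 ^ d) * (2 / q) ^ d)) * ∑ n ∈ S, ‖f n‖ₑ ^ 2 := by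
        have e : (100 * 64 ^ d : ℝ≥0∞) = ENNReal.ofReal (100 * 64 ^ d) := by
          rw [ENNReal.ofReal_mul (by norm_num), ENNReal.ofReal_pow (by norm_num)]; simp
        rw [e, ENNReal.ofReal_mul (p := (1 + u ^ 2) ^ (-(3 / 2) : ℝ)) (by positivity), ENNReal.ofReal_mul (p := 100 * 64 ^ d) (by positivity)]
        simp only [mul_assoc]
    _ ≤ _ := by
        refine mul_le_mul_left (ENNReal.ofReal_le_ofReal ?_) _
        have h3 : ((2:ℝ) / q) ^ d ≤ 2 ^ d * ((q : ℝ) ^ 5)⁻¹ := by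
          rw [div_pow, div_eq_mul_inv]
          gcongr
        have h4 : (128 : ℝ) ^ d = 64 ^ d * 2 ^ d := by rw [← mul_pow]; norm_num
        calc _ ≤ (1 + u ^ 2) ^ (-(3 / 2) : ℝ) * ((100 * 64 ^ d) * (2 ^ d * ((q : ℝ) ^ 5)⁻¹)) := by gcongr
          _ = _ := by rw [h4]; ring

lemma arc_bound (hd : 5 ≤ d) (a : ℤ) (q : ℕ) (hq : 0 < q) (hc : IsCoprime a (q : ℤ)) (u : ℝ) (S : Finset (Fin d → ℤ))
    (f : (Fin d → ℤ) → ℂ) :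
    ∑' n, (⨆ k, if q ≤ 2 ^ k ∧ |u| ≤ 2 * ((2 : ℝ) ^ k / q) then ‖Pk k a q u S f n‖ₑ ^ 2 else 0) ≤
      ENNReal.ofReal (C4 d * (1 + u ^ 2) ^ (-(3 / 2) : ℝ) * ((q : ℝ) ^ 5)⁻¹) * ∑ n ∈ S, ‖f n‖ₑ ^ 2 := by
  set M : ℕ → (Fin d → ℤ) → ℂ := fun k n => cf (fun ξ => MN k a q u ξ * FF S f ξ) n with hM
  set R : ℝ := (1 + u ^ 2) ^ (-(3 / 2) : ℝ) * ((q : ℝ) ^ 5)⁻¹ with hR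
  have hR0 : 0 ≤ R := by positivity
  have h1 : ∀ n, (⨆ k, if q ≤ 2 ^ k ∧ |u| ≤ 2 * ((2 : ℝ) ^ k / q) then ‖Pk k a q u S f n‖ₑ ^ 2 else 0) ≤
      2 * (⨆ k, ‖M k n‖ₑ ^ 2) + 2 * ∑' k, if q ≤ 2 ^ k ∧ |u| ≤ 2 * ((2 : ℝ) ^ k / q) then ‖Pk k a q u S f n - M k n‖ₑ ^ 2 else 0 := by
    intro n
    refine iSup_le fun k => ?_
    split_ifs with h
    · have e : Pk k a q u S f n = M k n + (Pk k a q u S f n - M k n) := by ring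
      calc ‖Pk k a q u S f n‖ₑ ^ 2 ≤ (‖M k n‖ₑ + ‖Pk k a q u S f n - M k n‖ₑ) ^ 2 := by
            gcongr; nth_rewrite 1 [e]; exact enorm_add_le _ _
        _ ≤ _ := MX.sq_add_le _ _
        _ ≤ _ := by
            gcongr
            · exact le_iSup (fun k => ‖M k n‖ₑ ^ 2) k
            · refine le_trans (le_of_eq ?_) (ENNReal.le_tsum k)
              rw [if_pos h]
    · exact zero_le
  have h2 : ∑' n, ∑' k, (if q ≤ 2 ^ k ∧ |u| ≤ 2 * ((2 : ℝ) ^ k / q) then ‖Pk k a q u S f n - M k n‖ₑ ^ 2 else 0) ≤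
      ENNReal.ofReal (C3 d * R) * ∑ n ∈ S, ‖f n‖ₑ ^ 2 := by
    rw [ENNReal.tsum_comm]
    refine ENNReal.tsum_le_of_sum_range_le fun K => ?_
    have hm : ∀ k, Measurable fun ξ => ‖PH (d := d) k a q u ξ - MN k a q u ξ‖ₑ ^ 2 * ‖FF S f ξ‖ₑ ^ 2 := by
      intro k
      exact ((measurable_PH k a q u).sub (measurable_MN k a q u)).enorm.pow_const 2 |>.mul
        ((continuous_FF S f).measurable.enorm.pow_const 2)
    calc _ = ∑ k ∈ (Finset.range K).filter (fun k => q ≤ 2 ^ k ∧ |u| ≤ 2 * ((2 : ℝ) ^ k / q)),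
          ∑' n, ‖Pk k a q u S f n - M k n‖ₑ ^ 2 := by
          rw [Finset.sum_filter]
          refine Finset.sum_congr rfl fun k _ => ?_
          split_ifs <;> simp
      _ ≤ ∑ k ∈ (Finset.range K).filter (fun k => q ≤ 2 ^ k ∧ |u| ≤ 2 * ((2 : ℝ) ^ k / q)),
          ∫⁻ ξ, ‖PH k a q u ξ - MN k a q u ξ‖ₑ ^ 2 * ‖FF S f ξ‖ₑ ^ 2 ∂(mu d) :=
          Finset.sum_le_sum fun k _ => cf_diff k a q hq hc u S f
      _ = ∫⁻ ξ, ∑ k ∈ (Finset.range K).filter (fun k => q ≤ 2 ^ k ∧ |u| ≤ 2 * ((2 : ℝ) ^ k / q)),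
          ‖PH k a q u ξ - MN k a q u ξ‖ₑ ^ 2 * ‖FF S f ξ‖ₑ ^ 2 ∂(mu d) := by
          rw [lintegral_finsetSum _ fun k _ => hm k]
      _ ≤ ∫⁻ ξ, ENNReal.ofReal (C3 d * R) * ‖FF S f ξ‖ₑ ^ 2 ∂(mu d) := by
          refine lintegral_mono fun ξ => ?_
          simp only
          rw [← Finset.sum_mul]
          gcongr
          have := sum_D hd a q hq hc u ξ K
          rw [mul_assoc] at this
          refine le_trans (le_of_eq ?_) (ENNReal.ofReal_le_ofReal this)
          rw [ENNReal.ofReal_sum_of_nonneg (fun _ _ => by positivity)]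
          refine Finset.sum_congr rfl fun k _ => ?_
          rw [ENNReal.ofReal_pow (norm_nonneg _), ofReal_norm]
      _ = _ := by rw [lintegral_const_mul' _ _ ENNReal.ofReal_ne_top, parseval]
  calc _ ≤ ∑' n, (2 * (⨆ k, ‖M k n‖ₑ ^ 2) + 2 * ∑' k, if q ≤ 2 ^ k ∧ |u| ≤ 2 * ((2 : ℝ) ^ k / q) then ‖Pk k a q u S f n - M k n‖ₑ ^ 2 else 0) :=
        ENNReal.tsum_le_tsum h1
    _ ≤ 2 * (ENNReal.ofReal (100 * 128 ^ d * R) * ∑ n ∈ S, ‖f n‖ₑ ^ 2) + 2 * (ENNReal.ofReal (C3 d * R) * ∑ n ∈ S, ‖f n‖ₑ ^ 2) := by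
        rw [ENNReal.tsum_add, ENNReal.tsum_mul_left, ENNReal.tsum_mul_left]
        gcongr
        have := main_part hd a q hq hc u S f
        rwa [mul_assoc (100 * 128 ^ d : ℝ)] at this
    _ = _ := by
        have e2 : (2 : ℝ≥0∞) = ENNReal.ofReal 2 := by simp
        have h3 := C3_nonneg d
        rw [e2, ← mul_assoc (ENNReal.ofReal 2) (ENNReal.ofReal (100 * 128 ^ d * R)), ← mul_assoc (ENNReal.ofReal 2) (ENNReal.ofReal (C3 d * R)), ← add_mul, ← ENNReal.ofReal_mul (by norm_num), ← ENNReal.ofReal_mul (by norm_num),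
          ← ENNReal.ofReal_add (by positivity) (by positivity)]
        congr 2
        unfold C4; rw [hR]; ring

end FR

namespace AS
open MeasureTheory TH FR

variable {d : ℕ}

lemma lint_affine (h : ℝ → ℝ≥0∞) (hm : Measurable h) (b c : ℝ) (hc : 0 < c) :
    ∫⁻ t, h t = ENNReal.ofReal c * ∫⁻ u, h (b + c * u) := by
  have h1 := Real.smul_map_volume_mul_left hc.ne'
  calc ∫⁻ t, h t = ∫⁻ t, h (b + t) := (lintegral_add_left_eq_self h b).symm
    _ = ∫⁻ t, h (b + t) ∂(ENNReal.ofReal |c| • Measure.map (c * ·) volume) := by rw [h1]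
    _ = _ := by
      rw [lintegral_smul_measure, lintegral_map (by fun_prop) (by fun_prop), abs_of_pos hc, smul_eq_mul]

/-- integer squared length -/
def sqn (m : Fin d → ℤ) : ℤ := ∑ i, m i ^ 2

/-- exponential sum kernel convolution -/
noncomputable def Q (k : ℕ) (t : ℝ) (S : Finset (Fin d → ℤ)) (f : (Fin d → ℤ) → ℂ) (n : Fin d → ℤ) : ℂ :=
  ∑ m ∈ S, f m * (ee (sqn (n - m) * t) * (Real.exp (-Real.pi * sqn (n - m) / 4 ^ k) : ℝ))

lemma continuous_Q (k : ℕ) (S : Finset (Fin d → ℤ)) (f : (Fin d → ℤ) → ℂ) (n : Fin d → ℤ) :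
    Continuous fun t => Q k t S f n := by
  unfold Q
  exact continuous_finsetSum _ fun m _ => continuous_const.mul
    ((continuous_ee.comp (by fun_prop)).mul continuous_const)

lemma Q_eq (k : ℕ) (a : ℤ) (q : ℕ) (hq : 0 < q) (u : ℝ) (S : Finset (Fin d → ℤ)) (f : (Fin d → ℤ) → ℂ) (n : Fin d → ℤ) :
    Q k (a / q + (1 / (2 * 4 ^ k)) * u) S f n = (2 : ℂ) ^ (k * d) * Pk k a q u S f n := by
  unfold Q Pk
  rw [Finset.mul_sum]
  refine Finset.sum_congr rfl fun m _ => ?_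
  rw [Finset.prod_mul_distrib, Finset.prod_const, Finset.card_univ, Fintype.card_fin]
  have h2 : ((2:ℂ) ^ (k * d)) * (((2:ℂ) ^ k)⁻¹) ^ d = 1 := by
    rw [pow_mul, ← mul_pow, mul_inv_cancel₀ (by simp), one_pow]
  have e : ee (sqn (n - m) * (a / q + (1 / (2 * 4 ^ k)) * u)) * (Real.exp (-Real.pi * sqn (n - m) / 4 ^ k) : ℝ) =
      ∏ i, kap (2 ^ k) a q u (n i - m i) := by
    unfold kap ee sqn
    rw [Finset.prod_mul_distrib, ← Complex.exp_sum, ← Complex.exp_sum, Complex.ofReal_exp, ← Complex.exp_add, ← Complex.exp_add]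
    congr 1
    rw [← Finset.sum_add_distrib]
    push_cast
    simp only [Finset.sum_mul, Finset.mul_sum, Finset.sum_div]
    rw [← Finset.sum_add_distrib]
    refine Finset.sum_congr rfl fun i _ => ?_
    have h4 : ((2:ℂ) ^ k) ^ 2 = 4 ^ k := by rw [← pow_mul, mul_comm, pow_mul]; norm_num
    have hq' : (q : ℂ) ≠ 0 := by exact_mod_cast hq.ne'
    rw [h4]
    simp only [Pi.sub_apply, Int.cast_sub]
    field_simp
    ring
  rw [e]
  calc _ = (((2:ℂ) ^ (k * d)) * (((2:ℂ) ^ k)⁻¹) ^ d) * (f m * ∏ i, kap (2 ^ k) a q u (n i - m i)) := by rw [h2, one_mul]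
    _ = _ := by ring

/-- sphere sums -/
noncomputable def Sg (N : ℕ) (S : Finset (Fin d → ℤ)) (f : (Fin d → ℤ) → ℂ) (n : Fin d → ℤ) : ℂ :=
  ∑ m ∈ S, if sqn (n - m) = N then f m else 0

lemma Sg_le (k N : ℕ) (hN : N ≤ 4 * 4 ^ k) (S : Finset (Fin d → ℤ)) (f : (Fin d → ℤ) → ℂ) (n : Fin d → ℤ) :
    ‖Sg N S f n‖ₑ ≤ ENNReal.ofReal (Real.exp (4 * Real.pi)) * ∫⁻ t, ‖Q k t S f n‖ₑ ∂nu := by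
  have e : Sg N S f n = (Real.exp (Real.pi * N / 4 ^ k) : ℝ) * ∫ t, ee (-N * t) * Q k t S f n ∂nu := by
    unfold Q
    simp_rw [Finset.mul_sum]
    rw [integral_finsetSum]
    · unfold Sg
      rw [Finset.mul_sum]
      refine Finset.sum_congr rfl fun m _ => ?_
      have : ∀ t : ℝ, ee (-N * t) * (f m * (ee (sqn (n - m) * t) * (Real.exp (-Real.pi * sqn (n - m) / 4 ^ k) : ℝ))) =
          (f m * (Real.exp (-Real.pi * sqn (n - m) / 4 ^ k) : ℝ)) * ee (((sqn (n - m) - N : ℤ) : ℝ) * t) := by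
        intro t
        rw [show (((sqn (n - m) - N : ℤ) : ℝ) * t) = -N * t + sqn (n - m) * t by push_cast; ring, ee_add]; ring
      simp_rw [this]
      rw [integral_const_mul, integral_ee]
      split_ifs with h1 h2 h2
      · rw [h1, mul_one, mul_left_comm, ← Complex.ofReal_mul, ← Real.exp_add]
        have : Real.pi * N / 4 ^ k + -Real.pi * ((N : ℤ) : ℝ) / 4 ^ k = 0 := by push_cast; ring
        rw [this]; simp
      · omega
      · omega
      · simp
    · intro m _
      refine Integrable.of_bound (C := ‖f m‖ * ‖((Real.exp (-Real.pi * sqn (n - m) / 4 ^ k) : ℝ) : ℂ)‖) ?_ ?_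
      · exact ((continuous_ee.comp (by fun_prop)).mul (continuous_const.mul ((continuous_ee.comp (by fun_prop)).mul continuous_const))).aestronglyMeasurable
      · refine Filter.Eventually.of_forall fun t => ?_
        rw [norm_mul, norm_mul, norm_mul, norm_ee, norm_ee, one_mul, one_mul]
  rw [e, enorm_mul]
  gcongr
  · rw [← ofReal_norm]
    refine ENNReal.ofReal_le_ofReal ?_
    rw [Complex.norm_real, Real.norm_of_nonneg (Real.exp_pos _).le, Real.exp_le_exp, div_le_iff₀ (by positivity)]
    have : (N : ℝ) ≤ 4 * 4 ^ k := by exact_mod_cast hN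
    nlinarith [Real.pi_pos]
  · refine (enorm_integral_le_lintegral_enorm _).trans (le_of_eq (lintegral_congr fun t => ?_))
    rw [enorm_mul]
    have : ‖ee (-N * t)‖ₑ = 1 := by rw [← ofReal_norm, norm_ee]; simp
    rw [this, one_mul]

/-- Farey index -/
def IX : Type := {p : ℕ × ℕ // 0 < p.1 ∧ p.2 ≤ p.1 ∧ Nat.Coprime p.2 p.1}

instance instCountIX : Countable IX := by unfold IX; infer_instance

/-- denominators -/
def IX.q (p : IX) : ℕ := p.1.1
/-- numerators -/
def IX.a (p : IX) : ℕ := p.1.2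

lemma IX.hq (p : IX) : 0 < p.q := p.2.1
lemma IX.hc (p : IX) : IsCoprime (p.a : ℤ) (p.q : ℤ) := Nat.isCoprime_iff_coprime.2 p.2.2.2

lemma dirichlet (L : ℕ) (hL : 0 < L) (t : ℝ) (h0 : 0 < t) (h1 : t ≤ 1) :
    ∃ p : IX, p.q ≤ L ∧ |t - p.a / p.q| ≤ 1 / (p.q * L) := by
  obtain ⟨r, hr, hd⟩ := Real.exists_rat_abs_sub_le_and_den_le t hL
  have hden : (0 : ℝ) < r.den := by exact_mod_cast r.den_pos
  have hL' : (1 : ℝ) ≤ L := by exact_mod_cast hL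
  have hrr : (r : ℝ) * r.den = r.num := by exact_mod_cast Rat.mul_den_eq_num r
  have hr2 : |t - r| * r.den < 1 := by
    calc |t - r| * r.den ≤ 1 / ((L + 1) * r.den) * r.den := by gcongr
      _ = 1 / (L + 1) := by field_simp
      _ < 1 := by rw [div_lt_one (by positivity)]; linarith
  have h3 : |t * r.den - r.num| < 1 := by
    rw [← hrr, ← sub_mul, abs_mul, abs_of_pos hden]; exact hr2
  rw [abs_lt] at h3
  have hn0 : 0 ≤ r.num := by
    have : (-1 : ℝ) < r.num := by nlinarith
    have : (-1 : ℤ) < r.num := by exact_mod_cast this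
    omega
  have hn1 : r.num ≤ r.den := by
    have : (r.num : ℝ) < r.den + 1 := by nlinarith
    have : r.num < (r.den : ℤ) + 1 := by exact_mod_cast this
    omega
  refine ⟨⟨(r.den, r.num.natAbs), r.den_pos, by zify; rwa [abs_of_nonneg hn0], r.reduced⟩, hd, ?_⟩
  have e : ((r.num.natAbs : ℕ) : ℝ) / r.den = r := by
    rw [Nat.cast_natAbs, abs_of_nonneg hn0]
    exact_mod_cast Rat.num_div_den r
  change |t - ((r.num.natAbs : ℕ) : ℝ) / (r.den : ℝ)| ≤ 1 / ((r.den : ℝ) * L)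
  rw [e]
  refine hr.trans ?_
  rw [mul_comm (r.den : ℝ)]
  gcongr; linarith

/-- the localised kernels -/
noncomputable def PP (k : ℕ) (p : IX) (u : ℝ) (S : Finset (Fin d → ℤ)) (f : (Fin d → ℤ) → ℂ) (n : Fin d → ℤ) : ℝ≥0∞ :=
  if p.q ≤ 2 ^ k ∧ |u| ≤ 2 * ((2 : ℝ) ^ k / p.q) then ‖Pk k p.a p.q u S f n‖ₑ else 0

lemma arcs (k : ℕ) (S : Finset (Fin d → ℤ)) (f : (Fin d → ℤ) → ℂ) (n : Fin d → ℤ) :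
    ∫⁻ t, ‖Q k t S f n‖ₑ ∂nu ≤ ENNReal.ofReal (1 / (2 * 4 ^ k) * 2 ^ (k * d)) * ∑' p : IX, ∫⁻ u, PP k p u S f n := by
  have hL : (0 : ℝ) < 2 ^ k := by positivity
  set B : IX → Set ℝ := fun p => {t | p.q ≤ 2 ^ k ∧ |t - p.a / p.q| ≤ 1 / (p.q * 2 ^ k)} with hB
  have hBm : ∀ p, MeasurableSet (B p) := by
    intro p
    have hm : Measurable fun t : ℝ => |t - p.a / p.q| := (by fun_prop : Continuous fun t : ℝ => |t - p.a / p.q|).measurable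
    exact (MeasurableSet.const (p.q ≤ 2 ^ k)).inter (measurableSet_le hm measurable_const)
  have h1 : ∫⁻ t, ‖Q k t S f n‖ₑ ∂nu ≤ ∑' p, ∫⁻ t in B p, ‖Q k t S f n‖ₑ := by
    refine le_trans (lintegral_mono_set ?_) (lintegral_iUnion_le _ _)
    intro t ht
    obtain ⟨p, hp1, hp2⟩ := dirichlet (2 ^ k) (by positivity) t ht.1 ht.2
    refine Set.mem_iUnion.2 ⟨p, hp1, ?_⟩
    exact_mod_cast hp2
  refine h1.trans ?_
  rw [← ENNReal.tsum_mul_left]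
  refine ENNReal.tsum_le_tsum fun p => ?_
  have hq := p.hq
  have hq' : (0:ℝ) < p.q := by exact_mod_cast hq
  rw [← lintegral_indicator (hBm p), lint_affine _ (((continuous_Q k S f n).measurable.enorm).indicator (hBm p)) (p.a / p.q) (1 / (2 * 4 ^ k)) (by positivity),
    ENNReal.ofReal_mul (by positivity), mul_assoc]
  gcongr
  rw [← lintegral_const_mul' _ _ ENNReal.ofReal_ne_top]
  refine lintegral_mono fun u => ?_
  have h4 : ((2:ℝ) ^ k) ^ 2 = 4 ^ k := by rw [← pow_mul, mul_comm, pow_mul]; norm_num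
  have hiff : ((p.a / p.q + (1 / (2 * 4 ^ k)) * u : ℝ) ∈ B p) ↔ (p.q ≤ 2 ^ k ∧ |u| ≤ 2 * ((2 : ℝ) ^ k / p.q)) := by
    simp only [hB, Set.mem_ofPred_eq]
    refine and_congr_right fun _ => ?_
    rw [add_sub_cancel_left, abs_mul, abs_of_pos (show (0:ℝ) < 1 / (2 * 4 ^ k) by positivity), ← h4]
    rw [one_div_mul_eq_div, div_le_div_iff₀ (by positivity) (by positivity), mul_div_assoc', le_div_iff₀ hq']
    constructor
    · intro h
      have : (|u| * p.q) * 2 ^ k ≤ (2 * 2 ^ k) * 2 ^ k := by nlinarith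
      exact le_of_mul_le_mul_right this hL
    · intro h
      nlinarith
  simp only [Set.indicator_apply]
  unfold PP
  by_cases h : p.q ≤ 2 ^ k ∧ |u| ≤ 2 * ((2 : ℝ) ^ k / p.q)
  · rw [if_pos (hiff.2 h), if_pos h]
    have := Q_eq k p.a p.q hq u S f n
    push_cast at this
    rw [this, enorm_mul]
    refine mul_le_mul_left (le_of_eq ?_) _
    rw [← ofReal_norm]; simp
  · rw [if_neg (fun h' => h (hiff.1 h'))]; exact zero_le

end AS

namespace AS
open MeasureTheory TH FR

variable {d : ℕ}

/-- sum of weights -/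
noncomputable def Z : ℝ≥0∞ := ∑' p : IX, ENNReal.ofReal ((p.q : ℝ) ^ (-(5 / 2) : ℝ))
/-- integral of weights -/
noncomputable def J : ℝ≥0∞ := ∫⁻ u : ℝ, ENNReal.ofReal ((1 + u ^ 2) ^ (-(3 / 4) : ℝ))

lemma J_lt : J < ∞ := by
  have h := integrable_rpow_neg_one_add_norm_sq (E := ℝ) (μ := volume) (r := 3 / 2) (by simp; norm_num)
  have := h.lintegral_lt_top
  unfold J
  refine lt_of_eq_of_lt ?_ this
  refine lintegral_congr fun u => ?_
  rw [Real.norm_eq_abs, sq_abs]; norm_num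

lemma Z_lt : Z < ∞ := by
  have h1 : Z ≤ ∑' p : ℕ × ℕ, if p.2 ∈ Finset.range (p.1 + 1) then ENNReal.ofReal ((p.1 : ℝ) ^ (-(5 / 2) : ℝ)) else 0 := by
    have hinj : Function.Injective (Subtype.val : IX → ℕ × ℕ) := Subtype.val_injective
    refine le_trans (le_of_eq ?_) (ENNReal.tsum_comp_le_tsum_of_injective hinj _)
    unfold Z
    refine tsum_congr fun p => ?_
    have : p.1.2 ∈ Finset.range (p.1.1 + 1) := Finset.mem_range.2 (Nat.lt_succ_of_le p.2.2.1)
    rw [if_pos this]; rfl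
  refine lt_of_le_of_lt h1 ?_
  rw [ENNReal.tsum_prod']
  have h2 : ∀ q : ℕ, (∑' a : ℕ, if a ∈ Finset.range (q + 1) then ENNReal.ofReal ((q : ℝ) ^ (-(5 / 2) : ℝ)) else 0) ≤
      ENNReal.ofReal (2 * (1 / (q : ℝ) ^ (3 / 2 : ℝ))) := by
    intro q
    rw [tsum_eq_sum (s := Finset.range (q + 1)) (fun b hb => if_neg hb)]
    rw [Finset.sum_congr rfl (fun a ha => if_pos ha), Finset.sum_const, Finset.card_range, nsmul_eq_mul]
    rw [← ENNReal.ofReal_natCast, ← ENNReal.ofReal_mul (by positivity)]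
    refine ENNReal.ofReal_le_ofReal ?_
    rcases Nat.eq_zero_or_pos q with rfl | hq
    · norm_num
    · have hq' : (1:ℝ) ≤ q := by exact_mod_cast hq
      have : (q : ℝ) ^ (-(5 / 2) : ℝ) = (1 / (q : ℝ) ^ (3 / 2 : ℝ)) * (1 / q) := by
        rw [one_div, one_div, ← Real.rpow_neg (by positivity), ← Real.rpow_neg_one (q : ℝ), ← Real.rpow_add (by positivity)]; norm_num
      rw [this]
      have h3 : ((q + 1 : ℕ) : ℝ) * (1 / q) ≤ 2 := by
        push_cast; rw [mul_one_div, div_le_iff₀ (by positivity)]; linarith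
      calc _ = (((q + 1 : ℕ) : ℝ) * (1 / q)) * (1 / (q : ℝ) ^ (3 / 2 : ℝ)) := by ring
        _ ≤ _ := by gcongr
  refine lt_of_le_of_lt (ENNReal.tsum_le_tsum h2) ?_
  have hs : Summable fun q : ℕ => 2 * (1 / (q : ℝ) ^ (3 / 2 : ℝ)) :=
    (Real.summable_one_div_nat_rpow.2 (by norm_num)).mul_left 2
  rw [← ENNReal.ofReal_tsum_of_nonneg (fun _ => by positivity) hs]
  exact ENNReal.ofReal_lt_top

lemma measurable_PP (k : ℕ) (p : IX) (S : Finset (Fin d → ℤ)) (f : (Fin d → ℤ) → ℂ) (n : Fin d → ℤ) :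
    Measurable fun u => PP k p u S f n := by
  unfold PP
  refine Measurable.ite ?_ ?_ measurable_const
  · have hm : Measurable fun t : ℝ => |t| := (by fun_prop : Continuous fun t : ℝ => |t|).measurable
    exact (MeasurableSet.const (p.q ≤ 2 ^ k)).inter (measurableSet_le hm measurable_const)
  · refine Measurable.enorm (Continuous.measurable ?_)
    unfold Pk kap
    fun_prop

/-- the full arc sum -/
noncomputable def GG (k : ℕ) (S : Finset (Fin d → ℤ)) (f : (Fin d → ℤ) → ℂ) (n : Fin d → ℤ) : ℝ≥0∞ :=
  ∑' p : IX, ∫⁻ u, PP k p u S f n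

lemma GG_sq (k : ℕ) (S : Finset (Fin d → ℤ)) (f : (Fin d → ℤ) → ℂ) (n : Fin d → ℤ) :
    GG k S f n ^ 2 ≤ Z * (J * ∑' p : IX, ENNReal.ofReal ((p.q : ℝ) ^ (5 / 2 : ℝ)) *
      ∫⁻ u : ℝ, ENNReal.ofReal ((1 + u ^ 2) ^ (3 / 4 : ℝ)) * PP k p u S f n ^ 2) := by
  have sq : ∀ x r : ℝ, 0 < x → ENNReal.ofReal (x ^ r) ^ 2 = ENNReal.ofReal (x ^ (r * 2)) := by
    intro x r hx
    rw [← ENNReal.ofReal_pow (by positivity), ← Real.rpow_natCast, ← Real.rpow_mul hx.le]; norm_num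
  have inv : ∀ x r : ℝ, 0 < x → ENNReal.ofReal (x ^ (-r)) * ENNReal.ofReal (x ^ r) = 1 := by
    intro x r hx
    rw [← ENNReal.ofReal_mul (by positivity), ← Real.rpow_add hx]; simp
  have h1 : ∀ p : IX, (∫⁻ u, PP k p u S f n) ^ 2 ≤ J * ∫⁻ u : ℝ, ENNReal.ofReal ((1 + u ^ 2) ^ (3 / 4 : ℝ)) * PP k p u S f n ^ 2 := by
    intro p
    have := MX.cs_lint volume (fun u : ℝ => ENNReal.ofReal ((1 + u ^ 2) ^ (-(3 / 8) : ℝ)))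
      (fun u => ENNReal.ofReal ((1 + u ^ 2) ^ (3 / 8 : ℝ)) * PP k p u S f n) (by fun_prop)
      ((Measurable.mul (by fun_prop) (measurable_PP k p S f n)).aemeasurable)
    simp_rw [← mul_assoc, mul_pow] at this
    refine le_trans (le_of_eq ?_) (this.trans (le_of_eq ?_))
    · congr 2; funext u
      rw [inv _ _ (by positivity), one_mul]
    · unfold J
      congr 1
      · refine lintegral_congr fun u => ?_
        rw [sq _ _ (by positivity)]; norm_num
      · refine lintegral_congr fun u => ?_
        rw [sq _ _ (by positivity)]; norm_num
  have h2 := MX.cs_tsum (fun p : IX => ENNReal.ofReal ((p.q : ℝ) ^ (-(5 / 4) : ℝ)))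
    (fun p => ENNReal.ofReal ((p.q : ℝ) ^ (5 / 4 : ℝ)) * ∫⁻ u, PP k p u S f n)
  have hq : ∀ p : IX, (0:ℝ) < p.q := fun p => by exact_mod_cast p.hq
  simp_rw [← mul_assoc, mul_pow] at h2
  have e1 : ∀ p : IX, ENNReal.ofReal ((p.q : ℝ) ^ (-(5 / 4) : ℝ)) * ENNReal.ofReal ((p.q : ℝ) ^ (5 / 4 : ℝ)) = 1 := fun p => inv _ _ (hq p)
  simp_rw [e1, one_mul] at h2
  unfold GG
  refine h2.trans ?_
  have eZ : (∑' p : IX, ENNReal.ofReal ((p.q : ℝ) ^ (-(5 / 4) : ℝ)) ^ 2) = Z := by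
    unfold Z
    refine tsum_congr fun p => ?_
    rw [sq _ _ (hq p)]; norm_num
  rw [eZ]
  gcongr
  rw [← ENNReal.tsum_mul_left]
  refine ENNReal.tsum_le_tsum fun p => ?_
  rw [sq _ _ (hq p), show (5 / 4 * 2 : ℝ) = 5 / 2 by norm_num, mul_left_comm]
  gcongr
  exact h1 p

lemma GG_max (hd : 5 ≤ d) (S : Finset (Fin d → ℤ)) (f : (Fin d → ℤ) → ℂ) :
    ∑' n, (⨆ k, GG k S f n ^ 2) ≤ (Z * J) ^ 2 * ENNReal.ofReal (C4 d) * ∑ n ∈ S, ‖f n‖ₑ ^ 2 := by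
  set X := ∑ n ∈ S, ‖f n‖ₑ ^ 2 with hX
  have hC := (C4_pos d).le
  have hm : ∀ (p : IX) n, Measurable fun u => ⨆ k, PP k p u S f n ^ 2 := fun p n =>
    Measurable.iSup fun k => (measurable_PP k p S f n).pow_const 2
  have h1 : ∀ n, (⨆ k, GG k S f n ^ 2) ≤ Z * (J * ∑' p : IX, ENNReal.ofReal ((p.q : ℝ) ^ (5 / 2 : ℝ)) *
      ∫⁻ u : ℝ, ENNReal.ofReal ((1 + u ^ 2) ^ (3 / 4 : ℝ)) * ⨆ k, PP k p u S f n ^ 2) := by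
    intro n
    refine iSup_le fun k => (GG_sq k S f n).trans ?_
    gcongr with p u
    exact le_iSup (fun k => PP k p u S f n ^ 2) k
  have h2 : ∀ (p : IX) (u : ℝ), ∑' n, (⨆ k, PP k p u S f n ^ 2) ≤
      ENNReal.ofReal (C4 d * (1 + u ^ 2) ^ (-(3 / 2) : ℝ) * ((p.q : ℝ) ^ 5)⁻¹) * X := by
    intro p u
    refine le_trans (le_of_eq ?_) (arc_bound hd p.a p.q p.hq p.hc u S f)
    refine tsum_congr fun n => iSup_congr fun k => ?_
    unfold PP
    split_ifs <;> simp
  have h3 : ∀ p : IX, ∑' n, ENNReal.ofReal ((p.q : ℝ) ^ (5 / 2 : ℝ)) *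
      ∫⁻ u : ℝ, ENNReal.ofReal ((1 + u ^ 2) ^ (3 / 4 : ℝ)) * ⨆ k, PP k p u S f n ^ 2 ≤
      ENNReal.ofReal ((p.q : ℝ) ^ (-(5 / 2) : ℝ)) * (J * ENNReal.ofReal (C4 d) * X) := by
    intro p
    have hq : (0:ℝ) < p.q := by exact_mod_cast p.hq
    have hm2 : ∀ n, AEMeasurable (fun u : ℝ => ENNReal.ofReal ((1 + u ^ 2) ^ (3 / 4 : ℝ)) * ⨆ k, PP k p u S f n ^ 2) volume :=
      fun n => (Measurable.mul (by fun_prop) (hm p n)).aemeasurable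
    rw [ENNReal.tsum_mul_left, ← lintegral_tsum hm2]
    simp_rw [ENNReal.tsum_mul_left]
    have e5 : ENNReal.ofReal ((p.q : ℝ) ^ (5 / 2 : ℝ)) * ENNReal.ofReal (((p.q : ℝ) ^ 5)⁻¹) = ENNReal.ofReal ((p.q : ℝ) ^ (-(5 / 2) : ℝ)) := by
      rw [← ENNReal.ofReal_mul (by positivity), ← Real.rpow_natCast, ← Real.rpow_neg hq.le, ← Real.rpow_add hq]; norm_num
    have e6 : ∀ u : ℝ, ENNReal.ofReal ((1 + u ^ 2) ^ (3 / 4 : ℝ)) * ENNReal.ofReal ((1 + u ^ 2) ^ (-(3 / 2) : ℝ)) = ENNReal.ofReal ((1 + u ^ 2) ^ (-(3 / 4) : ℝ)) := by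
      intro u
      rw [← ENNReal.ofReal_mul (by positivity), ← Real.rpow_add (by positivity)]; norm_num
    calc _ ≤ ENNReal.ofReal ((p.q : ℝ) ^ (5 / 2 : ℝ)) * ∫⁻ u : ℝ, ENNReal.ofReal ((1 + u ^ 2) ^ (3 / 4 : ℝ)) *
          (ENNReal.ofReal (C4 d * (1 + u ^ 2) ^ (-(3 / 2) : ℝ) * ((p.q : ℝ) ^ 5)⁻¹) * X) := by
          gcongr with u
          exact h2 p u
      _ = ENNReal.ofReal ((p.q : ℝ) ^ (5 / 2 : ℝ)) * ∫⁻ u : ℝ, ENNReal.ofReal ((1 + u ^ 2) ^ (-(3 / 4) : ℝ)) *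
          (ENNReal.ofReal (C4 d) * ENNReal.ofReal (((p.q : ℝ) ^ 5)⁻¹) * X) := by
          congr 1
          refine lintegral_congr fun u => ?_
          rw [← e6, ENNReal.ofReal_mul (by positivity), ENNReal.ofReal_mul hC]
          ring
      _ = ENNReal.ofReal ((p.q : ℝ) ^ (5 / 2 : ℝ)) * (J * (ENNReal.ofReal (C4 d) * ENNReal.ofReal (((p.q : ℝ) ^ 5)⁻¹) * X)) := by
          rw [lintegral_mul_const _ (by fun_prop)]; rfl
      _ = (ENNReal.ofReal ((p.q : ℝ) ^ (5 / 2 : ℝ)) * ENNReal.ofReal (((p.q : ℝ) ^ 5)⁻¹)) * (J * ENNReal.ofReal (C4 d) * X) := by ring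
      _ = _ := by rw [e5]
  calc _ ≤ _ := ENNReal.tsum_le_tsum h1
    _ = Z * (J * ∑' p : IX, ∑' n, ENNReal.ofReal ((p.q : ℝ) ^ (5 / 2 : ℝ)) *
      ∫⁻ u : ℝ, ENNReal.ofReal ((1 + u ^ 2) ^ (3 / 4 : ℝ)) * ⨆ k, PP k p u S f n ^ 2) := by
        rw [ENNReal.tsum_mul_left, ENNReal.tsum_mul_left, ENNReal.tsum_comm]
    _ ≤ Z * (J * ∑' p : IX, ENNReal.ofReal ((p.q : ℝ) ^ (-(5 / 2) : ℝ)) * (J * ENNReal.ofReal (C4 d) * X)) := by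
        gcongr with p
        exact h3 p
    _ = _ := by
        rw [ENNReal.tsum_mul_right]
        change Z * (J * (Z * (J * ENNReal.ofReal (C4 d) * X))) = _
        ring

end AS

namespace AS
open MeasureTheory TH FR
variable {d : ℕ}

lemma sph_eq (lam : ℝ) (N : ℕ) (h : (N : ℝ) = lam ^ 2) : sph d lam = LB.rep d N := by
  ext m
  simp only [sph, LB.rep, Set.mem_ofPred_eq, nsq, ← h]
  exact_mod_cast Iff.rfl

lemma avg_eq (lam : ℝ) (N : ℕ) (h : (N : ℝ) = lam ^ 2) (f : (Fin d → ℤ) → ℝ) (n : Fin d → ℤ)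
    (S : Finset (Fin d → ℤ)) (hS : ∀ m ∈ LB.rep d N, n - m ∈ S) :
    ((Avg lam f n : ℝ) : ℂ) = (((LB.rep d N).ncard : ℝ)⁻¹ : ℝ) * Sg N S (fun m => (f m : ℂ)) n := by
  have h1 : ∑' m : sph d lam, f (n - (m : Fin d → ℤ)) = ∑ m ∈ S, if sqn (n - m) = N then f m else 0 := by
    rw [sph_eq lam N h]
    rw [tsum_subtype (LB.rep d N) (fun m => f (n - m)), ← (Equiv.subLeft n).tsum_eq]
    rw [tsum_eq_sum (s := S)]
    · refine Finset.sum_congr rfl fun m _ => ?_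
      simp only [Equiv.subLeft_apply]
      by_cases h2 : sqn (n - m) = N
      · rw [if_pos h2, Set.indicator_of_mem (show n - m ∈ LB.rep d N from h2), sub_sub_cancel]
      · rw [if_neg h2, Set.indicator_of_notMem (show n - m ∉ LB.rep d N from h2)]
    · intro m hm
      simp only [Equiv.subLeft_apply]
      refine Set.indicator_of_notMem (fun h' => hm ?_) _
      have := hS _ h'
      rwa [sub_sub_cancel] at this
  unfold Avg Nlam
  rw [h1, sph_eq lam N h, Nat.card_coe_set_eq]
  unfold Sg
  push_cast
  congr 1
  refine Finset.sum_congr rfl fun m _ => ?_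
  split_ifs <;> simp

lemma avg_le (hd : 5 ≤ d) (c : ℝ) (hc : 0 < c) (hl : ∀ n L : ℕ, L ^ 2 ≤ n → c * (L : ℝ) ^ (d - 2) ≤ (LB.rep d n).ncard)
    (lam : ℝ) (N : ℕ) (hN : 0 < N) (h : (N : ℝ) = lam ^ 2) (f : (Fin d → ℤ) → ℝ) (n : Fin d → ℤ)
    (S : Finset (Fin d → ℤ)) (hS : ∀ m ∈ LB.rep d N, n - m ∈ S) :
    ∃ k, ‖Avg lam f n‖ₑ ≤ ENNReal.ofReal (Real.exp (4 * Real.pi) / (2 * c)) * GG k S (fun m => (f m : ℂ)) n := by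
  set k := Nat.log 4 N with hk
  have hk1 : 4 ^ k ≤ N := Nat.pow_log_le_self 4 hN.ne'
  have hk2 : N ≤ 4 * 4 ^ k := by
    have := Nat.lt_pow_succ_log_self (b := 4) (by norm_num) N
    rw [pow_succ, mul_comm] at this
    exact this.le
  refine ⟨k, ?_⟩
  have e0 : ‖Avg lam f n‖ₑ = ‖((Avg lam f n : ℝ) : ℂ)‖ₑ := by
    rw [← ofReal_norm, ← ofReal_norm, Complex.norm_real]
  rw [e0, avg_eq lam N h f n S hS, enorm_mul]
  have hcard : c * (2 ^ k : ℝ) ^ (d - 2) ≤ (LB.rep d N).ncard := by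
    have := hl N (2 ^ k) (by rw [← pow_mul, mul_comm, pow_mul]; exact hk1)
    exact_mod_cast this
  have h2 : ‖((((LB.rep d N).ncard : ℝ)⁻¹ : ℝ) : ℂ)‖ₑ ≤ ENNReal.ofReal ((c * (2 ^ k : ℝ) ^ (d - 2))⁻¹) := by
    rw [← ofReal_norm, Complex.norm_real, Real.norm_of_nonneg (by positivity)]
    exact ENNReal.ofReal_le_ofReal (inv_anti₀ (by positivity) hcard)
  have h3 := (Sg_le k N hk2 S (fun m => (f m : ℂ)) n).trans (mul_le_mul_right (arcs k S (fun m => (f m : ℂ)) n) _)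
  refine (mul_le_mul' h2 h3).trans (le_of_eq ?_)
  rw [← mul_assoc, ← mul_assoc, ← ENNReal.ofReal_mul (by positivity), ← ENNReal.ofReal_mul (by positivity)]
  unfold GG
  congr 2
  have h4 : ((2:ℝ) ^ k) ^ 2 = 4 ^ k := by rw [← pow_mul, mul_comm, pow_mul]; norm_num
  have h5 : (2 : ℝ) ^ (k * d) = ((2:ℝ) ^ k) ^ (d - 2) * 4 ^ k := by
    rw [← h4, ← pow_add, pow_mul]; congr 1; omega
  rw [h5]
  field_simp

lemma fin_bound (hd : 5 ≤ d) (c : ℝ) (hc : 0 < c) (hl : ∀ n L : ℕ, L ^ 2 ≤ n → c * (L : ℝ) ^ (d - 2) ≤ (LB.rep d n).ncard)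
    (f : (Fin d → ℤ) → ℝ) (T : Finset (Fin d → ℤ)) (K : ℕ) :
    ∑ n ∈ T, (⨆ (lam : ℝ) (_ : 0 < lam ∧ ∃ N : ℕ, N < K ∧ (N : ℝ) = lam ^ 2), ‖Avg lam f n‖ₑ) ^ 2 ≤
      ENNReal.ofReal (Real.exp (4 * Real.pi) / (2 * c)) ^ 2 * ((Z * J) ^ 2 * ENNReal.ofReal (C4 d)) * ∑' n, ‖f n‖ₑ ^ 2 := by
  classical
  set A := ENNReal.ofReal (Real.exp (4 * Real.pi) / (2 * c)) with hA
  set S : Finset (Fin d → ℤ) := T.biUnion fun n => (Finset.range K).biUnion fun N =>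
    (LB.rep_finite d N).toFinset.image fun m => n - m with hS
  set F : (Fin d → ℤ) → ℂ := fun m => (f m : ℂ) with hF
  have h1 : ∀ n ∈ T, (⨆ (lam : ℝ) (_ : 0 < lam ∧ ∃ N : ℕ, N < K ∧ (N : ℝ) = lam ^ 2), ‖Avg lam f n‖ₑ) ^ 2 ≤
      A ^ 2 * ⨆ k, GG k S F n ^ 2 := by
    intro n hn
    have h2 : (⨆ (lam : ℝ) (_ : 0 < lam ∧ ∃ N : ℕ, N < K ∧ (N : ℝ) = lam ^ 2), ‖Avg lam f n‖ₑ) ≤ A * ⨆ k, GG k S F n := by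
      refine iSup₂_le fun lam hlam => ?_
      obtain ⟨h0, N, hNK, hN⟩ := hlam
      have hN0 : 0 < N := by
        have : (0:ℝ) < N := by rw [hN]; positivity
        exact_mod_cast this
      obtain ⟨k, hk⟩ := avg_le hd c hc hl lam N hN0 hN f n S (by
        intro m hm
        rw [hS, Finset.mem_biUnion]
        refine ⟨n, hn, Finset.mem_biUnion.2 ⟨N, Finset.mem_range.2 hNK, Finset.mem_image.2 ⟨m, ?_, rfl⟩⟩⟩
        simpa using hm)
      refine hk.trans ?_
      gcongr
      exact le_iSup (fun k => GG k S F n) k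
    calc _ ≤ (A * ⨆ k, GG k S F n) ^ 2 := by gcongr
      _ = _ := by rw [mul_pow, ENNReal.iSup_pow]
  calc _ ≤ ∑ n ∈ T, A ^ 2 * ⨆ k, GG k S F n ^ 2 := Finset.sum_le_sum h1
    _ ≤ A ^ 2 * ∑' n, ⨆ k, GG k S F n ^ 2 := by
        rw [← Finset.mul_sum]; gcongr; exact ENNReal.sum_le_tsum _
    _ ≤ A ^ 2 * ((Z * J) ^ 2 * ENNReal.ofReal (C4 d) * ∑ n ∈ S, ‖F n‖ₑ ^ 2) := by
        gcongr; exact GG_max hd S F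
    _ ≤ A ^ 2 * ((Z * J) ^ 2 * ENNReal.ofReal (C4 d) * ∑' n, ‖f n‖ₑ ^ 2) := by
        gcongr
        refine le_trans (le_of_eq (Finset.sum_congr rfl fun n _ => ?_)) (ENNReal.sum_le_tsum S)
        rw [hF, ← ofReal_norm, ← ofReal_norm, Complex.norm_real]
    _ = _ := by ring

lemma full_bound (hd : 5 ≤ d) (c : ℝ) (hc : 0 < c) (hl : ∀ n L : ℕ, L ^ 2 ≤ n → c * (L : ℝ) ^ (d - 2) ≤ (LB.rep d n).ncard)
    (f : (Fin d → ℤ) → ℝ) :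
    ∑' n, (⨆ (lam : ℝ) (_ : 0 < lam ∧ ∃ N : ℕ, (N : ℝ) = lam ^ 2), ‖Avg lam f n‖ₑ) ^ 2 ≤
      ENNReal.ofReal (Real.exp (4 * Real.pi) / (2 * c)) ^ 2 * ((Z * J) ^ 2 * ENNReal.ofReal (C4 d)) * ∑' n, ‖f n‖ₑ ^ 2 := by
  rw [ENNReal.tsum_eq_iSup_sum]
  refine iSup_le fun T => ?_
  set b : ℕ → (Fin d → ℤ) → ℝ≥0∞ := fun K n => ⨆ (lam : ℝ) (_ : 0 < lam ∧ ∃ N : ℕ, N < K ∧ (N : ℝ) = lam ^ 2), ‖Avg lam f n‖ₑ with hb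
  have hmono : ∀ n, Monotone fun K => b K n ^ 2 := by
    intro n K K' hK
    have : b K n ≤ b K' n := by
      refine iSup₂_le fun lam hlam => ?_
      obtain ⟨h0, N, hNK, hN⟩ := hlam
      exact le_iSup₂_of_le lam ⟨h0, N, hNK.trans_le hK, hN⟩ le_rfl
    exact pow_le_pow_left' this 2
  have h1 : ∀ n, (⨆ (lam : ℝ) (_ : 0 < lam ∧ ∃ N : ℕ, (N : ℝ) = lam ^ 2), ‖Avg lam f n‖ₑ) ≤ ⨆ K, b K n := by
    intro n
    refine iSup₂_le fun lam hlam => ?_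
    obtain ⟨h0, N, hN⟩ := hlam
    refine le_iSup_of_le (N + 1) ?_
    exact le_iSup₂_of_le lam ⟨h0, N, Nat.lt_succ_self N, hN⟩ le_rfl
  calc _ ≤ ∑ n ∈ T, ⨆ K, b K n ^ 2 := by
        refine Finset.sum_le_sum fun n _ => ?_
        rw [← ENNReal.iSup_pow]
        exact pow_le_pow_left' (h1 n) 2
    _ = ⨆ K, ∑ n ∈ T, b K n ^ 2 := ENNReal.finsetSum_iSup_of_monotone fun n => hmono n
    _ ≤ _ := iSup_le fun K => fin_bound hd c hc hl f T K

end AS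

/-- **ℓ² boundedness of the discrete spherical maximal function** (Theorem 1):
for `d ≥ 5` there is a constant `C_d > 0` such that
`‖sup_{λ, λ²∈ℕ} |A_λ f|‖_{ℓ²} ≤ C_d ‖f‖_{ℓ²}` for all `f ∈ ℓ²(ℤ^d)`. -/
theorem discrete_spherical_maximal_l2 (d : ℕ) (hd : 5 ≤ d) :
    ∃ C : ℝ, 0 < C ∧ ∀ f : (Fin d → ℤ) → ℝ,
      (∑' n : Fin d → ℤ,
          (⨆ (lam : ℝ) (_ : 0 < lam ∧ ∃ N : ℕ, (N : ℝ) = lam ^ 2),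
            (‖Avg lam f n‖₊ : ℝ≥0∞)) ^ 2) ^ ((1 : ℝ) / 2)
        ≤ ENNReal.ofReal C * l2norm f := by
  obtain ⟨c, hc, hl⟩ := LB.rep_lower d hd
  set D : ℝ≥0∞ := ENNReal.ofReal (Real.exp (4 * Real.pi) / (2 * c)) ^ 2 * ((AS.Z * AS.J) ^ 2 * ENNReal.ofReal (FR.C4 d)) with hD
  have hDt : D ^ ((1 : ℝ) / 2) ≠ ∞ := by
    refine ENNReal.rpow_ne_top_of_nonneg (by norm_num) ?_
    exact ENNReal.mul_ne_top (ENNReal.pow_ne_top ENNReal.ofReal_ne_top)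
      (ENNReal.mul_ne_top (ENNReal.pow_ne_top (ENNReal.mul_ne_top AS.Z_lt.ne AS.J_lt.ne)) ENNReal.ofReal_ne_top)
  refine ⟨(D ^ ((1 : ℝ) / 2)).toReal + 1, by positivity, fun f => ?_⟩
  have h := AS.full_bound hd c hc hl f
  have h2 := ENNReal.rpow_le_rpow h (show (0:ℝ) ≤ 1 / 2 by norm_num)
  rw [ENNReal.mul_rpow_of_nonneg _ _ (by norm_num)] at h2
  refine le_trans h2 ?_
  refine mul_le_mul' ?_ le_rfl
  rw [← hD]
  calc D ^ ((1 : ℝ) / 2) = ENNReal.ofReal (D ^ ((1 : ℝ) / 2)).toReal := (ENNReal.ofReal_toReal hDt).symm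
    _ ≤ _ := ENNReal.ofReal_le_ofReal (by linarith)
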